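/- arXiv:1502.06483 — 9 statements merged into one kernel-verified Lean document; each statement's English description precedes it below -/
import Mathlib

section
/- Let n be a positive integer and let λ and μ be partitions of n such that λ dominates μ. Then there exists an index i with 1 ≤ i ≤ length(λ) such that λ_i ≥ μ_i ≥ λ_{i+1} (where λ_{i+1} is taken to be 0 when i = length(λ), and parts beyond the length of a partition are taken to be 0). -/
/-- `l` (viewed as the sequence of parts, indexed from `0`) together with length `k`
is a partition of `n`: parts are positive up to `k`, zero afterwards, nonincreasing,
and sum to `n`. -/
def IsPartitionFun (n : ℕ) (l : ℕ → ℕ) (k : ℕ) : Prop :=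
  (∀ i, i < k → 0 < l i) ∧ (∀ i, k ≤ i → l i = 0) ∧
  (∀ i j, i ≤ j → l j ≤ l i) ∧ (∑ i ∈ Finset.range k, l i = n)

/-! The last index `i < length λ` with `i = 0` or `μ_{i-1} < λ_i` interlaces. By maximality
`λ_{i+1} ≤ μ_i`, trivially so when `λ_{i+1} = 0`. Moreover `μ_i ≤ λ_i`: for `i = 0` this is
dominance of the first part, and otherwise `μ_i ≤ μ_{i-1} < λ_i`. -/

namespace IsPartitionFun

variable {n k : ℕ} {l : ℕ → ℕ}

theorem antitone (h : IsPartitionFun n l k) : Antitone l :=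
  fun i j hij => h.2.2.1 i j hij

theorem apply_length (h : IsPartitionFun n l k) : l k = 0 :=
  h.2.1 k le_rfl

theorem length_ne_zero (h : IsPartitionFun n l k) (hn : n ≠ 0) : k ≠ 0 := by
  rintro rfl
  exact hn h.2.2.2.symm

end IsPartitionFun

theorem exists_interlacing_index_general {α : Type*} [LinearOrder α] {lam mu : ℕ → α}
    (hmu : Antitone mu) (hzero : mu 0 ≤ lam 0) {k : ℕ} (hk : lam (k + 1) ≤ mu k) :
    ∃ i < k + 1, mu i ≤ lam i ∧ lam (i + 1) ≤ mu i := by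
  induction k with
  | zero => exact ⟨0, Nat.zero_lt_one, hzero, hk⟩
  | succ k ih =>
    rcases le_or_gt (lam (k + 1)) (mu k) with hle | hlt
    · obtain ⟨i, hi, hinterlace⟩ := ih hle
      exact ⟨i, Nat.lt_succ_of_lt hi, hinterlace⟩
    · have hmu_le : mu (k + 1) ≤ lam (k + 1) := (hmu k.le_succ).trans hlt.le
      exact ⟨k + 1, Nat.lt_succ_self _, hmu_le, hk⟩

/-- if `λ` dominates `μ` then there is an index `i` (here `0`-indexed,
`i < length λ`) with `λ_i ≥ μ_i ≥ λ_{i+1}`. -/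
theorem exists_interlacing_index (n : ℕ) (hn : 0 < n) (lam mu : ℕ → ℕ) (kl km : ℕ)
    (hlam : IsPartitionFun n lam kl) (hmu : IsPartitionFun n mu km)
    (hdom : ∀ j, ∑ i ∈ Finset.range j, mu i ≤ ∑ i ∈ Finset.range j, lam i) :
    ∃ i, i < kl ∧ mu i ≤ lam i ∧ lam (i + 1) ≤ mu i := by
  obtain ⟨k, rfl⟩ := Nat.exists_eq_add_one_of_ne_zero (hlam.length_ne_zero hn.ne')
  exact exists_interlacing_index_general hmu.antitone (by simpa using hdom 1)
    (hlam.apply_length.trans_le (Nat.zero_le _))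
end

section
/- Let n be a positive integer and let λ and μ be partitions of n. Then λ dominates μ if and only if there exists a diagonal matrix S ∈ M_n(ℂ) with integer entries such that S·J_λ − J_λ·S = −2·J_λ and the closure, in the standard (Euclidean) topology of M_n(ℂ), of the set {g·J_λ·g⁻¹ : g ∈ GL_n(ℂ), g·S = S·g} contains a matrix of the form g·J_μ·g⁻¹ for some g ∈ GL_n(ℂ). -/
open Classical in
/-- The block-diagonal nilpotent matrix with lower-triangular Jordan blocks of sizes
`l 0, l 1, ...`: it has a `1` at position `(i, i-1)` exactly when `i` is not a partial
sum of the parts, and `0` elsewhere. -/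
noncomputable def jordanOfPartition (n : ℕ) (l : ℕ → ℕ) : Matrix (Fin n) (Fin n) ℂ :=
  Matrix.of fun i j =>
    if (i : ℕ) = (j : ℕ) + 1 ∧ ∀ m : ℕ, (∑ t ∈ Finset.range m, l t) ≠ (i : ℕ) then 1 else 0

/-!
Ranks of powers are lower semicontinuous and invariant under conjugation, and the rank of `J_λ ^ m`
is the sum of the truncated differences `λ_i - m`; comparing these ranks gives dominance.

Conversely, draw Jordan blocks as rows of boxes, one per weight in an interval, the matrix moving
each box to the next weight. If one row contains another, exchanging their ends is a degeneration
preserving weights: a unipotent conjugation links the inner row to the tail of the outer one, and a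
one-parameter subgroup then contracts the link between the two halves of the outer row. Let `d_i`
be the excess of the first `i` parts of `λ` over those of `μ`, and start row `i` at `d_i - μ_i`.
With length `λ_i` it ends at `d_{i+1}`, with length `μ_i` at `d_i`, so `J_λ` and `J_μ` differ by a
cyclic rotation of the ends, which nested exchanges undo, the largest misplaced end first.
-/

section OrbitClosure

variable {R : Type*} [TopologicalSpace R]

/-- The closure of the orbit of `N` under conjugation by the units commuting with `S`. For a matrix
ring this is the degeneration relation of the theorem: `M ∈ orbitClosure S N` says that `N`
degenerates to `M` under the centralizer of `S`. -/
def orbitClosure [Monoid R] (S N : R) : Set R :=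
  closure {A | ∃ h : Rˣ, (h : R) * S = S * h ∧ A = h * N * ↑h⁻¹}

theorem mem_orbitClosure_of_intertwine [Monoid R] {S N M : R} (h : Rˣ) (hS : (h : R) * S = S * h)
    (hNM : h * N = M * h) : M ∈ orbitClosure S N :=
  subset_closure ⟨h, hS, h.eq_mul_inv_iff_mul_eq.mpr hNM.symm⟩

theorem self_mem_orbitClosure [Monoid R] (S N : R) : N ∈ orbitClosure S N :=
  mem_orbitClosure_of_intertwine 1 (by simp) (by simp)

theorem orbitClosure_trans [Monoid R] [ContinuousMul R] {S N M P : R} (hM : M ∈ orbitClosure S N)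
    (hP : P ∈ orbitClosure S M) : P ∈ orbitClosure S N := by
  refine closure_minimal ?_ isClosed_closure hP
  rintro _ ⟨h, hS, rfl⟩
  have hcont : Continuous fun A : R => h * A * ↑h⁻¹ := by fun_prop
  refine map_mem_closure (f := fun A : R => h * A * ↑h⁻¹) hcont hM ?_
  rintro _ ⟨k, hk, rfl⟩
  refine ⟨h * k, ?_, by simp only [mul_inv_rev, Units.val_mul, mul_assoc]⟩
  rw [Units.val_mul, mul_assoc, hk, ← mul_assoc, hS, mul_assoc]

theorem add_mem_orbitClosure_of_sq_eq_zero [Ring R] {S N L Φ : R} (hS : Commute Φ S)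
    (hΦ : Φ * Φ = 0) (hN : N * Φ - Φ * N = L) (hL : L * Φ = 0) : N + L ∈ orbitClosure S N := by
  let u : Rˣ := ⟨1 - Φ, 1 + Φ, by noncomm_ring [hΦ], by noncomm_ring [hΦ]⟩
  refine mem_orbitClosure_of_intertwine u ((Commute.one_left S).sub_left hS) ?_
  change (1 - Φ) * N = (N + L) * (1 - Φ)
  rw [mul_sub, mul_one, add_mul, hL, add_zero, ← hN]
  noncomm_ring

theorem mem_orbitClosure_add_of_isIdempotentElem (𝕜 : Type*) [NontriviallyNormedField 𝕜] [Ring R]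
    [Algebra 𝕜 R] [ContinuousAdd R] [ContinuousSMul 𝕜 R] {S N L P : R}
    (hP : IsIdempotentElem P) (hS : Commute P S) (hN : Commute P N) (hPL : P * L = L)
    (hLP : L * P = 0) : N ∈ orbitClosure S (N + L) := by
  -- conjugation by `1 + (t - 1) P` multiplies `L` by `t` and fixes `N`; then let `t → 0`
  have hinv : ∀ s t : 𝕜, s * t = 1 → (1 + (s - 1) • P) * (1 + (t - 1) • P) = 1 := by
    intro s t hst
    have hcoef : (t - 1) + (s - 1) + (s - 1) * (t - 1) = 0 := by linear_combination hst
    calc (1 + (s - 1) • P) * (1 + (t - 1) • P)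
        = 1 + ((t - 1) + (s - 1) + (s - 1) * (t - 1)) • P := by
          simp only [add_mul, mul_add, one_mul, mul_one, smul_mul_smul_comm, hP.eq, add_smul]
          abel
      _ = 1 := by rw [hcoef, zero_smul, add_zero]
  have horbit : ∀ t : 𝕜, t ≠ 0 → N + t • L ∈ orbitClosure S (N + L) := by
    intro t ht
    let u : Rˣ := ⟨1 + (t - 1) • P, 1 + (t⁻¹ - 1) • P, hinv _ _ (mul_inv_cancel₀ ht),
      hinv _ _ (inv_mul_cancel₀ ht)⟩
    refine mem_orbitClosure_of_intertwine u
      ((Commute.one_left S).add_left (hS.smul_left (t - 1))) ?_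
    change (1 + (t - 1) • P) * (N + L) = (N + t • L) * (1 + (t - 1) • P)
    simp only [add_mul, mul_add, one_mul, mul_one, smul_mul_assoc, mul_smul_comm, hPL, hLP, hN.eq,
      smul_zero, add_zero]
    simp only [sub_smul, one_smul]
    abel
  have hcont : Continuous fun t : 𝕜 => N + t • L := by fun_prop
  have hzero : (0 : 𝕜) ∈ closure {0}ᶜ := dense_compl_singleton 0 0
  have hlim := map_mem_closure hcont hzero horbit
  rwa [orbitClosure, closure_closure, zero_smul, add_zero] at hlim

end OrbitClosure

section RelMatrix

variable {ι : Type*} (R : Type*)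

open Classical in
/-- The zero-one matrix of a relation: its `(i, j)` entry is `1` exactly when `r i j`. -/
noncomputable def relMatrix [Zero R] [One R] (r : ι → ι → Prop) : Matrix ι ι R :=
  Matrix.of fun i j => if r i j then 1 else 0

theorem relMatrix_transpose [Zero R] [One R] (r : ι → ι → Prop) :
    (relMatrix R r).transpose = relMatrix R (flip r) :=
  rfl

theorem relMatrix_eq_diagonal [Zero R] [One R] [DecidableEq ι] (p : ι → Prop) [DecidablePred p] :
    relMatrix R (fun i j => i = j ∧ p i) = Matrix.diagonal fun i => if p i then 1 else 0 := by
  ext i j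
  by_cases hij : i = j <;> simp [relMatrix, hij]

variable {R}

theorem relMatrix_add_eq_relMatrix [AddZeroClass R] [One R] {r s t : ι → ι → Prop}
    (hrs : ∀ i j, r i j → ¬s i j) (ht : ∀ i j, r i j ∨ s i j ↔ t i j) :
    relMatrix R r + relMatrix R s = relMatrix R t := by
  ext i j
  have := hrs i j
  by_cases hr : r i j <;> by_cases hs : s i j <;> simp_all [relMatrix, ← ht]

variable [Fintype ι]

theorem relMatrix_mul_eq_relMatrix [NonAssocSemiring R] {r s t : ι → ι → Prop}
    (huniq : ∀ i j m m', r i m → s m j → r i m' → s m' j → m = m')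
    (ht : ∀ i j, (∃ m, r i m ∧ s m j) ↔ t i j) :
    relMatrix R r * relMatrix R s = relMatrix R t := by
  classical
  ext i j
  simp only [relMatrix, Matrix.mul_apply, Matrix.of_apply, ← ite_and, mul_ite, mul_one, mul_zero,
    ← ht]
  split_ifs with hm
  · obtain ⟨m, hr, hs⟩ := hm
    rw [Finset.sum_eq_single_of_mem m (Finset.mem_univ m), if_pos ⟨hs, hr⟩]
    exact fun m' _ hne => if_neg fun hm' => hne (huniq i j m' m hm'.2 hm'.1 hr hs)
  · exact Finset.sum_eq_zero fun m _ => if_neg fun hm' => hm ⟨m, hm'.2, hm'.1⟩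

theorem relMatrix_mul_eq_zero [NonAssocSemiring R] {r s : ι → ι → Prop}
    (h : ∀ i m j, r i m → ¬s m j) : relMatrix R r * relMatrix R s = 0 := by
  rw [relMatrix_mul_eq_relMatrix (t := fun _ _ => False)
    (fun i j m _ hr hs => absurd hs (h i m j hr))
    fun i j => ⟨fun ⟨m, hr, hs⟩ => h i m j hr hs, False.elim⟩]
  ext i j
  simp [relMatrix]

theorem commute_relMatrix_diagonal [DecidableEq ι] [NonAssocSemiring R] {r : ι → ι → Prop}
    {d : ι → R} (h : ∀ i j, r i j → d i = d j) : Commute (relMatrix R r) (Matrix.diagonal d) := by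
  ext i j
  by_cases hr : r i j
  · simp [relMatrix, hr, h i j hr]
  · simp [relMatrix, hr]

end RelMatrix

section RowDiagram

variable {ι κ : Type*}

/-- Boxes `i : ι`, each lying in row `row i` at weight `wt i`, form a row diagram when row `k` has
exactly one box at each weight in the half-open interval from `a k` to `e k` and no other box. -/
structure IsRowDiagram (row : ι → κ) (wt : ι → ℤ) (a e : κ → ℤ) : Prop where
  eq_of_row_eq_of_wt_eq : ∀ i j, row i = row j → wt i = wt j → i = j
  exists_iff : ∀ k p, (∃ i, row i = k ∧ wt i = p) ↔ a k ≤ p ∧ p < e k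

/-- The nilpotent matrix sending each box to the box of the next weight in the same row; for a row
diagram its Jordan blocks are the rows. -/
noncomputable def shiftMatrix (R : Type*) [Zero R] [One R] (row : ι → κ) (wt : ι → ℤ) :
    Matrix ι ι R :=
  relMatrix R fun i j => row i = row j ∧ wt i = wt j + 1

/-- The diagonal matrix with entries `-2 * wt i`: the matrix `S` of the theorem. -/
def gradingMatrix (R : Type*) [Ring R] [DecidableEq ι] (wt : ι → ℤ) : Matrix ι ι R :=
  Matrix.diagonal fun i => ((-2 * wt i : ℤ) : R)

theorem IsRowDiagram.wt_mem {row : ι → κ} {wt : ι → ℤ} {a e : κ → ℤ}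
    (h : IsRowDiagram row wt a e) (i : ι) : a (row i) ≤ wt i ∧ wt i < e (row i) :=
  (h.exists_iff _ _).mp ⟨i, rfl, rfl⟩

theorem gradingMatrix_mul_shiftMatrix_sub (R : Type*) [Ring R] [Fintype ι] [DecidableEq ι]
    (row : ι → κ) (wt : ι → ℤ) :
    gradingMatrix R wt * shiftMatrix R row wt - shiftMatrix R row wt * gradingMatrix R wt
      = (-2 : R) • shiftMatrix R row wt := by
  ext i j
  by_cases h : row i = row j ∧ wt i = wt j + 1
  · simp only [gradingMatrix, shiftMatrix, relMatrix, Matrix.sub_apply, Matrix.diagonal_mul,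
      Matrix.mul_diagonal, Matrix.smul_apply, Matrix.of_apply, if_pos h, h.2,
      smul_eq_mul, mul_one, one_mul]
    push_cast
    noncomm_ring
  · simp [gradingMatrix, shiftMatrix, relMatrix, h]

theorem commute_relMatrix_gradingMatrix {R : Type*} [Ring R] [Fintype ι] [DecidableEq ι]
    {r : ι → ι → Prop} {wt : ι → ℤ} (h : ∀ i j, r i j → wt i = wt j) :
    Commute (relMatrix R r) (gradingMatrix R wt) :=
  commute_relMatrix_diagonal fun i j hr => by rw [h i j hr]

/-- The boxes of row `k'` paired with the boxes of row `k` of the same weight. -/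
def MatchedRows (row : ι → κ) (wt : ι → ℤ) (k k' : κ) (i j : ι) : Prop :=
  row i = k ∧ row j = k' ∧ wt i = wt j

/-- The last box of row `k'` below weight `c` paired with the first box of row `k` from weight `c`
on: the shift from row `k'` to row `k` at the cut `c`. -/
def LinkedRows (row : ι → κ) (wt : ι → ℤ) (k k' : κ) (c : ℤ) (i j : ι) : Prop :=
  row i = k ∧ row j = k' ∧ wt i = c ∧ wt i = wt j + 1

theorem shiftMatrix_mul_matchedRows_sub {R : Type*} [Ring R] [Fintype ι] {row : ι → κ} {wt : ι → ℤ}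
    {a e : κ → ℤ} {k k' : κ} (h : IsRowDiagram row wt a e) (hak : a k ≤ a k') (hek : e k' ≤ e k) :
    shiftMatrix R row wt * relMatrix R (MatchedRows row wt k k')
      - relMatrix R (MatchedRows row wt k k') * shiftMatrix R row wt
      = relMatrix R (LinkedRows row wt k k' (e k')) := by
  have hleft : shiftMatrix R row wt * relMatrix R (MatchedRows row wt k k')
      = relMatrix R fun i j => row i = k ∧ row j = k' ∧ wt i = wt j + 1 := by
    refine relMatrix_mul_eq_relMatrix (fun i j m m' => ?_) fun i j => ⟨?_, ?_⟩
    · have := h.eq_of_row_eq_of_wt_eq m m'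
      grind [MatchedRows]
    · grind [MatchedRows]
    · rintro ⟨hi, hj, hwt⟩
      obtain ⟨m, hm⟩ := (h.exists_iff k (wt j)).mpr (by have := h.wt_mem j; grind)
      exact ⟨m, ⟨hi.trans hm.1.symm, by rw [hwt, hm.2]⟩, hm.1, hj, hm.2⟩
  have hright : relMatrix R (MatchedRows row wt k k') * shiftMatrix R row wt
      = relMatrix R fun i j => row i = k ∧ row j = k' ∧ wt i = wt j + 1 ∧ wt i < e k' := by
    refine relMatrix_mul_eq_relMatrix (fun i j m m' => ?_) fun i j => ⟨?_, ?_⟩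
    · have := h.eq_of_row_eq_of_wt_eq m m'
      grind [MatchedRows]
    · rintro ⟨m, ⟨hi, hm, hwt⟩, hrow, hwt'⟩
      have := h.wt_mem m
      grind
    · rintro ⟨hi, hj, hwt, hlt⟩
      obtain ⟨m, hm⟩ := (h.exists_iff k' (wt i)).mpr (by have := h.wt_mem j; grind)
      exact ⟨m, ⟨hi, hm.1, hm.2.symm⟩, hm.1.trans hj.symm, hm.2.trans hwt⟩
  rw [hleft, hright, sub_eq_iff_eq_add, eq_comm]
  refine relMatrix_add_eq_relMatrix (by grind [LinkedRows]) fun i j => ?_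
  have := h.wt_mem j
  grind [LinkedRows]

end RowDiagram

section Exchange

variable {ι κ : Type*} [DecidableEq κ]

/-- The rows obtained by cutting rows `k` and `k'` at weight `c` and swapping the parts of weight
at least `c`. -/
def swapTails (row : ι → κ) (wt : ι → ℤ) (k k' : κ) (c : ℤ) (i : ι) : κ :=
  if c ≤ wt i then Equiv.swap k k' (row i) else row i

/-- The end weights `e'` arise from `e` by swapping the ends of two rows one of which contains the
other, the start weights being `a`. -/
def IsExchange (a e e' : κ → ℤ) : Prop :=
  ∃ k k', k ≠ k' ∧ a k ≤ a k' ∧ a k' ≤ e k' ∧ e k' ≤ e k ∧ e' = e ∘ Equiv.swap k k'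

variable {row : ι → κ} {wt : ι → ℤ} {a e : κ → ℤ} {k k' : κ}

theorem isRowDiagram_swapTails (h : IsRowDiagram row wt a e) (hak : a k ≤ a k')
    (hae : a k' ≤ e k') (hek : e k' ≤ e k) :
    IsRowDiagram (swapTails row wt k k' (e k')) wt a (e ∘ Equiv.swap k k') where
  eq_of_row_eq_of_wt_eq i j hrow hwt := by
    refine h.eq_of_row_eq_of_wt_eq i j ?_ hwt
    by_cases hc : e k' ≤ wt j <;> simpa [swapTails, hwt, hc] using hrow
  exists_iff l p := by
    rcases le_or_gt (e k') p with hp | hp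
    · have hrow : (∃ i, swapTails row wt k k' (e k') i = l ∧ wt i = p) ↔
          ∃ i, row i = Equiv.swap k k' l ∧ wt i = p := by
        refine exists_congr fun i => and_congr_left fun hi => ?_
        rw [swapTails, if_pos (hi ▸ hp), Equiv.swap_apply_eq_iff]
      rw [hrow, h.exists_iff, Function.comp_apply]
      grind
    · have hrow : (∃ i, swapTails row wt k k' (e k') i = l ∧ wt i = p) ↔
          ∃ i, row i = l ∧ wt i = p := by
        refine exists_congr fun i => and_congr_left fun hi => ?_
        rw [swapTails, if_neg (hi ▸ hp.not_ge)]
      rw [hrow, h.exists_iff, Function.comp_apply]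
      grind

theorem shiftMatrix_add_relMatrix_linkedRows {R : Type*} [AddZeroClass R] [One R]
    (h : IsRowDiagram row wt a e) (hk : k ≠ k') :
    shiftMatrix R row wt + relMatrix R (LinkedRows row wt k k' (e k'))
      = shiftMatrix R (swapTails row wt k k' (e k')) wt
        + relMatrix R (LinkedRows row wt k k (e k')) := by
  rw [shiftMatrix, shiftMatrix, relMatrix_add_eq_relMatrix (t := fun i j => (row i = row j ∧
    wt i = wt j + 1) ∨ LinkedRows row wt k k' (e k') i j) ?_ fun _ _ => Iff.rfl]
  · refine (relMatrix_add_eq_relMatrix ?_ ?_).symm <;> intro i j <;> have := h.wt_mem i <;>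
      have := h.wt_mem j <;> grind [swapTails, LinkedRows]
  · grind [LinkedRows]

variable {𝕜 : Type*} [NontriviallyNormedField 𝕜] [Fintype ι] [DecidableEq ι]

theorem shiftMatrix_swapTails_mem_orbitClosure (h : IsRowDiagram row wt a e) (hk : k ≠ k')
    (hak : a k ≤ a k') (hek : e k' ≤ e k) :
    shiftMatrix 𝕜 (swapTails row wt k k' (e k')) wt
      ∈ orbitClosure (gradingMatrix 𝕜 wt) (shiftMatrix 𝕜 row wt) := by
  have hlink : shiftMatrix 𝕜 row wt + relMatrix 𝕜 (LinkedRows row wt k k' (e k'))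
      ∈ orbitClosure (gradingMatrix 𝕜 wt) (shiftMatrix 𝕜 row wt) := by
    refine add_mem_orbitClosure_of_sq_eq_zero
      (commute_relMatrix_gradingMatrix fun i j hij => hij.2.2) (relMatrix_mul_eq_zero ?_)
      (shiftMatrix_mul_matchedRows_sub h hak hek) (relMatrix_mul_eq_zero ?_)
    · exact fun i m j him hmj => hk (hmj.1.symm.trans him.2.1)
    · exact fun i m j him hmj => hk (hmj.1.symm.trans him.2.1)
  rw [shiftMatrix_add_relMatrix_linkedRows h hk] at hlink
  refine orbitClosure_trans hlink (mem_orbitClosure_add_of_isIdempotentElem 𝕜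
    (P := relMatrix 𝕜 fun i j => i = j ∧ swapTails row wt k k' (e k') i = k')
    ?_ (commute_relMatrix_gradingMatrix fun i j hij => by rw [hij.1]) ?_ ?_ ?_)
  · exact relMatrix_mul_eq_relMatrix (by grind) (by grind)
  · rw [relMatrix_eq_diagonal]
    exact (commute_relMatrix_diagonal fun i j hij => by rw [hij.1]).symm
  · exact relMatrix_mul_eq_relMatrix (by grind) (by grind [swapTails, LinkedRows])
  · exact relMatrix_mul_eq_zero (by grind [swapTails, LinkedRows])

theorem IsRowDiagram.exists_exchange (h : IsRowDiagram row wt a e) {e' : κ → ℤ}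
    (he : IsExchange a e e') :
    ∃ row' : ι → κ, IsRowDiagram row' wt a e' ∧
      shiftMatrix 𝕜 row' wt ∈ orbitClosure (gradingMatrix 𝕜 wt) (shiftMatrix 𝕜 row wt) := by
  obtain ⟨k, k', hk, hak, hae, hek, rfl⟩ := he
  exact ⟨_, isRowDiagram_swapTails h hak hae hek,
    shiftMatrix_swapTails_mem_orbitClosure h hk hak hek⟩

theorem IsRowDiagram.exists_reflTransGen_exchange (h : IsRowDiagram row wt a e) {e' : κ → ℤ}
    (he : Relation.ReflTransGen (IsExchange a) e e') :
    ∃ row' : ι → κ, IsRowDiagram row' wt a e' ∧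
      shiftMatrix 𝕜 row' wt ∈ orbitClosure (gradingMatrix 𝕜 wt) (shiftMatrix 𝕜 row wt) := by
  induction he with
  | refl => exact ⟨row, h, self_mem_orbitClosure _ _⟩
  | tail _ hex ih =>
    obtain ⟨row', hrow', hmem⟩ := ih
    obtain ⟨row'', hrow'', hmem'⟩ := hrow'.exists_exchange (𝕜 := 𝕜) hex
    exact ⟨row'', hrow'', orbitClosure_trans hmem hmem'⟩

end Exchange

section Rank

variable {ι κ : Type*} [Fintype ι] {row : ι → κ} {wt : ι → ℤ} {a e : κ → ℤ}

theorem card_filter_wt_add_lt [Fintype κ] (h : IsRowDiagram row wt a e) (m : ℕ) :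
    Finset.card {i | wt i + m < e (row i)} = ∑ k, (e k - m - a k).toNat := by
  classical
  rw [Finset.card_eq_sum_card_fiberwise (f := row) (t := Finset.univ) (by simp)]
  refine Finset.sum_congr rfl fun k _ => ?_
  rw [← Int.card_Ico]
  refine Finset.card_bij (fun i _ => wt i) ?_ ?_ ?_
  · intro i hi
    have := h.wt_mem i
    grind
  · intro i hi j hj
    have := h.eq_of_row_eq_of_wt_eq i j
    grind
  · intro p hp
    obtain ⟨i, hi⟩ := (h.exists_iff k p).mpr (by grind)
    exact ⟨i, by grind, hi.2⟩

theorem isClosed_setOf_rank_le (𝕜 : Type*) [NontriviallyNormedField 𝕜] [CompleteSpace 𝕜] (r : ℕ) :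
    IsClosed {A : Matrix ι ι 𝕜 | A.rank ≤ r} := by
  classical
  let φ : Matrix ι ι 𝕜 →ₗ[𝕜] (ι → 𝕜) →L[𝕜] (ι → 𝕜) :=
    LinearMap.toContinuousLinearMap.toLinearMap ∘ₗ Matrix.toLin'.toLinearMap
  have hφ : Continuous φ := φ.continuous_of_finiteDimensional
  have hopen := (isOpen_setOfPred_nat_le_rank (𝕜 := 𝕜) (E := ι → 𝕜) (F := ι → 𝕜)
    (r + 1)).preimage hφ
  rw [← isOpen_compl_iff]
  convert hopen using 1
  ext A
  have hrank : (φ A : (ι → 𝕜) →ₗ[𝕜] (ι → 𝕜)).rank = (A.rank : Cardinal) := by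
    rw [Matrix.rank, LinearMap.rank, Module.finrank_eq_rank]
    rfl
  simp only [Set.mem_compl_iff, Set.mem_ofPred_eq, Set.mem_preimage, hrank, Nat.cast_le]
  omega

variable [DecidableEq ι]

theorem shiftMatrix_pow {R : Type*} [Semiring R] (h : IsRowDiagram row wt a e) (m : ℕ) :
    shiftMatrix R row wt ^ m = relMatrix R fun i j => row i = row j ∧ wt i = wt j + m := by
  induction m with
  | zero =>
    ext i j
    have := h.eq_of_row_eq_of_wt_eq i j
    by_cases hij : i = j <;> simp_all [relMatrix]
  | succ m ih =>
    rw [pow_succ, ih]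
    refine relMatrix_mul_eq_relMatrix (fun i j x x' => ?_) fun i j => ⟨?_, ?_⟩
    · have := h.eq_of_row_eq_of_wt_eq x x'
      grind
    · grind
    · rintro ⟨hrow, hwt⟩
      obtain ⟨x, hx⟩ := (h.exists_iff (row j) (wt j + 1)).mpr
        (by have := h.wt_mem i; have := h.wt_mem j; grind)
      exact ⟨x, by grind⟩

theorem transpose_mul_shiftMatrix_pow {R : Type*} [Semiring R] (h : IsRowDiagram row wt a e)
    (m : ℕ) : (shiftMatrix R row wt ^ m).transpose * shiftMatrix R row wt ^ m
      = relMatrix R fun i j => i = j ∧ wt i + m < e (row i) := by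
  rw [shiftMatrix_pow h, relMatrix_transpose]
  refine relMatrix_mul_eq_relMatrix (fun i j x x' => ?_) fun i j => ⟨?_, ?_⟩
  · have := h.eq_of_row_eq_of_wt_eq x x'
    grind [flip]
  · rintro ⟨x, hx, hx'⟩
    have := h.wt_mem x
    have := h.eq_of_row_eq_of_wt_eq i j
    grind [flip]
  · rintro ⟨rfl, hlt⟩
    obtain ⟨x, hx⟩ := (h.exists_iff (row i) (wt i + m)).mpr (by have := h.wt_mem i; grind)
    exact ⟨x, hx, hx⟩

theorem rank_shiftMatrix_pow_eq_card (F : Type*) [Field F] (h : IsRowDiagram row wt a e) (m : ℕ) :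
    (shiftMatrix F row wt ^ m).rank = Finset.card {i | wt i + m < e (row i)} := by
  classical
  have hmul : shiftMatrix F row wt ^ m * ((shiftMatrix F row wt ^ m).transpose
      * shiftMatrix F row wt ^ m) = shiftMatrix F row wt ^ m := by
    rw [transpose_mul_shiftMatrix_pow h, shiftMatrix_pow h]
    refine relMatrix_mul_eq_relMatrix (by grind) fun i j => ?_
    have := h.wt_mem i
    grind
  have hle := Matrix.rank_mul_le_right (shiftMatrix F row wt ^ m)
    ((shiftMatrix F row wt ^ m).transpose * shiftMatrix F row wt ^ m)
  rw [hmul] at hle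
  rw [hle.antisymm (Matrix.rank_mul_le_right _ _), transpose_mul_shiftMatrix_pow h,
    relMatrix_eq_diagonal, Matrix.rank_diagonal, Fintype.card_subtype]
  simp

theorem rank_conj_pow {F : Type*} [Field F] (g : GL ι F) (A : Matrix ι ι F) (k : ℕ) :
    ((g * A * (g⁻¹ : GL ι F) : Matrix ι ι F) ^ k).rank = (A ^ k).rank := by
  rw [Units.conj_pow, Matrix.rank_mul_eq_left_of_isUnit_det, Matrix.rank_mul_eq_right_of_isUnit_det]
  · exact (Matrix.isUnit_iff_isUnit_det _).mp g.isUnit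
  · exact (Matrix.isUnit_iff_isUnit_det _).mp g⁻¹.isUnit

theorem rank_pow_le_of_mem_orbitClosure {𝕜 : Type*} [NontriviallyNormedField 𝕜] [CompleteSpace 𝕜]
    {S N M : Matrix ι ι 𝕜} (hM : M ∈ orbitClosure S N) (k : ℕ) : (M ^ k).rank ≤ (N ^ k).rank := by
  have hclosed : IsClosed {A : Matrix ι ι 𝕜 | (A ^ k).rank ≤ (N ^ k).rank} :=
    (isClosed_setOf_rank_le 𝕜 _).preimage (continuous_pow k)
  refine closure_minimal ?_ hclosed hM
  rintro _ ⟨h, -, rfl⟩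
  exact (rank_conj_pow h N k).le

end Rank

section Sorting

variable {κ : Type*} [Finite κ] [LinearOrder κ] [OrderBot κ] {a d : κ → ℤ}

theorem exists_ne_bot_forall_moved_le (hbot : ∀ i, d ⊥ ≤ d i) {σ : Equiv.Perm κ} (hσ : σ ≠ 1) :
    ∃ i, i ≠ ⊥ ∧ σ i ≠ i ∧ ∀ x, σ x ≠ x → d x ≤ d i := by
  have := Fintype.ofFinite κ
  obtain ⟨i, hi, hmax⟩ : ∃ i ∈ σ.support.erase ⊥, ∀ x ∈ σ.support.erase ⊥, d x ≤ d i := by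
    refine Finset.exists_max_image _ d (Finset.card_pos.mp ?_)
    have := Equiv.Perm.one_lt_card_support_of_ne_one hσ
    have := Finset.pred_card_le_card_erase (a := ⊥) (s := σ.support)
    omega
  obtain ⟨hi_bot, hi_ne⟩ : i ≠ ⊥ ∧ σ i ≠ i := by simpa using hi
  refine ⟨i, hi_bot, hi_ne, fun x hx => ?_⟩
  by_cases hx_bot : x = ⊥
  · exact hx_bot ▸ hbot i
  · exact hmax x (by simp [hx, hx_bot])

theorem reflTransGen_isExchange_comp_perm (hbot : ∀ i, d ⊥ ≤ d i)
    (had : ∀ k i, k ≤ i → d k ≤ d i → a k ≤ a i) (σ : Equiv.Perm κ)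
    (hσ : ∀ k, σ k = ⊥ ∨ k ≤ σ k) (haσ : ∀ k, a k ≤ d (σ k)) :
    Relation.ReflTransGen (IsExchange a) (d ∘ σ) d := by
  have := Fintype.ofFinite κ
  induction hcard : σ.support.card using Nat.strong_induction_on generalizing σ with
  | _ m ih =>
  by_cases hone : σ = 1
  · simpa [hone] using Relation.ReflTransGen.refl
  -- `k` is the row ending at the largest misplaced end `d i`; exchange its end with that of row `i`
  obtain ⟨i, hi_bot, hi_ne, hle⟩ := exists_ne_bot_forall_moved_le hbot hone
  obtain ⟨k, rfl⟩ := σ.surjective i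
  have hk_ne : σ k ≠ k := fun h => hi_ne (congrArg σ h)
  have hk_le : k ≤ σ k := (hσ k).resolve_left hi_bot
  have hak : a k ≤ a (σ k) := had k (σ k) hk_le (hle k hk_ne)
  have hends : d (σ (σ k)) ≤ d (σ k) := hle (σ (σ k)) fun h => hi_ne (σ.injective h)
  have hexch : IsExchange a (d ∘ σ) (d ∘ (σ * Equiv.swap k (σ k))) :=
    ⟨k, σ k, hk_ne.symm, hak, haσ (σ k), hends, rfl⟩
  have hlt : (σ * Equiv.swap k (σ k)).support.card < m := by
    rw [← hcard, Equiv.mul_swap_eq_swap_mul]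
    exact Equiv.Perm.card_support_swap_mul hi_ne
  refine .head hexch (ih _ hlt _ (fun x => ?_) (fun x => ?_) rfl)
  · rw [Equiv.Perm.mul_apply, Equiv.swap_apply_def]
    split_ifs with hxk hxi
    · rw [hxk]
      exact (hσ (σ k)).imp_right hk_le.trans
    · exact .inr hxi.le
    · exact hσ x
  · rw [Equiv.Perm.mul_apply, Equiv.swap_apply_def]
    split_ifs with hxk hxi
    · exact hxk ▸ hak.trans (haσ (σ k))
    · exact hxi ▸ (haσ (σ k)).trans hends
    · exact haσ x

end Sorting

section Similarity

variable {ι κ : Type*} {row row' : ι → κ} {wt wt' : ι → ℤ} {a e : κ → ℤ}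

theorem exists_perm_of_isRowDiagram [Finite ι] (h : IsRowDiagram row wt a e)
    (h' : IsRowDiagram row' wt' a e) :
    ∃ π : Equiv.Perm ι, ∀ i, row' (π i) = row i ∧ wt' (π i) = wt i := by
  choose π hπ using fun i => (h'.exists_iff (row i) (wt i)).mpr (h.wt_mem i)
  have hinj : Function.Injective π := fun i j hij => h.eq_of_row_eq_of_wt_eq i j
    (by rw [← (hπ i).1, hij, (hπ j).1]) (by rw [← (hπ i).2, hij, (hπ j).2])
  exact ⟨Equiv.ofBijective π (Finite.injective_iff_bijective.mp hinj), hπ⟩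

variable [Fintype ι] [DecidableEq ι] {R : Type*} [CommRing R]

theorem exists_conj_eq_submatrix (π : Equiv.Perm ι) (M : Matrix ι ι R) :
    ∃ g : GL ι R, (g * M * (g⁻¹ : GL ι R) : Matrix ι ι R) = M.submatrix π π := by
  let g : GL ι R := ⟨π.permMatrix R, (π⁻¹).permMatrix R, by
    rw [← Matrix.permMatrix_mul, inv_mul_cancel, Matrix.permMatrix_one], by
    rw [← Matrix.permMatrix_mul, mul_inv_cancel, Matrix.permMatrix_one]⟩
  refine ⟨g, ?_⟩
  change π.toPEquiv.toMatrix * M * π⁻¹.toPEquiv.toMatrix = _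
  rw [PEquiv.toMatrix_toPEquiv_mul, PEquiv.mul_toMatrix_toPEquiv, Matrix.submatrix_submatrix]
  rfl

theorem exists_conj_shiftMatrix_eq (h : IsRowDiagram row wt a e)
    (h' : IsRowDiagram row' wt' a e) :
    ∃ g : GL ι R, (g * shiftMatrix R row' wt' * (g⁻¹ : GL ι R) : Matrix ι ι R)
      = shiftMatrix R row wt := by
  obtain ⟨π, hπ⟩ := exists_perm_of_isRowDiagram h h'
  obtain ⟨g, hg⟩ := exists_conj_eq_submatrix π (shiftMatrix R row' wt')
  refine ⟨g, hg.trans (congrArg (relMatrix R) (funext₂ fun i j => ?_))⟩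
  simp only [hπ]

end Similarity

section JordanMatrix

theorem monotone_sum_range (l : ℕ → ℕ) : Monotone fun m => ∑ t ∈ Finset.range m, l t :=
  (Finset.sum_mono_set l).comp Finset.range_mono

variable {l : ℕ → ℕ} {n K : ℕ}

theorem exists_sum_range_le_lt {i : ℕ} (hi : i < ∑ t ∈ Finset.range K, l t) :
    ∃ b < K, ∑ t ∈ Finset.range b, l t ≤ i ∧ i < ∑ t ∈ Finset.range (b + 1), l t := by
  induction K with
  | zero => simp at hi
  | succ K ih =>
    rcases lt_or_ge i (∑ t ∈ Finset.range K, l t) with hlt | hge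
    · obtain ⟨b, hb, hmem⟩ := ih hlt
      exact ⟨b, hb.trans K.lt_succ_self, hmem⟩
    · exact ⟨K, K.lt_succ_self, hge, hi⟩

/-- `row` assigns to every index the Jordan block containing it, blocks of sizes `l 0, l 1, ...`
occupying consecutive intervals of indices. -/
def IsBlockIndex (l : ℕ → ℕ) (row : Fin n → Fin K) : Prop :=
  ∀ i k, row i = k ↔
    ∑ t ∈ Finset.range k, l t ≤ i ∧ (i : ℕ) < ∑ t ∈ Finset.range (k + 1), l t

theorem exists_isBlockIndex (hn : ∑ t ∈ Finset.range K, l t = n) :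
    ∃ row : Fin n → Fin K, IsBlockIndex l row := by
  choose b hbK hle hlt using fun i : Fin n => exists_sum_range_le_lt (i.is_lt.trans_eq hn.symm)
  refine ⟨fun i => ⟨b i, hbK i⟩, fun i k => ⟨?_, fun ⟨hle', hlt'⟩ => Fin.ext ?_⟩⟩
  · rintro rfl
    exact ⟨hle i, hlt i⟩
  · have hbk := (monotone_sum_range l).reflect_lt ((hle i).trans_lt hlt')
    have hkb := (monotone_sum_range l).reflect_lt (hle'.trans_lt (hlt i))
    simp only
    omega

variable {row : Fin n → Fin K}

theorem IsBlockIndex.isRowDiagram (hrow : IsBlockIndex l row)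
    (hn : ∑ t ∈ Finset.range K, l t = n) (a : Fin K → ℤ) :
    IsRowDiagram row (fun i => a (row i) + i - (∑ t ∈ Finset.range (row i), l t : ℕ)) a
      (fun k => a k + l k) where
  eq_of_row_eq_of_wt_eq i j hij hwt := by
    rw [hij] at hwt
    exact Fin.ext (by omega)
  exists_iff k p := by
    constructor
    · rintro ⟨i, hi, rfl⟩
      have := (hrow i k).mp hi
      rw [Finset.sum_range_succ] at this
      rw [hi]
      omega
    · rintro ⟨hle, hlt⟩
      obtain ⟨x, rfl⟩ : ∃ x : ℕ, p = a k + x := ⟨(p - a k).toNat, by omega⟩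
      have hsucc := Finset.sum_range_succ l k
      have hend : ∑ t ∈ Finset.range (k + 1), l t ≤ n :=
        (monotone_sum_range l k.is_lt).trans_eq hn
      let i : Fin n := ⟨∑ t ∈ Finset.range k, l t + x, by omega⟩
      have hi : row i = k := (hrow i k).mpr (by simp only [i]; omega)
      exact ⟨i, hi, by rw [hi]; simp only [i]; omega⟩

theorem jordanOfPartition_eq_relMatrix (n : ℕ) (l : ℕ → ℕ) :
    jordanOfPartition n l = relMatrix ℂ fun i j : Fin n =>
      (i : ℕ) = (j : ℕ) + 1 ∧ ∀ m : ℕ, ∑ t ∈ Finset.range m, l t ≠ i := by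
  unfold jordanOfPartition relMatrix
  congr!

theorem IsBlockIndex.jordanOfPartition_eq_shiftMatrix (hrow : IsBlockIndex l row)
    (a : Fin K → ℤ) :
    jordanOfPartition n l = shiftMatrix ℂ row
      (fun i => a (row i) + i - (∑ t ∈ Finset.range (row i), l t : ℕ)) := by
  rw [jordanOfPartition_eq_relMatrix, shiftMatrix]
  congr! 3 with i j
  refine ⟨fun ⟨hij, hne⟩ => ?_, fun ⟨hij, hwt⟩ => ?_⟩
  · have hi := (hrow i _).mp rfl
    have hj : row j = row i := (hrow j _).mpr
      ⟨Nat.le_of_lt_succ ((lt_of_le_of_ne hi.1 (hne _)).trans_eq hij),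
        (j : ℕ).lt_succ_self.trans (hi.2.trans_eq' hij)⟩
    exact ⟨hj.symm, by rw [hj]; omega⟩
  · rw [hij] at hwt
    refine ⟨by omega, fun m hm => ?_⟩
    have hi := (hrow i _).mp hij
    have hj := (hrow j _).mp rfl
    have hjm : (row j : ℕ) < m := (monotone_sum_range l).reflect_lt (hj.1.trans_lt (by omega))
    have hle : ∑ t ∈ Finset.range (row j + 1), l t ≤ ∑ t ∈ Finset.range m, l t :=
      monotone_sum_range l hjm
    omega

theorem exists_isRowDiagram_jordanOfPartition (hn : ∑ t ∈ Finset.range K, l t = n)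
    (a : Fin K → ℤ) :
    ∃ (row : Fin n → Fin K) (wt : Fin n → ℤ), IsRowDiagram row wt a (fun k => a k + l k) ∧
      jordanOfPartition n l = shiftMatrix ℂ row wt := by
  obtain ⟨row, hrow⟩ := exists_isBlockIndex hn
  exact ⟨row, _, hrow.isRowDiagram hn a, hrow.jordanOfPartition_eq_shiftMatrix a⟩

theorem rank_jordanOfPartition_pow (hn : ∑ t ∈ Finset.range K, l t = n) (m : ℕ) :
    (jordanOfPartition n l ^ m).rank = ∑ t ∈ Finset.range K, (l t - m) := by
  obtain ⟨row, wt, h, hJ⟩ := exists_isRowDiagram_jordanOfPartition hn 0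
  rw [hJ, rank_shiftMatrix_pow_eq_card ℂ h, card_filter_wt_add_lt h,
    ← Fin.sum_univ_eq_sum_range fun t => l t - m]
  refine Finset.sum_congr rfl fun k _ => ?_
  simp only [Pi.zero_apply]
  omega

end JordanMatrix

section Dominance

theorem sum_range_le_of_sum_range_tsub_le {lam mu : ℕ → ℕ} (hlam : Antitone lam) {j K : ℕ}
    (hj : j ≤ K)
    (h : ∑ t ∈ Finset.range K, (mu t - lam j) ≤ ∑ t ∈ Finset.range K, (lam t - lam j)) :
    ∑ t ∈ Finset.range j, mu t ≤ ∑ t ∈ Finset.range j, lam t := by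
  have htrunc : ∑ t ∈ Finset.range j, (mu t - lam j) ≤ ∑ t ∈ Finset.range j, (lam t - lam j) :=
    calc ∑ t ∈ Finset.range j, (mu t - lam j)
        ≤ ∑ t ∈ Finset.range K, (mu t - lam j) :=
          Finset.sum_le_sum_of_subset (Finset.range_mono hj)
      _ ≤ ∑ t ∈ Finset.range K, (lam t - lam j) := h
      _ = ∑ t ∈ Finset.range j, (lam t - lam j) :=
          (Finset.sum_subset (Finset.range_mono hj) fun x _ hx =>
            tsub_eq_zero_of_le (hlam (by simpa using hx))).symm
  calc ∑ t ∈ Finset.range j, mu t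
      ≤ ∑ t ∈ Finset.range j, ((mu t - lam j) + lam j) :=
        Finset.sum_le_sum fun t _ => le_tsub_add
    _ ≤ ∑ t ∈ Finset.range j, ((lam t - lam j) + lam j) := by
        simpa only [Finset.sum_add_distrib, add_le_add_iff_right] using htrunc
    _ = ∑ t ∈ Finset.range j, lam t := Finset.sum_congr rfl fun t ht =>
        tsub_add_cancel_of_le (hlam (Finset.mem_range.mp ht).le)

/-- The margin by which the first `i` parts of `lam` exceed those of `mu`; dominance says that it is
nonnegative. -/
def dominanceGap (lam mu : ℕ → ℕ) (i : ℕ) : ℤ :=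
  ∑ t ∈ Finset.range i, ((lam t : ℤ) - mu t)

theorem dominanceGap_zero (lam mu : ℕ → ℕ) : dominanceGap lam mu 0 = 0 :=
  Finset.sum_range_zero _

theorem dominanceGap_nonneg {lam mu : ℕ → ℕ} {i : ℕ}
    (h : ∑ t ∈ Finset.range i, mu t ≤ ∑ t ∈ Finset.range i, lam t) : 0 ≤ dominanceGap lam mu i := by
  rw [dominanceGap, Finset.sum_sub_distrib, sub_nonneg]
  exact_mod_cast h

theorem dominanceGap_finRotate {lam mu : ℕ → ℕ} {K : ℕ}
    (h : ∑ t ∈ Finset.range (K + 1), lam t = ∑ t ∈ Finset.range (K + 1), mu t) (k : Fin (K + 1)) :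
    dominanceGap lam mu (finRotate (K + 1) k) = dominanceGap lam mu k - mu k + lam k := by
  have hsucc : dominanceGap lam mu (k + 1) = dominanceGap lam mu k - mu k + lam k := by
    rw [dominanceGap, Finset.sum_range_succ, ← dominanceGap]
    ring
  rw [← hsucc]
  rcases eq_or_ne k (Fin.last K) with rfl | hk
  · rw [finRotate_last, Fin.val_zero, Fin.val_last, dominanceGap_zero, dominanceGap,
      Finset.sum_sub_distrib, eq_comm, sub_eq_zero]
    exact_mod_cast h
  · rw [coe_finRotate_of_ne_last hk]

theorem reflTransGen_isExchange_dominanceGap {lam mu : ℕ → ℕ} {K : ℕ} (hmu : Antitone mu)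
    (hsum : ∑ t ∈ Finset.range (K + 1), lam t = ∑ t ∈ Finset.range (K + 1), mu t)
    (hdom : ∀ j, ∑ t ∈ Finset.range j, mu t ≤ ∑ t ∈ Finset.range j, lam t) :
    Relation.ReflTransGen (IsExchange fun k : Fin (K + 1) => dominanceGap lam mu k - mu k)
      (fun k => dominanceGap lam mu k - mu k + lam k)
      (fun k => dominanceGap lam mu k - mu k + mu k) := by
  convert reflTransGen_isExchange_comp_perm
    (a := fun k : Fin (K + 1) => dominanceGap lam mu k - mu k) (d := fun k => dominanceGap lam mu k)
    (fun k => ?_) (fun k i hki hd => ?_) (finRotate (K + 1)) (fun k => ?_) (fun k => ?_) using 1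
  · exact funext fun k => (dominanceGap_finRotate hsum k).symm
  · exact funext fun k => sub_add_cancel _ _
  · simpa only [bot_eq_zero, Fin.val_zero, dominanceGap_zero] using dominanceGap_nonneg (hdom k)
  · have : (mu i : ℤ) ≤ mu k := by exact_mod_cast hmu hki
    linarith
  · rcases eq_or_ne k (Fin.last K) with rfl | hk
    · exact .inl finRotate_last
    · exact .inr (Fin.le_def.mpr (by rw [coe_finRotate_of_ne_last hk]; omega))
  · rw [dominanceGap_finRotate hsum]
    omega

theorem exists_conj_jordanOfPartition_mem_orbitClosure {n K : ℕ} {lam mu : ℕ → ℕ}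
    (hlam : ∑ t ∈ Finset.range (K + 1), lam t = n) (hmu : ∑ t ∈ Finset.range (K + 1), mu t = n)
    (hanti : Antitone mu)
    (hdom : ∀ j, ∑ t ∈ Finset.range j, mu t ≤ ∑ t ∈ Finset.range j, lam t) :
    ∃ wt : Fin n → ℤ,
      gradingMatrix ℂ wt * jordanOfPartition n lam - jordanOfPartition n lam * gradingMatrix ℂ wt
        = (-2 : ℂ) • jordanOfPartition n lam ∧
      ∃ g : GL (Fin n) ℂ,
        (g * jordanOfPartition n mu * (g⁻¹ : GL (Fin n) ℂ) : Matrix (Fin n) (Fin n) ℂ)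
          ∈ orbitClosure (gradingMatrix ℂ wt) (jordanOfPartition n lam) := by
  obtain ⟨row, wt, h, hJlam⟩ := exists_isRowDiagram_jordanOfPartition hlam
    fun k => dominanceGap lam mu k - mu k
  obtain ⟨row', wt', h', hJmu⟩ := exists_isRowDiagram_jordanOfPartition hmu
    fun k => dominanceGap lam mu k - mu k
  obtain ⟨row'', h'', hmem⟩ := h.exists_reflTransGen_exchange (𝕜 := ℂ)
    (reflTransGen_isExchange_dominanceGap hanti (hlam.trans hmu.symm) hdom)
  obtain ⟨g, hg⟩ := exists_conj_shiftMatrix_eq (R := ℂ) h'' h'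
  refine ⟨wt, ?_, g, ?_⟩
  · rw [hJlam, gradingMatrix_mul_shiftMatrix_sub]
  · rwa [hJlam, hJmu, hg]

end Dominance

theorem IsPartitionFun.sum_range_eq {n k : ℕ} {l : ℕ → ℕ} (h : IsPartitionFun n l k) {m : ℕ}
    (hm : k ≤ m) : ∑ t ∈ Finset.range m, l t = n := by
  rw [← h.2.2.2]
  exact (Finset.sum_subset (Finset.range_mono hm) fun x _ hx => h.2.1 x (by simpa using hx)).symm

/-- `λ` dominates `μ` iff there is an integral diagonal matrix `S` with
`S J_λ - J_λ S = -2 J_λ` such that the closure of the orbit of `J_λ` under the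
centralizer of `S` in `GL_n(ℂ)` contains a conjugate of `J_μ`. -/
theorem dominance_iff_degeneration (n : ℕ) (hn : 0 < n) (lam mu : ℕ → ℕ) (kl km : ℕ)
    (hlam : IsPartitionFun n lam kl) (hmu : IsPartitionFun n mu km) :
    (∀ j, ∑ i ∈ Finset.range j, mu i ≤ ∑ i ∈ Finset.range j, lam i) ↔
      ∃ S : Matrix (Fin n) (Fin n) ℂ, S.IsDiag ∧ (∀ i, ∃ z : ℤ, S i i = (z : ℂ)) ∧
        S * jordanOfPartition n lam - jordanOfPartition n lam * S
          = (-2 : ℂ) • jordanOfPartition n lam ∧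
        ∃ g : GL (Fin n) ℂ,
          (g : Matrix (Fin n) (Fin n) ℂ) * jordanOfPartition n mu *
              ((g⁻¹ : GL (Fin n) ℂ) : Matrix (Fin n) (Fin n) ℂ) ∈
            closure {A : Matrix (Fin n) (Fin n) ℂ |
              ∃ h : GL (Fin n) ℂ,
                (h : Matrix (Fin n) (Fin n) ℂ) * S = S * (h : Matrix (Fin n) (Fin n) ℂ) ∧
                A = (h : Matrix (Fin n) (Fin n) ℂ) * jordanOfPartition n lam *
                      ((h⁻¹ : GL (Fin n) ℂ) : Matrix (Fin n) (Fin n) ℂ)} := by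
  constructor
  · intro hdom
    obtain ⟨wt, hwt, hmem⟩ := exists_conj_jordanOfPartition_mem_orbitClosure (K := max kl km)
      (hlam.sum_range_eq (by omega)) (hmu.sum_range_eq (by omega)) (fun i j => hmu.2.2.1 i j) hdom
    exact ⟨gradingMatrix ℂ wt, Matrix.isDiag_diagonal _,
      fun i => ⟨-2 * wt i, Matrix.diagonal_apply_eq _ i⟩, hwt, hmem⟩
  · rintro ⟨S, -, -, -, g, hg⟩ j
    let K := max j (max kl km)
    have hrank := rank_pow_le_of_mem_orbitClosure hg (lam j)
    rw [rank_conj_pow, rank_jordanOfPartition_pow (hmu.sum_range_eq (m := K) (by omega)),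
      rank_jordanOfPartition_pow (hlam.sum_range_eq (m := K) (by omega))] at hrank
    exact sum_range_le_of_sum_range_tsub_le (fun i j => hlam.2.2.1 i j) (le_max_left _ _) hrank
end

section
/- Let g be a finite-dimensional Lie algebra over a field of characteristic zero and let (e, h, f) be an sl₂-triple in g. For an integer k, define g_{≥k} to be the sum over all integers i ≥ max(1−k, 1) of the subspaces ker((ad e)^i) ∩ im((ad e)^{i+k−1}). Then g_{≥k} equals the sum of the eigenspaces of ad(h) corresponding to eigenvalues ≥ k (all eigenvalues of ad(h) are integers). -/
/-!
In any finite-dimensional representation `V` of `sl₂`, let `e`, `h`, `f` act by `E`, `H`, `F`. If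
`F E w = 0`, then `E F ^ (s + 1) w = (s + 1) F ^ s (H - s) w`, so nilpotency of `F` gives
`∏_{s < N} (H - s) w = 0`. Hence `H` is diagonalizable on `ker (F E)` with eigenvalues in `ℕ`, and
symmetrically on `ker (E F)` with eigenvalues in `-ℕ`. Comparing eigenvalues, `ker (F E) = ker E`,
and a dimension count turns this and its mirror image into `V = ker E ⊕ im F`. Iterating, `V` is
spanned by the strings `F ^ j y` with `y` primitive of weight `n : ℕ` and `j ≤ n`, and `ker (E ^ r)`
by those with `j < r`; both inclusions are read off from the weights `n - 2 j` of these vectors.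
-/

open Module Submodule

section Eigenspaces

variable {K V : Type*} [Field K] [AddCommGroup V] [Module K V]

theorem mem_iSup_inf_eigenspace_sup_of_apply_sub_smul_mem {ι : Type*} {T : End K V}
    {p : Submodule K V} {μ : ι → K} {s : Set ι} {i : ι} (hi : ∀ j ∈ s, μ j ≠ μ i) {x : V}
    (hx : x ∈ p) (h : T x - μ i • x ∈ ⨆ j ∈ s, p ⊓ T.eigenspace (μ j)) :
    x ∈ (⨆ j ∈ s, p ⊓ T.eigenspace (μ j)) ⊔ p ⊓ T.eigenspace (μ i) := by
  set W := ⨆ j ∈ s, p ⊓ T.eigenspace (μ j)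
  have hWp : W ≤ p := iSup₂_le fun _ _ ↦ inf_le_left
  have hW : W ≤ W.map (T - μ i • 1) := by
    refine iSup₂_le fun j hj y hy ↦ ⟨(μ j - μ i)⁻¹ • y, ?_, ?_⟩
    · exact smul_mem _ _ (le_iSup₂ (f := fun j _ ↦ p ⊓ T.eigenspace (μ j)) j hj hy)
    · have hTy : (T - μ i • 1) y = (μ j - μ i) • y := by
        simp [End.mem_eigenspace_iff.mp hy.2, sub_smul]
      rw [map_smul, hTy, inv_smul_smul₀ (sub_ne_zero.mpr (hi j hj))]
  obtain ⟨z, hz, hzx⟩ := hW h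
  have hxz : T (x - z) = μ i • (x - z) := by
    rw [← sub_eq_zero, ← sub_eq_zero.mpr hzx.symm]
    simp only [map_sub, LinearMap.sub_apply, LinearMap.smul_apply, End.one_apply]
    module
  rw [← add_sub_cancel z x]
  exact add_mem_sup hz ⟨p.sub_mem hx (hWp hz), End.mem_eigenspace_iff.mpr hxz⟩

/-- The sum of the eigenspaces of `T` for the integer eigenvalues at least `k`. The sum for the
eigenvalues at most `k` is `eigenspaceGE (-T) (-k)`. -/
def eigenspaceGE (T : End K V) (k : ℤ) : Submodule K V :=
  ⨆ m : ℤ, ⨆ _ : k ≤ m, T.eigenspace (m : K)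

theorem eigenspace_le_eigenspaceGE (T : End K V) {k m : ℤ} (hkm : k ≤ m) :
    T.eigenspace (m : K) ≤ eigenspaceGE T k :=
  le_iSup₂ (f := fun (m : ℤ) (_ : k ≤ m) ↦ T.eigenspace (m : K)) m hkm

theorem disjoint_eigenspaceGE_neg [CharZero K] (T : End K V) {k l : ℤ} (hkl : 0 < k + l) :
    Disjoint (eigenspaceGE T k) (eigenspaceGE (-T) l) := by
  have hind : iSupIndep fun m : ℤ ↦ T.eigenspace (m : K) :=
    T.eigenspaces_iSupIndep.comp Int.cast_injective
  have hdisj : Disjoint {m : ℤ | k ≤ m} {m : ℤ | m ≤ -l} :=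
    Set.disjoint_left.mpr fun m (hm : k ≤ m) (hm' : m ≤ -l) ↦ by omega
  refine (hind.disjoint_biSup_biSup hdisj).mono_right (iSup₂_le fun m hm x hx ↦ ?_)
  have hneg : -m ∈ {m : ℤ | m ≤ -l} := neg_le_neg hm
  refine le_iSup₂ (f := fun (m : ℤ) (_ : m ∈ {m : ℤ | m ≤ -l}) ↦ T.eigenspace (m : K)) _ hneg ?_
  rw [End.mem_eigenspace_iff] at hx ⊢
  rw [Int.cast_neg, neg_smul, ← hx, LinearMap.neg_apply, neg_neg]

/-- The `k`-th step `∑_{i ≥ max(1-k,1)} ker (E ^ i) ∩ im (E ^ (i+k-1))` of the Deligne filtration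
of an endomorphism `E`. The bound on `i` keeps the exponent `i + k - 1` nonnegative, so `Int.toNat`
does not truncate. -/
def deligneFiltration (E : End K V) (k : ℤ) : Submodule K V :=
  ⨆ i : ℕ, ⨆ _ : 1 ≤ i ∧ 1 - k ≤ (i : ℤ),
    LinearMap.ker (E ^ i) ⊓ LinearMap.range (E ^ ((i : ℤ) + k - 1).toNat)

theorem ker_inf_range_le_deligneFiltration (E : End K V) {k : ℤ} {i a : ℕ} (hi : 1 ≤ i)
    (hik : 1 - k ≤ i) (ha : i + k - 1 ≤ a) :
    LinearMap.ker (E ^ i) ⊓ LinearMap.range (E ^ a) ≤ deligneFiltration E k := by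
  refine le_trans (inf_le_inf_left _ ?_) (le_iSup₂ (f := fun (i : ℕ)
    (_ : 1 ≤ i ∧ 1 - k ≤ (i : ℤ)) ↦ LinearMap.ker (E ^ i) ⊓
      LinearMap.range (E ^ ((i : ℤ) + k - 1).toNat)) i ⟨hi, hik⟩)
  exact LinearMap.iterateRange E |>.monotone (by omega)

end Eigenspaces

section Representations

attribute [local instance] LieRing.ofAssociativeRing

/-- The endomorphisms `E`, `H`, `F` define a representation of `sl₂`. In contrast to `IsSl2Triple`,
the representation may be trivial, i.e. `H = 0` is allowed. -/
structure IsSl2Action {K V : Type*} [Field K] [AddCommGroup V] [Module K V]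
    (E H F : End K V) : Prop where
  lie_h_e : ⁅H, E⁆ = (2 : K) • E
  lie_h_f : ⁅H, F⁆ = (-2 : K) • F
  lie_e_f : ⁅E, F⁆ = H

namespace IsSl2Action

variable {K V : Type*} [Field K] [AddCommGroup V] [Module K V] {E H F : End K V}

theorem symm (t : IsSl2Action E H F) : IsSl2Action F (-H) E where
  lie_h_e := by rw [neg_lie, t.lie_h_f, neg_smul, neg_neg]
  lie_h_f := by rw [neg_lie, t.lie_h_e, neg_smul]
  lie_e_f := by rw [← lie_skew, t.lie_e_f]

theorem h_apply_e (t : IsSl2Action E H F) (v : V) : H (E v) = E (H v) + (2 : K) • E v :=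
  sub_eq_iff_eq_add'.mp (LinearMap.congr_fun t.lie_h_e v)

theorem h_apply_f (t : IsSl2Action E H F) (v : V) : H (F v) = F (H v) - (2 : K) • F v := by
  simpa [sub_eq_add_neg] using sub_eq_iff_eq_add'.mp (LinearMap.congr_fun t.lie_h_f v)

theorem e_apply_f (t : IsSl2Action E H F) (v : V) : E (F v) = F (E v) + H v :=
  sub_eq_iff_eq_add'.mp (LinearMap.congr_fun t.lie_e_f v)

theorem h_apply_e_pow (t : IsSl2Action E H F) (n : ℕ) (v : V) :
    H ((E ^ n) v) = (E ^ n) (H v) + (2 * n : K) • (E ^ n) v := by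
  induction n with
  | zero => simp
  | succ n ih =>
    simp only [pow_succ', End.mul_apply, t.h_apply_e, ih, map_add, map_smul]
    push_cast
    module

theorem h_apply_f_pow (t : IsSl2Action E H F) (n : ℕ) (v : V) :
    H ((F ^ n) v) = (F ^ n) (H v) - (2 * n : K) • (F ^ n) v := by
  have h := t.symm.h_apply_e_pow n v
  rw [LinearMap.neg_apply, LinearMap.neg_apply, map_neg, neg_eq_iff_eq_neg] at h
  rw [h]
  module

theorem e_apply_f_pow_succ (t : IsSl2Action E H F) (n : ℕ) (v : V) :
    E ((F ^ (n + 1)) v) = (F ^ (n + 1)) (E v) + (n + 1 : K) • (F ^ n) (H v - (n : K) • v) := by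
  induction n with
  | zero => simp [t.e_apply_f]
  | succ n ih =>
    rw [pow_succ', End.mul_apply, t.e_apply_f, ih, t.h_apply_f_pow]
    simp only [pow_succ', End.mul_apply, map_add, map_sub, map_smul]
    push_cast
    module

theorem map_e_pow_eigenspaceGE_le (t : IsSl2Action E H F) (k : ℤ) (n : ℕ) :
    (eigenspaceGE H k).map (E ^ n) ≤ eigenspaceGE H (k + 2 * n) := by
  refine map_le_iff_le_comap.mpr (iSup₂_le fun m hm x hx ↦ ?_)
  refine eigenspace_le_eigenspaceGE H (m := m + 2 * n) (by omega) ?_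
  rw [End.mem_eigenspace_iff] at hx ⊢
  rw [t.h_apply_e_pow, hx, map_smul, ← add_smul]
  push_cast
  rfl

theorem map_f_pow_eigenspace_le (t : IsSl2Action E H F) (m : ℤ) (j : ℕ) :
    (H.eigenspace (m : K)).map (F ^ j) ≤ H.eigenspace ((m - 2 * j : ℤ) : K) := by
  rintro _ ⟨x, hx, rfl⟩
  rw [SetLike.mem_coe, End.mem_eigenspace_iff] at hx
  rw [End.mem_eigenspace_iff, t.h_apply_f_pow, hx, map_smul, ← sub_smul]
  push_cast
  rfl

theorem h_apply_mem_ker_f_mul_e (t : IsSl2Action E H F) {v : V} (hv : v ∈ LinearMap.ker (F * E)) :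
    H v ∈ LinearMap.ker (F * E) := by
  rw [LinearMap.mem_ker, End.mul_apply] at hv ⊢
  have hFE : H (F (E v)) = F (E (H v)) := by
    rw [t.h_apply_f, t.h_apply_e, map_add, map_smul, add_sub_cancel_right]
  rw [← hFE, hv, map_zero]

theorem e_pow_succ_f_pow_eq_zero (t : IsSl2Action E H F) (j : ℕ) {y : V}
    (hy : E y = 0) : (E ^ (j + 1)) ((F ^ j) y) = 0 := by
  induction j generalizing y with
  | zero => simpa using hy
  | succ j ih =>
    have hHy : E (H y - (j : K) • y) = 0 := by
      simpa [hy] using (t.h_apply_e y).symm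
    rw [pow_succ, End.mul_apply, t.e_apply_f_pow_succ, hy, map_zero, zero_add, map_smul, ih hHy,
      smul_zero]

theorem iSup_map_f_pow_ker_e_le_ker_e_pow (t : IsSl2Action E H F) (r : ℕ) :
    ⨆ j < r, (LinearMap.ker E).map (F ^ j) ≤ LinearMap.ker (E ^ r) := by
  refine iSup₂_le fun j hj ↦ ?_
  rintro _ ⟨y, hy, rfl⟩
  exact End.pow_map_zero_of_le hj (t.e_pow_succ_f_pow_eq_zero j hy)

section CharZero

variable [CharZero K]

theorem f_pow_mem_range_e_pow (t : IsSl2Action E H F) {n j s : ℕ} (hjs : j + s ≤ n) {y : V}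
    (hHy : H y = (n : K) • y) (hEy : E y = 0) : (F ^ j) y ∈ LinearMap.range (E ^ s) := by
  induction s generalizing j with
  | zero => simp
  | succ s ih =>
    obtain ⟨z, hz⟩ := ih (j := j + 1) (by omega)
    have hne : (j + 1 : K) * (n - j) ≠ 0 :=
      mul_ne_zero (by exact_mod_cast j.succ_ne_zero)
        (sub_ne_zero.mpr (by exact_mod_cast (show n ≠ j by omega)))
    have hE : E ((F ^ (j + 1)) y) = ((j + 1 : K) * (n - j)) • (F ^ j) y := by
      rw [t.e_apply_f_pow_succ, hEy, map_zero, zero_add, hHy, ← sub_smul, map_smul, smul_smul]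
    refine ⟨((j + 1 : K) * (n - j))⁻¹ • z, ?_⟩
    rw [map_smul, pow_succ', End.mul_apply, hz, hE, inv_smul_smul₀ hne]

variable [FiniteDimensional K V]

theorem isNilpotent_e (t : IsSl2Action E H F) : IsNilpotent E := by
  by_contra hE
  -- The powers of `E` are eigenvectors of `ad H` for the distinct eigenvalues `2 * n`.
  have hne (n : ℕ) : E ^ n ≠ 0 := fun hn ↦ hE ⟨n, hn⟩
  have hlin := End.eigenvectors_linearIndependent' (LieAlgebra.ad K (End K V) H)
    (fun n : ℕ ↦ (2 * n : K)) (fun a b hab ↦ by simpa using hab) (fun n ↦ E ^ n) fun n ↦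
      ⟨End.mem_eigenspace_iff.mpr
        (LinearMap.ext fun v ↦ sub_eq_iff_eq_add'.mpr (t.h_apply_e_pow n v)), hne n⟩
  exact not_finite_iff_infinite.mpr inferInstance hlin.finite

theorem ker_f_mul_e_le_iSup_inf_eigenspace (t : IsSl2Action E H F) :
    LinearMap.ker (F * E) ≤ ⨆ n : ℕ, LinearMap.ker (F * E) ⊓ H.eigenspace (n : K) := by
  have key (s : ℕ) : ∀ w ∈ LinearMap.ker (F * E), (F ^ s) w = 0 →
      w ∈ ⨆ n < s, LinearMap.ker (F * E) ⊓ H.eigenspace (n : K) := by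
    induction s with
    | zero => simp
    | succ s ih =>
      intro w hw hFw
      have hFEw : (F ^ (s + 1)) (E w) = 0 := by
        rw [pow_succ, End.mul_apply, ← End.mul_apply F, hw, map_zero]
      have hFHw : (F ^ s) (H w - (s : K) • w) = 0 := by
        have h := t.e_apply_f_pow_succ s w
        rw [hFw, hFEw, map_zero, zero_add] at h
        exact (smul_eq_zero.mp h.symm).resolve_left (by exact_mod_cast s.succ_ne_zero)
      rw [Nat.iSup_lt_succ]
      refine mem_iSup_inf_eigenspace_sup_of_apply_sub_smul_mem (s := Set.Iio s)
        (fun j hj ↦ ?_) hw (ih _ ?_ hFHw)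
      · exact_mod_cast hj.ne
      · exact sub_mem (t.h_apply_mem_ker_f_mul_e hw) (smul_mem _ _ hw)
  obtain ⟨N, hN⟩ := t.symm.isNilpotent_e
  intro w hw
  have hmem := key N w hw (by rw [hN, LinearMap.zero_apply])
  exact iSup₂_le_iSup (· < N) (fun n ↦ LinearMap.ker (F * E) ⊓ H.eigenspace (n : K)) hmem

theorem ker_f_mul_e_le_eigenspaceGE (t : IsSl2Action E H F) :
    LinearMap.ker (F * E) ≤ eigenspaceGE H 0 :=
  t.ker_f_mul_e_le_iSup_inf_eigenspace.trans <| iSup_le fun n ↦ inf_le_right.trans <| by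
    simpa using eigenspace_le_eigenspaceGE H n.cast_nonneg

theorem ker_f_mul_e (t : IsSl2Action E H F) : LinearMap.ker (F * E) = LinearMap.ker E := by
  refine le_antisymm (fun w hw ↦ ?_) (LinearMap.ker_le_ker_comp E F)
  -- `E w` has weights at least `2` because `w ∈ ker (F * E)`, and at most `0` as `E w ∈ ker F`.
  have hpos : E w ∈ eigenspaceGE H (0 + 2 * (1 : ℕ)) :=
    t.map_e_pow_eigenspaceGE_le 0 1 ⟨w, t.ker_f_mul_e_le_eigenspaceGE hw, by rw [pow_one]⟩
  have hneg : E w ∈ eigenspaceGE (-H) 0 :=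
    t.symm.ker_f_mul_e_le_eigenspaceGE (LinearMap.ker_le_ker_comp F E hw)
  exact disjoint_def.mp (disjoint_eigenspaceGE_neg H (by norm_num)) _ hpos hneg

theorem finrank_range_e_le (t : IsSl2Action E H F) :
    finrank K (LinearMap.range E) ≤ finrank K (LinearMap.range F) := by
  have hFE := (F * E).finrank_range_add_finrank_ker
  have hE := E.finrank_range_add_finrank_ker
  have hle := finrank_mono (LinearMap.range_comp_le_range E F)
  rw [t.ker_f_mul_e] at hFE
  rw [← End.mul_eq_comp] at hle
  omega

theorem isCompl_ker_e_range_f (t : IsSl2Action E H F) :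
    IsCompl (LinearMap.ker E) (LinearMap.range F) := by
  refine (isCompl_iff_disjoint _ _ ?_).mpr (disjoint_def.mpr ?_)
  · have hE := E.finrank_range_add_finrank_ker
    have hle := t.finrank_range_e_le
    omega
  · rintro _ hE ⟨w, rfl⟩
    exact t.symm.ker_f_mul_e.le hE

theorem iSup_map_f_pow_ker_e_sup_range (t : IsSl2Action E H F) (r : ℕ) :
    (⨆ j < r, (LinearMap.ker E).map (F ^ j)) ⊔ LinearMap.range (F ^ r) = ⊤ := by
  induction r with
  | zero => simp [End.one_eq_id]
  | succ r ih =>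
    have hrange : LinearMap.range (F ^ r) =
        (LinearMap.ker E).map (F ^ r) ⊔ LinearMap.range (F ^ (r + 1)) := by
      rw [LinearMap.range_eq_map, ← t.isCompl_ker_e_range_f.sup_eq_top, Submodule.map_sup, pow_succ,
        End.mul_eq_comp, LinearMap.range_comp]
    rw [← ih, hrange, Nat.iSup_lt_succ, sup_assoc]

theorem iSup_map_f_pow_ker_e (t : IsSl2Action E H F) :
    ⨆ j, (LinearMap.ker E).map (F ^ j) = ⊤ := by
  obtain ⟨N, hN⟩ := t.symm.isNilpotent_e
  have h := t.iSup_map_f_pow_ker_e_sup_range N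
  rw [hN, LinearMap.range_zero, sup_bot_eq] at h
  exact top_le_iff.mp (h.ge.trans (iSup₂_le_iSup _ _))

theorem finrank_ker_f_pow_le (t : IsSl2Action E H F) (r : ℕ) :
    finrank K (LinearMap.ker (F ^ r)) ≤
      finrank K ↥(⨆ j < r, (LinearMap.ker E).map (F ^ j)) := by
  have hF := (F ^ r).finrank_range_add_finrank_ker
  have hsup := finrank_add_le_finrank_add_finrank
    (⨆ j < r, (LinearMap.ker E).map (F ^ j)) (LinearMap.range (F ^ r))
  rw [t.iSup_map_f_pow_ker_e_sup_range, finrank_top] at hsup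
  omega

theorem ker_e_pow (t : IsSl2Action E H F) (r : ℕ) :
    LinearMap.ker (E ^ r) = ⨆ j < r, (LinearMap.ker E).map (F ^ j) := by
  refine (eq_of_le_of_finrank_le (t.iSup_map_f_pow_ker_e_le_ker_e_pow r) ?_).symm
  calc finrank K (LinearMap.ker (E ^ r))
    _ ≤ finrank K ↥(⨆ j < r, (LinearMap.ker F).map (E ^ j)) :=
      t.symm.finrank_ker_f_pow_le r
    _ ≤ finrank K (LinearMap.ker (F ^ r)) :=
      finrank_mono (t.symm.iSup_map_f_pow_ker_e_le_ker_e_pow r)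
    _ ≤ finrank K ↥(⨆ j < r, (LinearMap.ker E).map (F ^ j)) := t.finrank_ker_f_pow_le r

theorem map_f_pow_ker_e_le_of_primitive (t : IsSl2Action E H F) {j : ℕ} {W : Submodule K V}
    (hW : ∀ (n : ℕ) (y : V), j ≤ n → H y = (n : K) • y → E y = 0 → (F ^ j) y ∈ W) :
    (LinearMap.ker E).map (F ^ j) ≤ W := by
  have hker := t.ker_f_mul_e_le_iSup_inf_eigenspace
  rw [t.ker_f_mul_e] at hker
  refine map_le_iff_le_comap.mpr (hker.trans (iSup_le fun n y hy ↦ ?_))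
  have hEy : E y = 0 := hy.1
  have hHy : H y = (n : K) • y := End.mem_eigenspace_iff.mp hy.2
  rcases le_or_gt j n with hj | hj
  · exact hW n y hj hHy hEy
  -- `F ^ (n + 1) y` is killed by `E` but has the negative weight `-n - 2`.
  have hE : E ((F ^ (n + 1)) y) = 0 := by
    rw [t.e_apply_f_pow_succ, hEy, hHy, sub_self, map_zero, map_zero, smul_zero, add_zero]
  have hpos : (F ^ (n + 1)) y ∈ eigenspaceGE H 0 :=
    t.ker_f_mul_e_le_eigenspaceGE (LinearMap.ker_le_ker_comp E F hE)
  have hneg : (F ^ (n + 1)) y ∈ eigenspaceGE (-H) 1 := by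
    refine eigenspace_le_eigenspaceGE (-H) (m := n + 2) (by omega) (End.mem_eigenspace_iff.mpr ?_)
    rw [LinearMap.neg_apply, t.h_apply_f_pow, hHy, map_smul]
    push_cast
    module
  have hF : (F ^ (n + 1)) y = 0 :=
    disjoint_def.mp (disjoint_eigenspaceGE_neg H (by norm_num)) _ hpos hneg
  rw [mem_comap, End.pow_map_zero_of_le hj hF]
  exact W.zero_mem

theorem ker_e_pow_le_eigenspaceGE (t : IsSl2Action E H F) (r : ℕ) :
    LinearMap.ker (E ^ r) ≤ eigenspaceGE H (1 - r) := by
  rw [t.ker_e_pow]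
  refine iSup₂_le fun j hj ↦ t.map_f_pow_ker_e_le_of_primitive fun n y hjn hHy _ ↦ ?_
  exact eigenspace_le_eigenspaceGE H (by omega)
    (t.map_f_pow_eigenspace_le n j ⟨y, by simpa using hHy, rfl⟩)

theorem deligneFiltration_le_eigenspaceGE (t : IsSl2Action E H F) (k : ℤ) :
    deligneFiltration E k ≤ eigenspaceGE H k := by
  refine iSup₂_le fun i hi ↦ ?_
  set a := ((i : ℤ) + k - 1).toNat
  rintro _ ⟨hx, v, rfl⟩
  have hv : v ∈ LinearMap.ker (E ^ (i + a)) := by rwa [pow_add]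
  have h := t.map_e_pow_eigenspaceGE_le _ a ⟨v, t.ker_e_pow_le_eigenspaceGE _ hv, rfl⟩
  rwa [show 1 - ((i + a : ℕ) : ℤ) + 2 * a = k by omega] at h

theorem deligneFiltration_sup_eigenspaceGE_neg (t : IsSl2Action E H F) (k : ℤ) :
    deligneFiltration E k ⊔ eigenspaceGE (-H) (1 - k) = ⊤ := by
  rw [eq_top_iff, ← t.iSup_map_f_pow_ker_e]
  refine iSup_le fun j ↦ t.map_f_pow_ker_e_le_of_primitive fun n y hjn hHy hEy ↦ ?_
  rcases le_or_gt k (n - 2 * j) with hk | hk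
  · refine mem_sup_left (ker_inf_range_le_deligneFiltration E (i := max (j + 1) (1 - k).toNat)
      (a := n - j) (by omega) (by omega) (by omega) ⟨?_, ?_⟩)
    · exact End.pow_map_zero_of_le (le_max_left _ _) (t.e_pow_succ_f_pow_eq_zero j hEy)
    · exact t.f_pow_mem_range_e_pow (by omega) hHy hEy
  · refine mem_sup_right (eigenspace_le_eigenspaceGE (-H) (m := 2 * j - n) (by omega) ?_)
    rw [End.mem_eigenspace_iff, LinearMap.neg_apply, t.h_apply_f_pow, hHy, map_smul]
    push_cast
    module

end CharZero

end IsSl2Action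

theorem isSl2Action_toEnd {K L V : Type*} [Field K] [LieRing L] [LieAlgebra K L] [AddCommGroup V]
    [Module K V] [LieRingModule L V] [LieModule K L V] {e h f : L} (hhe : ⁅h, e⁆ = (2 : K) • e)
    (hhf : ⁅h, f⁆ = (-2 : K) • f) (hef : ⁅e, f⁆ = h) :
    IsSl2Action (LieModule.toEnd K L V e) (LieModule.toEnd K L V h) (LieModule.toEnd K L V f) where
  lie_h_e := by rw [← LieHom.map_lie, hhe, map_smul]
  lie_h_f := by rw [← LieHom.map_lie, hhf, map_smul]
  lie_e_f := by rw [← LieHom.map_lie, hef]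

end Representations

theorem deligne_filtration_eq_eigenspace_sum_general {K V : Type*} [Field K] [CharZero K]
    [AddCommGroup V] [Module K V] [FiniteDimensional K V] {E H F : End K V}
    (t : IsSl2Action E H F) (k : ℤ) : deligneFiltration E k = eigenspaceGE H k := by
  have hdisj : Disjoint (eigenspaceGE H k) (eigenspaceGE (-H) (1 - k)) :=
    disjoint_eigenspaceGE_neg H (by omega)
  refine eq_of_le_of_inf_le_of_le_sup (t.deligneFiltration_le_eigenspaceGE k)
    (hdisj.eq_bot.trans_le bot_le) ?_
  rw [t.deligneFiltration_sup_eigenspaceGE_neg]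
  exact le_top

/-- for an `sl₂`-triple `(e, h, f)`, the `k`-th step of the Deligne filtration
attached to `e`, namely `∑_{i ≥ max(1-k,1)} ker((ad e)^i) ∩ im((ad e)^{i+k-1})`, equals the
sum of the eigenspaces of `ad h` with (integer) eigenvalues `≥ k`. -/
theorem deligne_filtration_eq_eigenspace_sum (F : Type*) [Field F] [CharZero F]
    (g : Type*) [LieRing g] [LieAlgebra F g] [FiniteDimensional F g]
    (e h f : g)
    (hhe : ⁅h, e⁆ = (2 : F) • e) (hhf : ⁅h, f⁆ = (-2 : F) • f) (hef : ⁅e, f⁆ = h)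
    (k : ℤ) :
    (⨆ i : ℕ, ⨆ _ : 1 ≤ i ∧ 1 - k ≤ (i : ℤ),
        LinearMap.ker (LieAlgebra.ad F g e ^ i) ⊓
          LinearMap.range (LieAlgebra.ad F g e ^ ((i : ℤ) + k - 1).toNat))
      = ⨆ m : ℤ, ⨆ _ : k ≤ m, Module.End.eigenspace (LieAlgebra.ad F g h) ((m : ℤ) : F) :=
  deligne_filtration_eq_eigenspace_sum_general (isSl2Action_toEnd hhe hhf hef) k
end

section
/- Let σ and τ be finite-dimensional complex vector spaces equipped with linear endomorphisms (e_σ, h_σ, f_σ) and (e_τ, h_τ, f_τ) respectively, each triple satisfying the sl₂ commutation relations ([h,e] = 2e, [h,f] = −2f, [e,f] = h as commutators of endomorphisms), and suppose each of σ and τ is irreducible, i.e. has no nonzero proper subspace invariant under all three operators. Assume dim σ ≥ dim τ ≥ 1. Let L = Hom_ℂ(σ, τ) with the sl₂-action given by x·T = x_τ∘T − T∘x_σ for x ∈ {e, h, f}. Let v₊ ∈ σ be a nonzero vector with e_σ(v₊) = 0. Then L is the direct sum of L⁰ = {T ∈ L : T(v₊) = 0} and L^f = {T ∈ L : f_τ∘T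 − T∘f_σ = 0}. -/
/-!
Evaluation at `v₊` maps `L` to `τ` with kernel `L⁰`, so the claim is that it restricts to a
bijection from `L^f` onto `τ`. A vector of `σ` killed by `e` is a multiple of a primitive vector, so
it is cyclic for `f`: the module `σ` is `ℂ[X] ⧸ (X ^ dim σ)` with `X` acting as `f` and `v₊` as the
class of `1`. Hence an element of `L^f` is the same as the choice of a vector `t ∈ τ`, the image of
`v₊`, with `f ^ dim σ t = 0`. When `dim τ ≤ dim σ` this holds for every `t`, because `f` is
nilpotent on `τ`.
-/

open Polynomial Module

section CyclicVector

variable {R V W : Type*} [CommRing R] [AddCommGroup V] [Module R V] [AddCommGroup W] [Module R W]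
  {f : End R V} {g : End R W} {v : V}

/-- `v` is a cyclic vector of `f` if the iterates `f ^ n v` span the whole module. -/
def IsCyclicVector (f : End R V) (v : V) : Prop :=
  Submodule.span R (Set.range fun n : ℕ ↦ (f ^ n) v) = ⊤

/-- The map `p ↦ p(f) v`, that is, the map of `R[X]`-modules sending `1` to `v` when `X` acts on `V`
as `f`; it is only recorded as an `R`-linear map. -/
noncomputable def orbitMap (f : End R V) (v : V) : R[X] →ₗ[R] V :=
  LinearMap.applyₗ v ∘ₗ (aeval f).toLinearMap

@[simp]
lemma orbitMap_apply (f : End R V) (v : V) (p : R[X]) : orbitMap f v p = aeval f p v :=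
  rfl

namespace IsCyclicVector

lemma orbitMap_surjective (hv : IsCyclicVector f v) : Function.Surjective (orbitMap f v) := by
  rw [← LinearMap.range_eq_top, eq_top_iff, ← hv, Submodule.span_le]
  rintro _ ⟨n, rfl⟩
  exact ⟨X ^ n, by simp⟩

lemma of_smul {c : R} (hv : IsCyclicVector f (c • v)) : IsCyclicVector f v := by
  rw [IsCyclicVector, eq_top_iff, ← hv, Submodule.span_le]
  rintro _ ⟨n, rfl⟩
  simpa only [map_smul, SetLike.mem_coe] using
    Submodule.smul_mem _ c (Submodule.subset_span (Set.mem_range_self n))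

lemma aeval_eq_zero (hv : IsCyclicVector f v) {p : R[X]} (hp : aeval f p v = 0) :
    aeval f p = 0 := by
  ext w
  obtain ⟨q, rfl⟩ := hv.orbitMap_surjective w
  rw [orbitMap_apply, ← End.mul_apply, ← map_mul, mul_comm, map_mul, End.mul_apply,
    hp, map_zero, LinearMap.zero_apply]

lemma eq_zero_of_intertwining (hv : IsCyclicVector f v) {S : V →ₗ[R] W}
    (hS : g ∘ₗ S = S ∘ₗ f) (hSv : S v = 0) : S = 0 := by
  refine LinearMap.ext_on_range hv fun n ↦ ?_
  rw [← LinearMap.comp_apply, ← End.commute_pow_left_of_commute hS n]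
  simp [hSv]

lemma exists_intertwining_apply_eq (hv : IsCyclicVector f v) {t : W}
    (ht : LinearMap.ker (orbitMap f v) ≤ LinearMap.ker (orbitMap g t)) :
    ∃ S : V →ₗ[R] W, g ∘ₗ S = S ∘ₗ f ∧ S v = t := by
  let S : V →ₗ[R] W := (LinearMap.ker (orbitMap f v)).liftQ (orbitMap g t) ht ∘ₗ
    ((orbitMap f v).quotKerEquivOfSurjective hv.orbitMap_surjective).symm
  have hS (p : R[X]) : S (aeval f p v) = aeval g p t := by
    have hp : (orbitMap f v).quotKerEquivOfSurjective hv.orbitMap_surjective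
        (Submodule.Quotient.mk p) = aeval f p v := rfl
    rw [LinearMap.comp_apply, LinearEquiv.coe_coe, ← hp, LinearEquiv.symm_apply_apply,
      Submodule.liftQ_apply, orbitMap_apply]
  refine ⟨S, LinearMap.ext fun w ↦ ?_, by simpa using hS 1⟩
  obtain ⟨p, rfl⟩ := hv.orbitMap_surjective w
  have hX := hS (X * p)
  simp only [map_mul, aeval_X, End.mul_apply] at hX
  simp only [LinearMap.comp_apply, orbitMap_apply, hS, hX]

lemma existsUnique_add_intertwining (hv : IsCyclicVector f v)
    (hg : ∀ p : R[X], aeval f p = 0 → aeval g p = 0) (T : V →ₗ[R] W) :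
    ∃! P : (V →ₗ[R] W) × (V →ₗ[R] W),
      P.1 v = 0 ∧ g ∘ₗ P.2 - P.2 ∘ₗ f = 0 ∧ T = P.1 + P.2 := by
  obtain ⟨S, hS, hSv⟩ := hv.exists_intertwining_apply_eq (g := g) (t := T v) fun p hp ↦ by
    simp [hg p (hv.aeval_eq_zero hp)]
  refine ⟨(T - S, S), ⟨by simp [hSv], sub_eq_zero.mpr hS, by simp⟩, ?_⟩
  rintro ⟨A, B⟩ ⟨hA, hB, rfl⟩
  have hBS : B - S = 0 := by
    refine hv.eq_zero_of_intertwining (g := g) ?_ (by simp_all)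
    rw [LinearMap.comp_sub, LinearMap.sub_comp, hS, sub_eq_zero.mp hB]
  obtain rfl := sub_eq_zero.mp hBS
  simp

end IsCyclicVector

end CyclicVector

section NilpotentCyclic

variable {K V : Type*} [Field K] [AddCommGroup V] [Module K V] {f : End K V} {v : V}

lemma IsCyclicVector.finrank_le_of_pow_eq_zero (hv : IsCyclicVector f v) {k : ℕ}
    (hk : f ^ k = 0) : finrank K V ≤ k := by
  have hspan : Submodule.span K (Set.range fun i : Fin k ↦ (f ^ (i : ℕ)) v) = ⊤ := by
    rw [eq_top_iff, ← hv, Submodule.span_le]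
    rintro _ ⟨n, rfl⟩
    obtain hn | hn := lt_or_ge n k
    · exact Submodule.subset_span ⟨⟨n, hn⟩, rfl⟩
    · simp [pow_eq_zero_of_le hn hk]
  rw [← finrank_top K V, ← hspan]
  exact (finrank_range_le_card _).trans_eq (Fintype.card_fin k)

lemma IsCyclicVector.X_pow_finrank_dvd (hv : IsCyclicVector f v) (hf : IsNilpotent f) {p : K[X]}
    (hp : aeval f p = 0) : X ^ finrank K V ∣ p := by
  obtain ⟨n, hn⟩ := hf
  have hdvd : minpoly K f ∣ X ^ n := minpoly.dvd K f (by simpa using hn)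
  obtain ⟨k, -, hk⟩ := (dvd_prime_pow prime_X n).mp hdvd
  have hfk : f ^ k = 0 := by simpa using (minpoly.dvd_iff (A := K) (x := f)).mp hk.dvd
  exact (pow_dvd_pow X (hv.finrank_le_of_pow_eq_zero hfk)).trans
    (hk.symm.dvd.trans (minpoly.dvd K f hp))

lemma pow_finrank_eq_zero_of_isNilpotent [FiniteDimensional K V] (hf : IsNilpotent f) :
    f ^ finrank K V = 0 := by
  simpa [hf.charpoly_eq_X_pow_finrank] using f.aeval_self_charpoly

end NilpotentCyclic

section Commutators

lemma commutator_pow_eq_smul {R A : Type*} [CommRing R] [Ring A] [Algebra R A] {h f : A} {c : R}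
    (hf : h * f - f * h = c • f) (n : ℕ) : h * f ^ n - f ^ n * h = (n * c) • f ^ n := by
  induction n with
  | zero => simp
  | succ n ih =>
    calc h * f ^ (n + 1) - f ^ (n + 1) * h
        = (h * f ^ n - f ^ n * h) * f + f ^ n * (h * f - f * h) := by
          rw [pow_succ]; noncomm_ring
      _ = ((n + 1 : ℕ) * c) • f ^ (n + 1) := by
          rw [ih, hf, smul_mul_assoc, mul_smul_comm, ← pow_succ, ← add_smul]
          push_cast
          ring_nf

lemma apply_pow_of_commutator_eq_smul {R V : Type*} [CommRing R] [AddCommGroup V] [Module R V]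
    {h f : End R V} {c μ : R} (hf : h * f - f * h = c • f) {w : V} (hw : h w = μ • w) (n : ℕ) :
    h ((f ^ n) w) = (μ + n * c) • (f ^ n) w := by
  have key := LinearMap.congr_fun (commutator_pow_eq_smul hf n) w
  simp only [LinearMap.sub_apply, End.mul_apply, hw, map_smul, LinearMap.smul_apply,
    sub_eq_iff_eq_add'] at key
  rw [key, add_smul]

lemma isNilpotent_of_commutator_eq_smul {K A : Type*} [Field K] [CharZero K] [Ring A] [Algebra K A]
    [FiniteDimensional K A] {h f : A} {c : K} (hc : c ≠ 0) (hf : h * f - f * h = c • f) :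
    IsNilpotent f := by
  by_contra hnil
  -- The powers of `f` would be eigenvectors of `ad h` for the distinct eigenvalues `n c`.
  let D : End K A := LinearMap.mulLeft K h - LinearMap.mulRight K h
  have hvec (n : ℕ) : D.HasEigenvector (n * c) (f ^ n) :=
    ⟨End.mem_eigenspace_iff.mpr (commutator_pow_eq_smul hf n), fun hn ↦ hnil ⟨n, hn⟩⟩
  have hinj : Function.Injective fun n : ℕ ↦ (n * c : K) := fun m n hmn ↦ by simpa [hc] using hmn
  have := (End.eigenvectors_linearIndependent' _ _ hinj _ hvec).finite
  exact not_finite ℕ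

lemma commutator_e_pow_succ_f {R A : Type*} [CommRing R] [Ring A] [Algebra R A] {e h f : A}
    (hf : h * f - f * h = (-2 : R) • f) (hef : e * f - f * e = h) (n : ℕ) :
    e * f ^ (n + 1) - f ^ (n + 1) * e = (n + 1 : R) • (f ^ n * h - (n : R) • f ^ n) := by
  induction n with
  | zero => simpa using hef
  | succ n ih =>
    have hhf : h * f = f * h + (-2 : R) • f := sub_eq_iff_eq_add'.mp hf
    calc e * f ^ (n + 2) - f ^ (n + 2) * e
        = (e * f ^ (n + 1) - f ^ (n + 1) * e) * f + f ^ (n + 1) * (e * f - f * e) := by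
          rw [pow_succ f (n + 1)]; noncomm_ring
      _ = (n + 1 : R) • (f ^ (n + 1) * h + (-2 : R) • f ^ (n + 1) - (n : R) • f ^ (n + 1))
            + f ^ (n + 1) * h := by
          rw [ih, hef, smul_mul_assoc, sub_mul, mul_assoc, hhf, mul_add, mul_smul_comm,
            smul_mul_assoc, ← mul_assoc, ← pow_succ]
      _ = ((n + 1 : ℕ) + 1 : R) • (f ^ (n + 1) * h - ((n + 1 : ℕ) : R) • f ^ (n + 1)) := by
          push_cast
          module

end Commutators

section PrimitiveVector

variable {R V : Type*} [CommRing R] [AddCommGroup V] [Module R V] {e h f : End R V} {w : V} {μ : R}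

/-- `w` is a primitive vector of weight `μ` for the operators `e` and `h` of an `sl₂`-action. This
is the operator form of `IsSl2Triple.HasPrimitiveVectorWith`, which excludes the trivial
representation because `IsSl2Triple` requires `h ≠ 0`. -/
structure IsPrimitiveVector (e h : End R V) (w : V) (μ : R) : Prop where
  ne_zero : w ≠ 0
  e_apply : e w = 0
  h_apply : h w = μ • w

lemma e_apply_pow_succ_f_of_e_apply_eq_zero (hf : h * f - f * h = (-2 : R) • f)
    (hef : e * f - f * e = h) (ew : e w = 0) (n : ℕ) :
    e ((f ^ (n + 1)) w) = (n + 1 : R) • (f ^ n) (h w - (n : R) • w) := by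
  have key := LinearMap.congr_fun (commutator_e_pow_succ_f hf hef n) w
  simpa [ew] using key

lemma IsPrimitiveVector.e_apply_pow_succ_f (hw : IsPrimitiveVector e h w μ)
    (hf : h * f - f * h = (-2 : R) • f) (hef : e * f - f * e = h) (n : ℕ) :
    e ((f ^ (n + 1)) w) = ((n + 1) * (μ - n)) • (f ^ n) w := by
  rw [e_apply_pow_succ_f_of_e_apply_eq_zero hf hef hw.e_apply, hw.h_apply, ← sub_smul,
    map_smul, smul_smul]

-- Since `0 = e (f ^ (n + 1) v) = (n + 1) f ^ n ((h - n) v)`, either `v` has weight `n` or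
-- `(h - n) v` is a nonzero vector of `ker e` killed by a smaller power of `f`.
lemma exists_isPrimitiveVector_of_pow_apply_eq_zero [IsDomain R] [CharZero R] [IsTorsionFree R V]
    (he : h * e - e * h = (2 : R) • e) (hf : h * f - f * h = (-2 : R) • f)
    (hef : e * f - f * e = h) {n : ℕ} {v : V} (hv : v ≠ 0) (ev : e v = 0) (hn : (f ^ n) v = 0) :
    ∃ w : V, ∃ N : ℕ, IsPrimitiveVector e h w (N : R) ∧ (f ^ (N + 1)) w = 0 := by
  induction n generalizing v with
  | zero => exact absurd hn hv
  | succ n ih =>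
    set u := h v - (n : R) • v with hu
    have eu : e u = 0 := by
      have key := LinearMap.congr_fun he v
      simpa [hu, ev] using key
    have fu : (f ^ n) u = 0 := by
      have key := e_apply_pow_succ_f_of_e_apply_eq_zero hf hef ev n
      rw [hn, map_zero, eq_comm, smul_eq_zero] at key
      exact key.resolve_left n.cast_add_one_ne_zero
    by_cases hu0 : u = 0
    · exact ⟨v, n, ⟨hv, ev, sub_eq_zero.mp hu0⟩, hn⟩
    · exact ih hu0 eu fu

lemma IsPrimitiveVector.isCyclicVector (hw : IsPrimitiveVector e h w μ)
    (hf : h * f - f * h = (-2 : R) • f) (hef : e * f - f * e = h)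
    (hirr : ∀ U : Submodule R V, U.map e ≤ U → U.map h ≤ U → U.map f ≤ U → U = ⊥ ∨ U = ⊤) :
    IsCyclicVector f w := by
  rw [IsCyclicVector]
  set U := Submodule.span R (Set.range fun n : ℕ ↦ (f ^ n) w)
  have hmem (n : ℕ) : (f ^ n) w ∈ U := Submodule.subset_span ⟨n, rfl⟩
  have he_map : U.map e ≤ U := by
    rw [Submodule.map_span_le]
    rintro _ ⟨_ | n, rfl⟩
    · simp [hw.e_apply]
    · rw [hw.e_apply_pow_succ_f hf hef]
      exact U.smul_mem _ (hmem n)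
  have hh_map : U.map h ≤ U := by
    rw [Submodule.map_span_le]
    rintro _ ⟨n, rfl⟩
    rw [apply_pow_of_commutator_eq_smul hf hw.h_apply]
    exact U.smul_mem _ (hmem n)
  have hf_map : U.map f ≤ U := by
    rw [Submodule.map_span_le]
    rintro _ ⟨n, rfl⟩
    simpa [pow_succ'] using hmem (n + 1)
  exact (hirr U he_map hh_map hf_map).resolve_left fun hbot ↦
    hw.ne_zero (by simpa [hbot] using hmem 0)

end PrimitiveVector

section HighestWeightVector

variable {K V : Type*} [Field K] [CharZero K] [AddCommGroup V] [Module K V]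
  [FiniteDimensional K V] {e h f : End K V}

-- All `f ^ n w` except `f ^ N w` are zero or in the range of `e`, which thus has codimension `≤ 1`.
lemma IsPrimitiveVector.finrank_ker_eq_one {w : V} {N : ℕ} (hw : IsPrimitiveVector e h w (N : K))
    (hf : h * f - f * h = (-2 : K) • f) (hef : e * f - f * e = h) (hcyc : IsCyclicVector f w)
    (hN : (f ^ (N + 1)) w = 0) : finrank K (LinearMap.ker e) = 1 := by
  have htop : LinearMap.range e ⊔ Submodule.span K {(f ^ N) w} = ⊤ := by
    rw [eq_top_iff, ← hcyc, Submodule.span_le]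
    rintro _ ⟨n, rfl⟩
    obtain hn | rfl | hn := lt_trichotomy n N
    · have hc : ((n + 1) * (N - n) : K) ≠ 0 :=
        mul_ne_zero n.cast_add_one_ne_zero (sub_ne_zero.mpr (by exact_mod_cast hn.ne'))
      refine Submodule.mem_sup_left ((Submodule.smul_mem_iff _ hc).mp ?_)
      exact ⟨(f ^ (n + 1)) w, hw.e_apply_pow_succ_f hf hef n⟩
    · exact Submodule.mem_sup_right (Submodule.mem_span_singleton_self _)
    · simp [End.pow_map_zero_of_le hn hN]
  have hsum := Submodule.finrank_add_le_finrank_add_finrank (LinearMap.range e)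
    (Submodule.span K {(f ^ N) w})
  rw [htop, finrank_top] at hsum
  have hline : finrank K (Submodule.span K {(f ^ N) w}) ≤ 1 := by
    simpa using finrank_span_le_card ({(f ^ N) w} : Set V)
  have hker : 0 < finrank K (LinearMap.ker e) :=
    finrank_pos_iff_exists_ne_zero.mpr ⟨⟨w, hw.e_apply⟩, fun h0 ↦
      hw.ne_zero (congrArg Subtype.val h0)⟩
  have hrank := e.finrank_range_add_finrank_ker
  lia

lemma isCyclicVector_of_e_apply_eq_zero (he : h * e - e * h = (2 : K) • e)
    (hf : h * f - f * h = (-2 : K) • f) (hef : e * f - f * e = h)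
    (hirr : ∀ U : Submodule K V, U.map e ≤ U → U.map h ≤ U → U.map f ≤ U → U = ⊥ ∨ U = ⊤)
    {v : V} (hv : v ≠ 0) (ev : e v = 0) : IsCyclicVector f v := by
  obtain ⟨n, hn⟩ := isNilpotent_of_commutator_eq_smul (by norm_num) hf
  obtain ⟨w, N, hw, hN⟩ :=
    exists_isPrimitiveVector_of_pow_apply_eq_zero he hf hef (n := n) hv ev (by simp [hn])
  have hcyc := hw.isCyclicVector hf hef hirr
  have hv' : (⟨v, ev⟩ : LinearMap.ker e) ≠ 0 := fun h0 ↦ hv (congrArg Subtype.val h0)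
  obtain ⟨c, hc⟩ := exists_smul_eq_of_finrank_eq_one (hw.finrank_ker_eq_one hf hef hcyc hN) hv'
    ⟨w, hw.e_apply⟩
  obtain rfl : c • v = w := congrArg Subtype.val hc
  exact hcyc.of_smul

end HighestWeightVector

theorem hom_decomposition_general {K V W : Type*} [Field K] [CharZero K]
    [AddCommGroup V] [Module K V] [FiniteDimensional K V] [AddCommGroup W] [Module K W]
    {e h f : End K V} {g : End K W} (he : h * e - e * h = (2 : K) • e)
    (hf : h * f - f * h = (-2 : K) • f) (hef : e * f - f * e = h)
    (hirr : ∀ U : Submodule K V, U.map e ≤ U → U.map h ≤ U → U.map f ≤ U → U = ⊥ ∨ U = ⊤)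
    (hg : g ^ finrank K V = 0) {v : V} (hv : v ≠ 0) (ev : e v = 0) :
    ∀ T : V →ₗ[K] W, ∃! P : (V →ₗ[K] W) × (V →ₗ[K] W),
      P.1 v = 0 ∧ g ∘ₗ P.2 - P.2 ∘ₗ f = 0 ∧ T = P.1 + P.2 := by
  have hcyc := isCyclicVector_of_e_apply_eq_zero he hf hef hirr hv ev
  refine hcyc.existsUnique_add_intertwining fun p hp ↦ ?_
  have hdvd := hcyc.X_pow_finrank_dvd (isNilpotent_of_commutator_eq_smul (by norm_num) hf) hp
  exact aeval_eq_zero_of_dvd_aeval_eq_zero hdvd (by simpa using hg)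

/-- for irreducible finite-dimensional `sl₂`-modules `σ`, `τ` with
`dim σ ≥ dim τ ≥ 1`, a highest-weight vector `v₊ ∈ σ`, the space `L = Hom(σ, τ)`
is the direct sum of `L⁰ = {T : T v₊ = 0}` and `L^f = {T : f∘T - T∘f = 0}`
(every `T` decomposes uniquely as a sum of one element of each). -/
theorem hom_decomposition
    (σ : Type*) [AddCommGroup σ] [Module ℂ σ] [FiniteDimensional ℂ σ]
    (τ : Type*) [AddCommGroup τ] [Module ℂ τ] [FiniteDimensional ℂ τ]
    (eσ hσ fσ : Module.End ℂ σ) (eτ hτ fτ : Module.End ℂ τ)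
    (hσe : hσ * eσ - eσ * hσ = (2 : ℂ) • eσ)
    (hσf : hσ * fσ - fσ * hσ = (-2 : ℂ) • fσ)
    (hσh : eσ * fσ - fσ * eσ = hσ)
    (hτe : hτ * eτ - eτ * hτ = (2 : ℂ) • eτ)
    (hτf : hτ * fτ - fτ * hτ = (-2 : ℂ) • fτ)
    (hτh : eτ * fτ - fτ * eτ = hτ)
    (hirrσ : ∀ W : Submodule ℂ σ,
      W.map eσ ≤ W → W.map hσ ≤ W → W.map fσ ≤ W → W = ⊥ ∨ W = ⊤)
    (hirrτ : ∀ W : Submodule ℂ τ,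
      W.map eτ ≤ W → W.map hτ ≤ W → W.map fτ ≤ W → W = ⊥ ∨ W = ⊤)
    (hdim : Module.finrank ℂ τ ≤ Module.finrank ℂ σ)
    (hdim1 : 1 ≤ Module.finrank ℂ τ)
    (vp : σ) (hvp : vp ≠ 0) (hevp : eσ vp = 0) :
    ∀ T : σ →ₗ[ℂ] τ, ∃! P : (σ →ₗ[ℂ] τ) × (σ →ₗ[ℂ] τ),
      P.1 vp = 0 ∧ fτ ∘ₗ P.2 - P.2 ∘ₗ fσ = 0 ∧ T = P.1 + P.2 := by
  exact hom_decomposition_general hσe hσf hσh hirrσ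
    (pow_eq_zero_of_le hdim (pow_finrank_eq_zero_of_isNilpotent
      (isNilpotent_of_commutator_eq_smul (by norm_num) hτf))) hvp hevp
end

section
/- Let V be a finite-dimensional complex vector space, let S ∈ End(V) be diagonalizable, and let f ∈ End(V) be nilpotent with S∘f − f∘S = −2f. Then there exist h', e' ∈ End(V) such that (e', h', f) is an sl₂-triple of endomorphisms, i.e. h'∘e' − e'∘h' = 2e', h'∘f − f∘h' = −2f, e'∘f − f∘e' = h', and moreover h' commutes with S. -/
/-!
Let `f ^ (n + 1) = 0`. Invariant complements for `S` provide a generalized inverse of `f ^ n` that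
shifts the weights of `S` opposite to `f ^ n`. It can be corrected to an `A` such that
`A * f ^ n * A = A` and `A * f ^ k * A = 0` for `k < n`; the elements `f ^ i * A * f ^ (n - j)` with
`i, j ≤ n` then multiply like matrix units, and the usual formulas for the irreducible
representation of `sl₂` of dimension `n + 1` give a triple on the Jordan blocks of `f` of size
`n + 1`. The projection onto these blocks commutes with `f` and `S`, and `f ^ n` vanishes on its
complement, so one proceeds by induction on `n`. The coefficients in these formulas are integers,
hence nothing is ever divided.
-/

open Finset

section JordanBlock

variable {R : Type*} [Ring R]

/-- `A` generates the Jordan blocks of size `n + 1` of `f`. If `f` is an endomorphism, this means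
that `A` inverts `f ^ n` on the span of the last vectors of these blocks and vanishes on the other
vectors of a Jordan basis. -/
structure IsJordanGenerator (f A : R) (n : ℕ) : Prop where
  pow_succ_mul : f ^ (n + 1) * A = 0
  mul_pow_succ : A * f ^ (n + 1) = 0
  mul_pow_mul_self : A * f ^ n * A = A
  mul_pow_mul_of_lt : ∀ k < n, A * f ^ k * A = 0

/-- The `(i, j)` matrix unit, for `i, j ≤ n`, on the Jordan blocks of `f` of size `n + 1` generated
by `A`. Indices start at `0`, and `f` maps the `i`-th basis vector of a block to the next one. -/
def jordanUnit (f A : R) (n i j : ℕ) : R := f ^ i * A * f ^ (n - j)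

/-- The diagonal matrix with entries `c 0, …, c n` on the Jordan blocks of `f` generated by `A`. -/
def jordanDiag (f A : R) (n : ℕ) (c : ℕ → ℤ) : R :=
  ∑ i ∈ range (n + 1), c i • jordanUnit f A n i i

/-- The raising operator of the irreducible representation of `sl₂` of dimension `n + 1`, in the
basis in which the lowering operator is the Jordan block `f`. -/
def jordanRaise (f A : R) (n : ℕ) : R :=
  ∑ i ∈ range n, ((i + 1) * (n - i) : ℤ) • jordanUnit f A n i (i + 1)

variable {f A E : R} {n : ℕ}

lemma self_mul_jordanUnit (i j : ℕ) : f * jordanUnit f A n i j = jordanUnit f A n (i + 1) j := by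
  simp only [jordanUnit, pow_succ', mul_assoc]

lemma jordanUnit_succ_mul_self (i : ℕ) {j : ℕ} (hj : j < n) :
    jordanUnit f A n i (j + 1) * f = jordanUnit f A n i j := by
  rw [jordanUnit, mul_assoc, ← pow_succ, jordanUnit, show n - (j + 1) + 1 = n - j by lia]

lemma jordanRaise_mul_self_sub :
    jordanRaise f A n * f - f * jordanRaise f A n = jordanDiag f A n fun i ↦ n - 2 * i := by
  have raise_mul_self : jordanRaise f A n * f
      = ∑ i ∈ range (n + 1), ((i + 1) * (n - i) : ℤ) • jordanUnit f A n i i := by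
    rw [sum_range_succ, sub_self, mul_zero, zero_smul, add_zero, jordanRaise, sum_mul]
    refine sum_congr rfl fun i hi ↦ ?_
    rw [smul_mul_assoc, jordanUnit_succ_mul_self i (mem_range.1 hi)]
  have self_mul_raise : f * jordanRaise f A n
      = ∑ i ∈ range (n + 1), (i * (n - i + 1) : ℤ) • jordanUnit f A n i i := by
    rw [sum_range_succ', Nat.cast_zero, zero_mul, zero_smul, add_zero, jordanRaise, mul_sum]
    refine sum_congr rfl fun i _ ↦ ?_
    rw [mul_smul_comm, self_mul_jordanUnit]
    congr 1
    push_cast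
    ring
  rw [raise_mul_self, self_mul_raise, ← sum_sub_distrib, jordanDiag]
  refine sum_congr rfl fun i _ ↦ ?_
  rw [← sub_smul]
  congr 1
  ring

lemma mul_jordanDiag_of_commute (hEf : Commute E f) (hEA : E * A = A) (c : ℕ → ℤ) :
    E * jordanDiag f A n c = jordanDiag f A n c := by
  rw [jordanDiag, mul_sum]
  refine sum_congr rfl fun i _ ↦ ?_
  rw [mul_smul_comm, jordanUnit, ← mul_assoc, ← mul_assoc, (hEf.pow_right i).eq, mul_assoc (f ^ i),
    hEA]

lemma jordanDiag_mul_of_commute (hEf : Commute E f) (hAE : A * E = A) (c : ℕ → ℤ) :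
    jordanDiag f A n c * E = jordanDiag f A n c := by
  rw [jordanDiag, sum_mul]
  refine sum_congr rfl fun i _ ↦ ?_
  rw [smul_mul_assoc, jordanUnit, mul_assoc _ _ E, ← (hEf.pow_right _).eq, ← mul_assoc,
    mul_assoc _ A, hAE]

namespace IsJordanGenerator

lemma mul_pow_mul (hA : IsJordanGenerator f A n) (k : ℕ) :
    A * f ^ k * A = if k = n then A else 0 := by
  split_ifs with hk
  · rw [hk, hA.mul_pow_mul_self]
  rcases lt_or_gt_of_ne hk with hk | hk
  · exact hA.mul_pow_mul_of_lt k hk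
  · rw [← Nat.add_sub_of_le hk, pow_add, ← mul_assoc, hA.mul_pow_succ, zero_mul, zero_mul]

lemma jordanUnit_mul_jordanUnit (hA : IsJordanGenerator f A n) (i : ℕ) {j : ℕ} (hj : j ≤ n)
    (k l : ℕ) :
    jordanUnit f A n i j * jordanUnit f A n k l = if j = k then jordanUnit f A n i l else 0 := by
  calc jordanUnit f A n i j * jordanUnit f A n k l
      = f ^ i * (A * f ^ (n - j + k) * A) * f ^ (n - l) := by
        simp only [jordanUnit, pow_add, mul_assoc]
    _ = if j = k then jordanUnit f A n i l else 0 := by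
        simp only [hA.mul_pow_mul, show n - j + k = n ↔ j = k by lia]
        split_ifs <;> simp [jordanUnit]

lemma jordanDiag_mul_jordanUnit (hA : IsJordanGenerator f A n) (c : ℕ → ℤ) {i : ℕ} (hi : i ≤ n)
    (j : ℕ) : jordanDiag f A n c * jordanUnit f A n i j = c i • jordanUnit f A n i j := by
  rw [jordanDiag, sum_mul, sum_eq_single_of_mem i (mem_range_succ_iff.2 hi)]
  · rw [smul_mul_assoc, hA.jordanUnit_mul_jordanUnit _ hi, if_pos rfl]
  · intro k hk hki
    rw [smul_mul_assoc, hA.jordanUnit_mul_jordanUnit _ (mem_range_succ_iff.1 hk), if_neg hki,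
      smul_zero]

lemma jordanUnit_mul_jordanDiag (hA : IsJordanGenerator f A n) (c : ℕ → ℤ) (i : ℕ) {j : ℕ}
    (hj : j ≤ n) : jordanUnit f A n i j * jordanDiag f A n c = c j • jordanUnit f A n i j := by
  rw [jordanDiag, mul_sum, sum_eq_single_of_mem j (mem_range_succ_iff.2 hj)]
  · rw [mul_smul_comm, hA.jordanUnit_mul_jordanUnit _ hj, if_pos rfl]
  · intro k _ hkj
    rw [mul_smul_comm, hA.jordanUnit_mul_jordanUnit _ hj, if_neg hkj.symm, smul_zero]

lemma jordanDiag_mul_jordanDiag (hA : IsJordanGenerator f A n) (c d : ℕ → ℤ) :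
    jordanDiag f A n c * jordanDiag f A n d = jordanDiag f A n (c * d) := by
  nth_rw 2 3 [jordanDiag]
  rw [mul_sum]
  refine sum_congr rfl fun i hi ↦ ?_
  rw [mul_smul_comm, hA.jordanDiag_mul_jordanUnit c (mem_range_succ_iff.1 hi), smul_smul, mul_comm,
    Pi.mul_apply]

lemma jordanDiag_mul_jordanRaise (hA : IsJordanGenerator f A n) (c : ℕ → ℤ) :
    jordanDiag f A n c * jordanRaise f A n
      = ∑ i ∈ range n, (c i * ((i + 1) * (n - i))) • jordanUnit f A n i (i + 1) := by
  rw [jordanRaise, mul_sum]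
  refine sum_congr rfl fun i hi ↦ ?_
  rw [mul_smul_comm, hA.jordanDiag_mul_jordanUnit c (mem_range.1 hi).le, smul_smul, mul_comm]

lemma jordanRaise_mul_jordanDiag (hA : IsJordanGenerator f A n) (c : ℕ → ℤ) :
    jordanRaise f A n * jordanDiag f A n c
      = ∑ i ∈ range n, (c (i + 1) * ((i + 1) * (n - i))) • jordanUnit f A n i (i + 1) := by
  rw [jordanRaise, sum_mul]
  refine sum_congr rfl fun i hi ↦ ?_
  rw [smul_mul_assoc, hA.jordanUnit_mul_jordanDiag c i (mem_range.1 hi), smul_smul, mul_comm]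

lemma jordanDiag_mul_self (hA : IsJordanGenerator f A n) (c : ℕ → ℤ) :
    jordanDiag f A n c * f = ∑ i ∈ range n, c (i + 1) • jordanUnit f A n (i + 1) i := by
  have first_row : jordanUnit f A n 0 0 * f = 0 := by
    rw [jordanUnit, mul_assoc, Nat.sub_zero, ← pow_succ, mul_assoc, hA.mul_pow_succ, mul_zero]
  rw [jordanDiag, sum_mul, sum_range_succ', smul_mul_assoc, first_row, smul_zero, add_zero]
  refine sum_congr rfl fun i hi ↦ ?_
  rw [smul_mul_assoc, jordanUnit_succ_mul_self _ (mem_range.1 hi)]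

lemma self_mul_jordanDiag (hA : IsJordanGenerator f A n) (c : ℕ → ℤ) :
    f * jordanDiag f A n c = ∑ i ∈ range n, c i • jordanUnit f A n (i + 1) i := by
  have last_column : jordanUnit f A n (n + 1) n = 0 := by
    rw [jordanUnit, hA.pow_succ_mul, zero_mul]
  simp only [jordanDiag, mul_sum, mul_smul_comm, self_mul_jordanUnit]
  rw [sum_range_succ, last_column, smul_zero, add_zero]

lemma isIdempotentElem_jordanDiag_one (hA : IsJordanGenerator f A n) :
    IsIdempotentElem (jordanDiag f A n 1) := by
  rw [IsIdempotentElem, hA.jordanDiag_mul_jordanDiag, mul_one]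

lemma commute_jordanDiag_one (hA : IsJordanGenerator f A n) : Commute (jordanDiag f A n 1) f := by
  rw [commute_iff_eq, hA.jordanDiag_mul_self, hA.self_mul_jordanDiag]
  rfl

lemma pow_mul_jordanDiag_one (hA : IsJordanGenerator f A n) :
    f ^ n * jordanDiag f A n 1 = f ^ n * A * f ^ n := by
  rw [jordanDiag, mul_sum, sum_eq_single_of_mem 0 (mem_range_succ_iff.2 n.zero_le)]
  · simp [jordanUnit, mul_assoc]
  · intro i _ hi
    obtain ⟨k, rfl⟩ := Nat.exists_eq_succ_of_ne_zero hi
    have : f ^ n * f ^ (k + 1) * A = 0 := by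
      rw [← pow_add, show n + (k + 1) = k + (n + 1) by lia, pow_add, mul_assoc, hA.pow_succ_mul,
        mul_zero]
    rw [mul_smul_comm, jordanUnit, ← mul_assoc, ← mul_assoc, this, zero_mul, smul_zero]

end IsJordanGenerator

end JordanBlock

section Triple

variable {R : Type*} [Ring R] {E P Q h e f h' e' x y : R}

/-- `(e, h, f)` restricts to an `sl₂`-triple on the summand cut out by an idempotent `E` commuting
with `f`, and `e` and `h` vanish on the complementary summand. Unlike in `IsSl2Triple`, the triple
may be zero. -/
structure IsSl2TripleOn (E h e f : R) : Prop where
  left_h : E * h = h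
  right_h : h * E = h
  left_e : E * e = e
  right_e : e * E = e
  lie_h_e : h * e - e * h = 2 • e
  lie_h_f : h * f - f * h = -(2 • (f * E))
  lie_e_f : e * f - f * e = h

lemma add_mul_add_of_orthogonal (hPQ : P * Q = 0) (hQP : Q * P = 0) (hx : P * x = x)
    (hy : Q * y = y) : (P + Q) * (x + y) = x + y := by
  have hQx : Q * x = 0 := by rw [← hx, ← mul_assoc, hQP, zero_mul]
  have hPy : P * y = 0 := by rw [← hy, ← mul_assoc, hPQ, zero_mul]
  rw [add_mul, mul_add, mul_add, hx, hy, hQx, hPy, add_zero, zero_add]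

lemma add_mul_add_of_orthogonal' (hPQ : P * Q = 0) (hQP : Q * P = 0) (hx : x * P = x)
    (hy : y * Q = y) : (x + y) * (P + Q) = x + y := by
  have hxQ : x * Q = 0 := by rw [← hx, mul_assoc, hPQ, mul_zero]
  have hyP : y * P = 0 := by rw [← hy, mul_assoc, hQP, mul_zero]
  rw [add_mul, mul_add, mul_add, hx, hy, hxQ, hyP, add_zero, zero_add]

lemma mul_eq_zero_of_orthogonal (hPQ : P * Q = 0) (hx : x * P = x) (hy : Q * y = y) :
    x * y = 0 := by
  rw [← hx, ← hy, mul_assoc, ← mul_assoc P, hPQ, zero_mul, mul_zero]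

lemma IsSl2TripleOn.add (hPQ : P * Q = 0) (hQP : Q * P = 0) (ht : IsSl2TripleOn P h e f)
    (ht' : IsSl2TripleOn Q h' e' f) : IsSl2TripleOn (P + Q) (h + h') (e + e') f where
  left_h := add_mul_add_of_orthogonal hPQ hQP ht.left_h ht'.left_h
  right_h := add_mul_add_of_orthogonal' hPQ hQP ht.right_h ht'.right_h
  left_e := add_mul_add_of_orthogonal hPQ hQP ht.left_e ht'.left_e
  right_e := add_mul_add_of_orthogonal' hPQ hQP ht.right_e ht'.right_e
  lie_h_e := by
    have hhe' : h * e' = 0 := mul_eq_zero_of_orthogonal hPQ ht.right_h ht'.left_e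
    have hh'e : h' * e = 0 := mul_eq_zero_of_orthogonal hQP ht'.right_h ht.left_e
    have heh' : e * h' = 0 := mul_eq_zero_of_orthogonal hPQ ht.right_e ht'.left_h
    have he'h : e' * h = 0 := mul_eq_zero_of_orthogonal hQP ht'.right_e ht.left_h
    rw [smul_add, ← ht.lie_h_e, ← ht'.lie_h_e]
    simp only [add_mul, mul_add, hhe', hh'e, heh', he'h]
    abel
  lie_h_f := by
    rw [mul_add f P, smul_add, neg_add, ← ht.lie_h_f, ← ht'.lie_h_f, add_mul, mul_add]
    abel
  lie_e_f := by rw [add_mul, mul_add, add_sub_add_comm, ht.lie_e_f, ht'.lie_e_f]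

lemma IsJordanGenerator.isSl2TripleOn {A : R} {n : ℕ} (hA : IsJordanGenerator f A n) :
    IsSl2TripleOn (jordanDiag f A n 1) (jordanDiag f A n fun i ↦ n - 2 * i)
      (jordanRaise f A n) f where
  left_h := by rw [hA.jordanDiag_mul_jordanDiag, one_mul]
  right_h := by rw [hA.jordanDiag_mul_jordanDiag, mul_one]
  left_e := by rw [hA.jordanDiag_mul_jordanRaise]; simp only [Pi.one_apply, one_mul, jordanRaise]
  right_e := by rw [hA.jordanRaise_mul_jordanDiag]; simp only [Pi.one_apply, one_mul, jordanRaise]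
  lie_h_e := by
    rw [hA.jordanDiag_mul_jordanRaise, hA.jordanRaise_mul_jordanDiag, ← sum_sub_distrib,
      jordanRaise, smul_sum]
    refine sum_congr rfl fun i _ ↦ ?_
    rw [← sub_smul, ← natCast_zsmul, smul_smul]
    congr 1
    push_cast
    ring
  lie_h_f := by
    rw [hA.jordanDiag_mul_self, hA.self_mul_jordanDiag, hA.self_mul_jordanDiag, ← sum_sub_distrib,
      smul_sum, ← sum_neg_distrib]
    refine sum_congr rfl fun i _ ↦ ?_
    rw [← sub_smul, ← natCast_zsmul, smul_smul, ← neg_smul]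
    congr 1
    push_cast
    simp only [Pi.one_apply]
    ring
  lie_e_f := jordanRaise_mul_self_sub

end Triple

section GeneralizedInverse

variable {K R : Type*} [CommRing K] [Ring R] [Algebra K R] {S : R}

/-- The elements of weight `a` under the adjoint action of `S`, which is written as left minus right
multiplication because the commutator bracket of an associative ring is not a global instance. -/
abbrev adEigenspace (S : R) (a : K) : Submodule K R :=
  Module.End.eigenspace (LinearMap.mulLeft K S - LinearMap.mulRight K S) a

lemma mem_adEigenspace_iff {x : R} {a : K} : x ∈ adEigenspace S a ↔ S * x - x * S = a • x := by
  rw [Module.End.mem_eigenspace_iff, LinearMap.sub_apply, LinearMap.mulLeft_apply,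
    LinearMap.mulRight_apply]

lemma mem_adEigenspace_zero_iff {x : R} : x ∈ adEigenspace S (0 : K) ↔ Commute x S := by
  rw [mem_adEigenspace_iff, zero_smul, sub_eq_zero, eq_comm, commute_iff_eq]

lemma mul_mem_adEigenspace {x y : R} {a b : K} (hx : x ∈ adEigenspace S a)
    (hy : y ∈ adEigenspace S b) : x * y ∈ adEigenspace S (a + b) := by
  rw [mem_adEigenspace_iff] at *
  calc S * (x * y) - x * y * S = (S * x - x * S) * y + x * (S * y - y * S) := by noncomm_ring
    _ = (a + b) • (x * y) := by rw [hx, hy, smul_mul_assoc, mul_smul_comm, add_smul]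

lemma pow_mem_adEigenspace {x : R} {a : K} (hx : x ∈ adEigenspace S a) (k : ℕ) :
    x ^ k ∈ adEigenspace S (k * a) := by
  induction k with
  | zero => simp
  | succ k ih =>
    rw [pow_succ, Nat.cast_succ, add_one_mul]
    exact mul_mem_adEigenspace ih hx

lemma commute_jordanDiag {f A : R} {n : ℕ} {a : K} (hf : f ∈ adEigenspace S a)
    (hA : A ∈ adEigenspace S (-(n * a))) (c : ℕ → ℤ) : Commute (jordanDiag f A n c) S := by
  refine Commute.sum_left _ _ _ fun i hi ↦ Commute.smul_left ?_ _
  have hi : i ≤ n := mem_range_succ_iff.1 hi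
  have hw : i * a + -(n * a) + (n - i : ℕ) * a = 0 := by
    rw [Nat.cast_sub hi]
    ring
  rw [← mem_adEigenspace_zero_iff (K := K), ← hw]
  exact mul_mem_adEigenspace (mul_mem_adEigenspace (pow_mem_adEigenspace hf i) hA)
    (pow_mem_adEigenspace hf (n - i))

/-- `A` is a reflexive generalized inverse of `g * E` in the corner ring `E * R * E`, where `E` is
an idempotent commuting with `g`. -/
structure IsReflexiveInverseOn (E g A : R) : Prop where
  left : E * A = A
  right : A * E = A
  mul_mul_self : A * g * A = A
  self_mul_mul : g * A * g = g * E

lemma IsReflexiveInverseOn.mul_left_eq_zero {E g A x : R} (hA : IsReflexiveInverseOn E g A)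
    (hx : x * E = 0) : x * A = 0 := by
  rw [← hA.left, ← mul_assoc, hx, zero_mul]

lemma IsReflexiveInverseOn.mul_right_eq_zero {E g A x : R} (hA : IsReflexiveInverseOn E g A)
    (hEx : Commute E x) (hx : x * E = 0) : A * x = 0 := by
  rw [← hA.right, mul_assoc, hEx.eq, hx, mul_zero]

variable {E f : R} {n : ℕ} {c : K}

lemma mul_compression_mul {g B : R} (hE : IsIdempotentElem E) (hEg : Commute E g)
    (hgB : g * B * g = g) : g * (E * B * E) * g = g * E :=
  calc g * (E * B * E) * g = (g * E) * B * (E * g) := by simp only [mul_assoc]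
    _ = (E * g) * B * (g * E) := by rw [hEg.eq]
    _ = E * (g * B * g) * E := by simp only [mul_assoc]
    _ = g * E := by rw [hgB, hEg.eq, mul_assoc, hE.eq]

lemma isReflexiveInverseOn_mul_mul {g C : R} (hEC : E * C = C) (hCE : C * E = C)
    (hgC : g * C * g = g * E) : IsReflexiveInverseOn E g (C * g * C) where
  left := by rw [← mul_assoc, ← mul_assoc, hEC]
  right := by rw [mul_assoc, hCE]
  mul_mul_self := by
    calc C * g * C * g * (C * g * C) = C * (g * C * g) * C * g * C := by simp only [mul_assoc]
      _ = C * g * (E * C) * g * C := by rw [hgC]; simp only [mul_assoc]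
      _ = C * (g * C * g) * C := by rw [hEC]; simp only [mul_assoc]
      _ = C * g * C := by rw [hgC]; simp only [mul_assoc, hEC]
  self_mul_mul := by
    calc g * (C * g * C) * g = (g * C * g) * C * g := by simp only [mul_assoc]
      _ = g * E := by rw [hgC, mul_assoc g E C, hEC, hgC]

lemma exists_isReflexiveInverseOn {g B : R} {a b : K} (hE : IsIdempotentElem E)
    (hEg : Commute E g) (hES : Commute E S) (hgS : g ∈ adEigenspace S a)
    (hB : B ∈ adEigenspace S b) (hab : a + b = 0) (hgB : g * B * g = g) :
    ∃ A ∈ adEigenspace S b, IsReflexiveInverseOn E g A := by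
  have hE₀ : E ∈ adEigenspace S (0 : K) := mem_adEigenspace_zero_iff.2 hES
  have hEBE : E * B * E ∈ adEigenspace S b := by
    simpa using mul_mem_adEigenspace (mul_mem_adEigenspace hE₀ hB) hE₀
  refine ⟨E * B * E * g * (E * B * E), ?_, isReflexiveInverseOn_mul_mul ?_ ?_
    (mul_compression_mul hE hEg hgB)⟩
  · have := mul_mem_adEigenspace (mul_mem_adEigenspace hEBE hgS) hEBE
    rwa [show b + a + b = b by rw [add_assoc, hab, add_zero]] at this
  · rw [← mul_assoc, ← mul_assoc, hE.eq]
  · rw [mul_assoc, hE.eq]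

/-- The correction of a reflexive inverse `A` of `f ^ (j + m)` that kills `A * f ^ j * A` and
leaves `A * f ^ k * A` unchanged for `k > j`. -/
def jordanCorrection (f A : R) (j m : ℕ) : R := A - A * f ^ j * A * f ^ m

section Correction

variable {A : R} {j m : ℕ}

lemma mul_jordanCorrection (x : R) :
    x * jordanCorrection f A j m = x * A - x * A * f ^ j * A * f ^ m := by
  simp only [jordanCorrection, mul_sub, mul_assoc]

lemma jordanCorrection_mul_pow_mul_of_lt (hfA : f ^ (j + m + 1) * A = 0) {k : ℕ} (hk : j < k) :
    jordanCorrection f A j m * f ^ k * A = A * f ^ k * A := by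
  have : f ^ (m + k) * A = 0 := pow_mul_eq_zero_of_le (by lia) hfA
  calc jordanCorrection f A j m * f ^ k * A
      = A * f ^ k * A - A * f ^ j * A * (f ^ (m + k) * A) := by
        rw [jordanCorrection, pow_add]; noncomm_ring
    _ = A * f ^ k * A := by rw [this, mul_zero, sub_zero]

lemma jordanCorrection_mul_pow_mul (hA : A * f ^ (j + m) * A = A) :
    jordanCorrection f A j m * f ^ j * A = 0 :=
  calc jordanCorrection f A j m * f ^ j * A
      = A * f ^ j * A - A * f ^ j * (A * f ^ (j + m) * A) := by
        rw [jordanCorrection, add_comm j m, pow_add]; noncomm_ring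
    _ = 0 := by rw [hA, sub_self]

lemma isReflexiveInverseOn_jordanCorrection (hEf : Commute E f) (hfE : f ^ (j + m + 1) * E = 0)
    (hm : 0 < m) (hA : IsReflexiveInverseOn E (f ^ (j + m)) A) :
    IsReflexiveInverseOn E (f ^ (j + m)) (jordanCorrection f A j m) where
  left := by rw [mul_jordanCorrection, hA.left, jordanCorrection]
  right := by
    rw [jordanCorrection, sub_mul, hA.right, mul_assoc _ _ E, ← (hEf.pow_right m).eq,
      ← mul_assoc, mul_assoc _ A E, hA.right]
  mul_mul_self := by
    rw [mul_jordanCorrection, jordanCorrection_mul_pow_mul_of_lt (hA.mul_left_eq_zero hfE) (by lia),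
      hA.mul_mul_self, jordanCorrection]
  self_mul_mul := by
    have : A * f ^ (m + (j + m)) = 0 := by
      rw [show m + (j + m) = j + m + 1 + (m - 1) by lia, pow_add, ← mul_assoc,
        hA.mul_right_eq_zero (hEf.pow_right _) hfE, zero_mul]
    calc f ^ (j + m) * jordanCorrection f A j m * f ^ (j + m)
        = f ^ (j + m) * A * f ^ (j + m)
            - f ^ (j + m) * A * f ^ j * (A * f ^ (m + (j + m))) := by
          rw [jordanCorrection, pow_add f m]; noncomm_ring
      _ = f ^ (j + m) * E := by rw [this, mul_zero, sub_zero, hA.self_mul_mul]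

lemma jordanCorrection_mem_adEigenspace (hf : f ∈ adEigenspace S c)
    (hA : A ∈ adEigenspace S (-((j + m : ℕ) * c))) :
    jordanCorrection f A j m ∈ adEigenspace S (-((j + m : ℕ) * c)) := by
  refine sub_mem hA ?_
  have := mul_mem_adEigenspace (mul_mem_adEigenspace (mul_mem_adEigenspace hA
    (pow_mem_adEigenspace hf j)) hA) (pow_mem_adEigenspace hf m)
  convert this using 2
  push_cast
  ring

end Correction

lemma exists_isReflexiveInverseOn_mul_pow_mul_eq_zero {A : R} (hEf : Commute E f)
    (hfE : f ^ (n + 1) * E = 0) (hfS : f ∈ adEigenspace S c)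
    (hAS : A ∈ adEigenspace S (-(n * c))) (hA : IsReflexiveInverseOn E (f ^ n) A) (m : ℕ) :
    ∃ A' ∈ adEigenspace S (-(n * c)), IsReflexiveInverseOn E (f ^ n) A' ∧
      ∀ k < n, n ≤ k + m → A' * f ^ k * A' = 0 := by
  induction m with
  | zero => exact ⟨A, hAS, hA, fun k _ _ ↦ by lia⟩
  | succ m ih =>
    obtain ⟨B, hBS, hB, hBf⟩ := ih
    obtain hnm | ⟨j, rfl⟩ : n ≤ m ∨ ∃ j, n = j + (m + 1) :=
      (le_or_gt n m).imp_right fun hmn ↦ ⟨n - (m + 1), by lia⟩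
    · exact ⟨B, hBS, hB, fun k hk _ ↦ hBf k hk (by lia)⟩
    refine ⟨jordanCorrection f B j (m + 1), jordanCorrection_mem_adEigenspace hfS hBS,
      isReflexiveInverseOn_jordanCorrection hEf hfE m.succ_pos hB, fun k hk hjk ↦ ?_⟩
    suffices jordanCorrection f B j (m + 1) * f ^ k * B = 0 by
      rw [mul_jordanCorrection, this, zero_mul, zero_mul, zero_mul, sub_zero]
    rcases (show j ≤ k by lia).eq_or_lt with rfl | hlt
    · exact jordanCorrection_mul_pow_mul hB.mul_mul_self
    · rw [jordanCorrection_mul_pow_mul_of_lt (hB.mul_left_eq_zero hfE) hlt, hBf k hk (by lia)]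

lemma exists_isJordanGenerator {B : R} (hE : IsIdempotentElem E) (hEf : Commute E f)
    (hES : Commute E S) (hfE : f ^ (n + 1) * E = 0) (hfS : f ∈ adEigenspace S c)
    (hBS : B ∈ adEigenspace S (-(n * c))) (hB : f ^ n * B * f ^ n = f ^ n) :
    ∃ A ∈ adEigenspace S (-(n * c)),
      IsReflexiveInverseOn E (f ^ n) A ∧ IsJordanGenerator f A n := by
  obtain ⟨A₀, hA₀S, hA₀⟩ := exists_isReflexiveInverseOn hE (hEf.pow_right n) hES
    (pow_mem_adEigenspace hfS n) hBS (add_neg_cancel _) hB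
  obtain ⟨A, hAS, hA, hAf⟩ :=
    exists_isReflexiveInverseOn_mul_pow_mul_eq_zero hEf hfE hfS hA₀S hA₀ n
  exact ⟨A, hAS, hA, hA.mul_left_eq_zero hfE, hA.mul_right_eq_zero (hEf.pow_right _) hfE,
    hA.mul_mul_self, fun k hk ↦ hAf k hk (by lia)⟩

theorem exists_isSl2TripleOn (hfS : f ∈ adEigenspace S c)
    (hreg : ∀ n : ℕ, ∃ B ∈ adEigenspace S (-(n * c)), f ^ n * B * f ^ n = f ^ n)
    (hE : IsIdempotentElem E) (hEf : Commute E f) (hES : Commute E S) (hfE : f ^ n * E = 0) :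
    ∃ h e : R, IsSl2TripleOn E h e f ∧ Commute h S := by
  induction n generalizing E with
  | zero =>
    have hE0 : E = 0 := by simpa using hfE
    exact ⟨0, 0, by constructor <;> simp [hE0], Commute.zero_left S⟩
  | succ n ih =>
    obtain ⟨B, hBS, hB⟩ := hreg n
    obtain ⟨A, hAS, hAE, hA⟩ := exists_isJordanGenerator hE hEf hES hfE hfS hBS hB
    set P := jordanDiag f A n 1
    have hP : IsIdempotentElem P := hA.isIdempotentElem_jordanDiag_one
    have hEP : E * P = P := mul_jordanDiag_of_commute hEf hAE.left 1
    have hPE : P * E = P := jordanDiag_mul_of_commute hEf hAE.right 1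
    obtain ⟨h, e, ht, hhS⟩ := ih (hP.sub hE hPE hEP) (hEf.sub_left hA.commute_jordanDiag_one)
      (hES.sub_left (commute_jordanDiag hfS hAS 1))
      (by rw [mul_sub, hA.pow_mul_jordanDiag_one, hAE.self_mul_mul, sub_self])
    have hsum := hA.isSl2TripleOn.add (by rw [mul_sub, hPE, hP.eq, sub_self])
      (by rw [sub_mul, hEP, hP.eq, sub_self]) ht
    rw [add_sub_cancel] at hsum
    exact ⟨_, _, hsum, (commute_jordanDiag hfS hAS _).add_left hhS⟩

end GeneralizedInverse

section Complement

variable {K M N : Type*} [Ring K] [AddCommGroup M] [AddCommGroup N] [Module K M] [Module K N]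
  {g : M →ₗ[K] N} {U : Submodule K M} {W : Submodule K N}

lemma exists_leftInverse_on_kerComplement
    (hU : IsCompl (LinearMap.ker g) U) (hW : IsCompl (LinearMap.range g) W) :
    ∃ B : N →ₗ[K] M, (∀ u ∈ U, B (g u) = u) ∧ ∀ w ∈ W, B w = 0 := by
  let φ : U ≃ₗ[K] LinearMap.range g := LinearMap.kerComplementEquivRange g hU.symm
  refine ⟨U.subtype ∘ₗ φ.symm ∘ₗ Submodule.projectionOnto _ W hW, fun u hu ↦ ?_, fun w hw ↦ ?_⟩
  · have hφ : Submodule.projectionOnto _ W hW (g u) = φ ⟨u, hu⟩ :=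
      Submodule.projectionOnto_apply_of_mem_left hW ⟨u, rfl⟩
    simp [hφ]
  · simp [Submodule.projectionOnto_apply_of_mem_right hW hw]

lemma exists_eq_apply_add_of_isCompl
    (hU : IsCompl (LinearMap.ker g) U) (hW : IsCompl (LinearMap.range g) W) (x : N) :
    ∃ u ∈ U, ∃ w ∈ W, x = g u + w := by
  obtain ⟨_, w, ⟨y, rfl⟩, hw, rfl⟩ := Submodule.codisjoint_iff_exists_add_eq.1 hW.codisjoint x
  obtain ⟨v, u, hv, hu, rfl⟩ := Submodule.codisjoint_iff_exists_add_eq.1 hU.codisjoint y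
  exact ⟨u, hu, w, hw, by rw [map_add, LinearMap.mem_ker.1 hv, zero_add]⟩

end Complement

section Semisimple

variable {K M : Type*} [CommRing K] [AddCommGroup M] [Module K M] {S : Module.End K M}

lemma ker_mem_invtSubmodule_of_mem_adEigenspace {g : Module.End K M} {a : K}
    (hg : g ∈ adEigenspace S a) : LinearMap.ker g ∈ S.invtSubmodule := by
  intro x (hx : g x = 0)
  have := LinearMap.congr_fun (mem_adEigenspace_iff.1 hg) x
  simpa [hx] using this

lemma range_mem_invtSubmodule_of_mem_adEigenspace {g : Module.End K M} {a : K}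
    (hg : g ∈ adEigenspace S a) : LinearMap.range g ∈ S.invtSubmodule := by
  rintro _ ⟨x, rfl⟩
  have : S (g x) - g (S x) = a • g x := LinearMap.congr_fun (mem_adEigenspace_iff.1 hg) x
  exact ⟨S x + a • x, by rw [map_add, map_smul, ← this, add_sub_cancel]⟩

lemma exists_mem_adEigenspace_mul_mul_self {g : Module.End K M} {a : K} (hS : S.IsSemisimple)
    (hg : g ∈ adEigenspace S a) : ∃ B ∈ adEigenspace S (-a), g * B * g = g := by
  rw [Module.End.isSemisimple_iff] at hS
  obtain ⟨U, hUS, hU⟩ := hS _ (ker_mem_invtSubmodule_of_mem_adEigenspace hg)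
  obtain ⟨W, hWS, hW⟩ := hS _ (range_mem_invtSubmodule_of_mem_adEigenspace hg)
  obtain ⟨B, hBU, hBW⟩ := exists_leftInverse_on_kerComplement hU hW
  refine ⟨B, mem_adEigenspace_iff.2 (LinearMap.ext fun x ↦ ?_), LinearMap.ext fun x ↦ ?_⟩
  · obtain ⟨u, hu, w, hw, rfl⟩ := exists_eq_apply_add_of_isCompl hU hW x
    have hSg : S (g u) = g (S u) + a • g u :=
      eq_add_of_sub_eq' (LinearMap.congr_fun (mem_adEigenspace_iff.1 hg) u)
    have hBS : B (S (g u)) = S u + a • u := by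
      rw [hSg, map_add, map_smul, hBU _ (hUS hu), hBU u hu]
    simp [hBU u hu, hBW w hw, hBS, hBW _ (hWS hw)]
  · obtain ⟨v, u, hv, hu, rfl⟩ := Submodule.codisjoint_iff_exists_add_eq.1 hU.codisjoint x
    simp [LinearMap.mem_ker.1 hv, hBU u hu]

lemma isSemisimple_of_iSup_eigenspace_eq_top {K M : Type*} [Field K] [AddCommGroup M] [Module K M]
    {S : Module.End K M} (hS : ⨆ μ, Module.End.eigenspace S μ = ⊤) : S.IsSemisimple := by
  let p (μ : K) : Module.End.invtSubmodule S := ⟨_, Module.End.eigenspace_mem_invtSubmodule S μ⟩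
  let q (μ : K) : Submodule (Polynomial K) (Module.AEval' S) :=
    Module.AEval.mapSubmodule K M S (p μ)
  refine isSemisimpleModule_of_isSemisimpleModule_submodule' (p := q) (fun μ ↦ ?_) ?_
  · have hμ : Module.End.IsSemisimple
        (S.restrict (S.mem_invtSubmodule_iff_forall_mem_of_mem.1 (p μ).2)) := by
      rw [Module.End.restrict_eigenspace]
      exact Module.End.IsSemisimple_smul μ Module.End.isSemisimple_id
    exact (Module.AEval.restrict_equiv_mapSubmodule S _ (p μ).2).isSemisimpleModule_iff.1 hμ
  · have hle : ⨆ μ, Module.End.eigenspace S μ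
        ≤ ((Module.AEval.mapSubmodule K M S).symm (⨆ μ, q μ) : Submodule K M) :=
      iSup_le fun μ x hx ↦ Submodule.mem_iSup_of_mem (p := q) μ
        ((Module.AEval.mem_mapSubmodule_apply K M S).2 hx)
    rw [hS] at hle
    exact eq_top_iff.2 fun x _ ↦ hle (x := (Module.AEval'.of S).symm x) trivial

theorem exists_sl2_completion_commuting_general {f : Module.End K M} {c : K}
    (hS : S.IsSemisimple) (hf : IsNilpotent f) (hSf : S * f - f * S = c • f) :
    ∃ h' e' : Module.End K M,
      h' * e' - e' * h' = (2 : K) • e' ∧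
      h' * f - f * h' = (-2 : K) • f ∧
      e' * f - f * e' = h' ∧
      h' * S = S * h' := by
  obtain ⟨n, hn⟩ := hf
  have hfS : f ∈ adEigenspace S c := mem_adEigenspace_iff.2 hSf
  obtain ⟨h, e, ht, hhS⟩ := exists_isSl2TripleOn hfS
    (fun k ↦ exists_mem_adEigenspace_mul_mul_self hS (pow_mem_adEigenspace hfS k))
    IsIdempotentElem.one (Commute.one_left f) (Commute.one_left S) ((mul_one _).trans hn)
  refine ⟨h, e, ?_, ?_, ht.lie_e_f, hhS⟩
  · rw [ht.lie_h_e, two_smul, two_smul]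
  · rw [ht.lie_h_f, mul_one, neg_smul, two_smul, two_smul]

end Semisimple

/-- if `S` is diagonalizable, `f` nilpotent, and `S∘f - f∘S = -2f`, then `f`
can be completed to an `sl₂`-triple `(e', h', f)` of endomorphisms with `h'` commuting
with `S`. -/
theorem exists_sl2_completion_commuting (V : Type*) [AddCommGroup V] [Module ℂ V]
    [FiniteDimensional ℂ V]
    (S f : Module.End ℂ V)
    (hS : (⨆ μ : ℂ, Module.End.eigenspace S μ) = ⊤)
    (hf : IsNilpotent f)
    (hSf : S * f - f * S = (-2 : ℂ) • f) :
    ∃ h' e' : Module.End ℂ V,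
      h' * e' - e' * h' = (2 : ℂ) • e' ∧
      h' * f - f * h' = (-2 : ℂ) • f ∧
      e' * f - f * e' = h' ∧
      h' * S = S * h' :=
  exists_sl2_completion_commuting_general (isSemisimple_of_iSup_eigenspace_eq_top hS) hf hSf
end

section
/- Let (f, h, e) be matrices in M_n(ℂ) forming an sl₂-triple (so he − eh = 2e, hf − fh = −2f, ef − fe = h, as matrix products). Let Z₁ and Z₂ be matrices in M_n(ℂ) each of which commutes with all three of e, h, f. Suppose there exists g ∈ GL_n(ℂ) such that g·f = f·g and g·(h + Z₁)·g⁻¹ = h + Z₂. Then there exists u ∈ GL_n(ℂ) commuting with each of e, h, f such that u·Z₁·u⁻¹ = Z₂. -/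
/-! Work in the algebra `A` of matrices. The eigenspaces of `ad h` for `0, -1, -2, …` are
independent and their products respect addition of eigenvalues, so they span an `ℕ`-graded
subalgebra of `A`. It contains the centralizer of `f`: the eigenvector `e` of `ad h` is nilpotent,
and if `[f, x] = 0` and `(ad e) ^ n` kills `x`, then the identity
`f e ^ (n + 1) = e ^ (n + 1) f - (n + 1) e ^ n (h + n)`, applied to the adjoint action, shows by
induction on `n` that `∏ k < n, (ad h + k)` kills `x`.

In particular `g` and `g⁻¹` lie in this subalgebra, hence the degree-zero part `u` of `g` is
invertible. Both `f` and `h + Zᵢ` are homogeneous, so comparing components of lowest degree in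
`g f = f g` and `g (h + Z₁) = (h + Z₂) g` gives `u f = f u` and `u (h + Z₁) = (h + Z₂) u`. Having
degree zero means commuting with `h`, so `u Z₁ = Z₂ u`. Finally, an element commuting with `h` and
`f` is a lowest weight vector of weight zero for the adjoint action, so it commutes with `e`.

Mathlib's `IsSl2Triple` requires `h ≠ 0`, which is why the bracket relations are spelled out. -/

open LieAlgebra Module Polynomial

theorem lowering_mul_raising_pow_succ {R : Type*} [Ring R] {e h f : R} (hhe : ⁅h, e⁆ = 2 • e)
    (hef : ⁅e, f⁆ = h) (n : ℕ) :
    f * e ^ (n + 1) = e ^ (n + 1) * f - (n + 1) • (e ^ n * (h + n • 1)) := by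
  have hhe' : h * e = e * h + 2 • e := by rw [← hhe, Ring.lie_def]; abel
  have hfe : f * e = e * f - h := by rw [← hef, Ring.lie_def]; abel
  induction n with
  | zero => simp [hfe]
  | succ n ih =>
    have hshift : (h + n • 1) * e = e * (h + n • 1 + 2 • 1) := by
      simp only [add_mul, mul_add, hhe', smul_mul_assoc, mul_smul_comm, one_mul, mul_one]
      abel
    calc f * e ^ (n + 2)
        = (f * e ^ (n + 1)) * e := by rw [pow_succ e (n + 1), mul_assoc]
      _ = e ^ (n + 1) * (f * e) - (n + 1) • (e ^ n * ((h + n • 1) * e)) := by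
        rw [ih, sub_mul, smul_mul_assoc, mul_assoc, mul_assoc]
      _ = e ^ (n + 2) * f - e ^ (n + 1) * h - (n + 1) • (e ^ (n + 1) * (h + n • 1 + 2 • 1)) := by
        rw [hfe, hshift, mul_sub, ← mul_assoc, ← mul_assoc, ← pow_succ, ← pow_succ]
      _ = e ^ (n + 2) * f - (n + 2) • (e ^ (n + 1) * (h + (n + 1) • 1)) := by
        simp only [mul_add, mul_smul_comm, mul_one]
        module

theorem ker_aeval_prod_of_pairwise_isCoprime {R M ι : Type*} [CommRing R] [AddCommGroup M]
    [Module R M] (T : End R M) {p : ι → R[X]} {s : Finset ι}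
    (hp : (s : Set ι).Pairwise (Function.onFun IsCoprime p)) :
    LinearMap.ker (aeval T (∏ i ∈ s, p i)) = ⨆ i ∈ s, LinearMap.ker (aeval T (p i)) := by
  classical
  induction s using Finset.induction_on with
  | empty => simp [End.one_eq_id]
  | insert i s hi ih =>
    have hcoprime : IsCoprime (p i) (∏ j ∈ s, p j) := IsCoprime.prod_right fun j hj =>
      hp (s.mem_insert_self i) (Finset.mem_insert_of_mem hj) (ne_of_mem_of_not_mem hj hi).symm
    rw [Finset.prod_insert hi, ← sup_ker_aeval_eq_ker_aeval_mul_of_coprime T hcoprime,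
      ih (hp.mono (by simp)), Finset.iSup_insert]

section LowestWeight

variable {R M : Type*} [CommRing R] [AddCommGroup M] [IsAddTorsionFree M] [Module R M]
  {E H F : End R M}

theorem raising_pow_apply_add_nsmul_eq_zero (hHE : ⁅H, E⁆ = 2 • E) (hEF : ⁅E, F⁆ = H) {n : ℕ}
    {x : M} (hF : F x = 0) (hE : (E ^ (n + 1)) x = 0) : (E ^ n) (H x + n • x) = 0 := by
  have h := LinearMap.congr_fun (lowering_mul_raising_pow_succ hHE hEF n) x
  rw [End.mul_apply, hE, map_zero, LinearMap.sub_apply, End.mul_apply, hF, map_zero, zero_sub,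
    zero_eq_neg, LinearMap.smul_apply] at h
  simpa using (nsmul_eq_zero_iff_right n.succ_ne_zero).1 h

theorem raising_apply_eq_zero_of_isNilpotent (hHE : ⁅H, E⁆ = 2 • E) (hEF : ⁅E, F⁆ = H)
    (hE : IsNilpotent E) {x : M} (hH : H x = 0) (hF : F x = 0) : E x = 0 := by
  have descend (n : ℕ) (hn : (E ^ (n + 1)) x = 0) : E x = 0 := by
    induction n with
    | zero => simpa using hn
    | succ n ih =>
      have h := raising_pow_apply_add_nsmul_eq_zero hHE hEF hF hn
      rw [hH, zero_add, map_nsmul] at h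
      exact ih ((nsmul_eq_zero_iff_right n.succ_ne_zero).1 h)
  obtain ⟨n, hn⟩ := hE
  exact descend n (by simp [pow_succ', hn])

theorem aeval_prod_apply_eq_zero_of_lowering_apply_eq_zero (hHE : ⁅H, E⁆ = 2 • E)
    (hHF : ⁅H, F⁆ = -(2 • F)) (hEF : ⁅E, F⁆ = H) {n : ℕ} {x : M} (hF : F x = 0)
    (hE : (E ^ n) x = 0) :
    aeval H (∏ k ∈ Finset.range n, (X - C (k • (-1 : R)))) x = 0 := by
  induction n generalizing x with
  | zero => simpa using hE
  | succ n ih =>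
    have hFH : F (H x) = 0 := by
      simpa [hF, Ring.lie_def] using LinearMap.congr_fun hHF x
    have hshift := ih (x := H x + n • x) (by simp [hF, hFH])
      (raising_pow_apply_add_nsmul_eq_zero hHE hEF hF hE)
    simpa [Finset.prod_range_succ, Nat.cast_smul_eq_nsmul] using hshift

end LowestWeight

theorem ker_lowering_le_iSup_eigenspace {K M : Type*} [Field K] [CharZero K] [AddCommGroup M]
    [Module K M] {E H F : End K M} (hHE : ⁅H, E⁆ = 2 • E) (hHF : ⁅H, F⁆ = -(2 • F))
    (hEF : ⁅E, F⁆ = H) (hE : IsNilpotent E) :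
    LinearMap.ker F ≤ ⨆ k : ℕ, H.eigenspace (k • (-1 : K)) := by
  have : IsAddTorsionFree M := .of_isTorsionFree K M
  obtain ⟨n, hn⟩ := hE
  have hcoprime : Pairwise (Function.onFun IsCoprime fun k : ℕ => X - C (k • (-1 : K))) :=
    pairwise_coprime_X_sub_C fun k l hkl => by simpa using hkl
  calc LinearMap.ker F
      ≤ LinearMap.ker (aeval H (∏ k ∈ Finset.range n, (X - C (k • (-1 : K))))) :=
        fun x hx => aeval_prod_apply_eq_zero_of_lowering_apply_eq_zero hHE hHF hEF hx (by simp [hn])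
    _ = ⨆ k ∈ Finset.range n, H.eigenspace (k • (-1 : K)) := by
      rw [ker_aeval_prod_of_pairwise_isCoprime H (hcoprime.set_pairwise _)]
      simp only [End.eigenspace_def, aeval_sub, aeval_X, aeval_C, Algebra.algebraMap_eq_smul_one]
    _ ≤ ⨆ k : ℕ, H.eigenspace (k • (-1 : K)) := iSup₂_le_iSup _ _

theorem exists_unit_mem_zero_semiconjBy {ι R A : Type*} [AddCancelCommMonoid ι] [PartialOrder ι]
    [CanonicallyOrderedAdd ι] [Finset.HasAntidiagonal ι] [CommRing R] [Ring A]
    [Algebra R A] {𝒜 : ι → Submodule R A} [SetLike.GradedMonoid 𝒜] (h𝒜 : iSupIndep 𝒜) {g : Aˣ}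
    (hg : (g : A) ∈ ⨆ i, 𝒜 i) (hg' : (↑g⁻¹ : A) ∈ ⨆ i, 𝒜 i) :
    ∃ u : Aˣ, (u : A) ∈ 𝒜 0 ∧
      ∀ {i x y}, x ∈ 𝒜 i → y ∈ 𝒜 i → SemiconjBy (g : A) x y → SemiconjBy (u : A) x y := by
  classical
  have hinj : Function.Injective (DirectSum.coeAlgHom 𝒜) := h𝒜.dfinsupp_lsum_injective
  rw [Submodule.iSup_eq_toSubmodule_range, Subalgebra.mem_toSubmodule, AlgHom.mem_range] at hg hg'
  obtain ⟨a, ha⟩ := hg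
  obtain ⟨b, hb⟩ := hg'
  have degree_zero_mul {a b : DirectSum ι fun i => 𝒜 i} (h : a * b = 1) : (a 0 * b 0 : A) = 1 :=
    calc (a 0 * b 0 : A) = (a * b) 0 := by simp [DirectSum.coe_mul_apply_eq_sum_antidiagonal]
      _ = 1 := by rw [h, DirectSum.one_def, DirectSum.of_eq_same]; rfl
  have hab : a * b = 1 := hinj (by simp [ha, hb])
  have hba : b * a = 1 := hinj (by simp [ha, hb])
  refine ⟨⟨a 0, b 0, degree_zero_mul hab, degree_zero_mul hba⟩, (a 0).2,
    fun {i x y} hx hy hxy => ?_⟩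
  have hcomm : a * DirectSum.of (fun i => 𝒜 i) i ⟨x, hx⟩
      = DirectSum.of (fun i => 𝒜 i) i ⟨y, hy⟩ * a := hinj (by simpa [ha] using hxy.eq)
  calc (a 0 : A) * x = (a * DirectSum.of (fun i => 𝒜 i) i ⟨x, hx⟩) (0 + i) :=
        (DirectSum.coe_mul_of_apply_add 𝒜 a ⟨x, hx⟩ 0).symm
    _ = (DirectSum.of (fun i => 𝒜 i) i ⟨y, hy⟩ * a) (i + 0) := by rw [hcomm, add_comm]
    _ = y * a 0 := DirectSum.coe_of_mul_apply_add 𝒜 ⟨y, hy⟩ a 0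

section Ad

attribute [local instance] LieRing.ofAssociativeRing

section AdWeightSpace

variable {R A : Type*} [CommRing R] [Ring A] [Algebra R A]

/-- The eigenspace of `ad h` for the eigenvalue `k • μ`. Only multiples of a fixed `μ` by natural
numbers are indexed, so that the family is an `ℕ`-grading of the subalgebra it spans. -/
def adWeightSpace (h : A) (μ : R) (k : ℕ) : Submodule R A :=
  (ad R A h).eigenspace (k • μ)

theorem mem_adWeightSpace {h x : A} {μ : R} {k : ℕ} :
    x ∈ adWeightSpace h μ k ↔ ⁅h, x⁆ = (k • μ) • x :=
  End.mem_eigenspace_iff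

theorem mem_adWeightSpace_zero {h x : A} {μ : R} : x ∈ adWeightSpace h μ 0 ↔ Commute h x := by
  rw [mem_adWeightSpace, zero_smul, zero_smul, commute_iff_lie_eq]

instance adWeightSpace.gradedMonoid (h : A) (μ : R) : SetLike.GradedMonoid (adWeightSpace h μ) where
  one_mem := mem_adWeightSpace_zero.2 (.one_right h)
  mul_mem i j x y hx hy := by
    rw [mem_adWeightSpace] at *
    have hleibniz : ⁅h, x * y⁆ = ⁅h, x⁆ * y + x * ⁅h, y⁆ := by
      simp only [Ring.lie_def]
      noncomm_ring
    rw [hleibniz, hx, hy, smul_mul_assoc, mul_smul_comm, ← add_smul, ← add_smul]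

theorem iSupIndep_adWeightSpace [IsDomain R] [CharZero R] [IsTorsionFree R A] (h : A) {μ : R}
    (hμ : μ ≠ 0) : iSupIndep (adWeightSpace h μ) :=
  (ad R A h).eigenspaces_iSupIndep.comp fun k l hkl => by simpa [hμ] using hkl

theorem isNilpotent_of_lie_eq_smul [IsDomain R] [CharZero R] [IsTorsionFree R A]
    [IsNoetherian R A] {h e : A} {μ : R} (hμ : μ ≠ 0) (hhe : ⁅h, e⁆ = μ • e) : IsNilpotent e := by
  by_contra hne
  have he : e ∈ adWeightSpace h μ 1 := by rwa [mem_adWeightSpace, one_smul]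
  have hpow (k : ℕ) : e ^ k ∈ adWeightSpace h μ k := by simpa using SetLike.pow_mem_graded k he
  have hbot (k : ℕ) : adWeightSpace h μ k ≠ ⊥ :=
    (Submodule.ne_bot_iff _).2 ⟨e ^ k, hpow k, fun h0 => hne ⟨k, h0⟩⟩
  exact Set.infinite_univ ((WellFoundedGT.finite_ne_bot_of_iSupIndep
    (iSupIndep_adWeightSpace h hμ)).subset fun k _ => hbot k)

end AdWeightSpace

theorem mem_iSup_adWeightSpace_of_commute_lowering {K A : Type*} [Field K] [CharZero K] [Ring A]
    [Algebra K A] {e h f x : A} (he : IsNilpotent e) (hhe : ⁅h, e⁆ = 2 • e)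
    (hhf : ⁅h, f⁆ = -(2 • f)) (hef : ⁅e, f⁆ = h) (hx : Commute f x) :
    x ∈ ⨆ k, adWeightSpace h (-1 : K) k := by
  refine ker_lowering_le_iSup_eigenspace (E := ad K A e) (F := ad K A f) ?_ ?_ ?_
    (ad_nilpotent_of_nilpotent he) ?_
  · rw [← LieHom.map_lie, hhe, map_nsmul]
  · rw [← LieHom.map_lie, hhf, map_neg, map_nsmul]
  · rw [← LieHom.map_lie, hef]
  · exact hx.lie_eq

theorem commute_raising_of_commute_lowering {A : Type*} [Ring A] [IsAddTorsionFree A] {e h f x : A}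
    (he : IsNilpotent e) (hhe : ⁅h, e⁆ = 2 • e) (hef : ⁅e, f⁆ = h) (hxh : Commute h x)
    (hxf : Commute f x) : Commute e x := by
  refine commute_iff_lie_eq.2 (raising_apply_eq_zero_of_isNilpotent (E := ad ℤ A e)
    (H := ad ℤ A h) (F := ad ℤ A f) ?_ ?_ (ad_nilpotent_of_nilpotent he) hxh.lie_eq hxf.lie_eq)
  · rw [← LieHom.map_lie, hhe, map_nsmul]
  · rw [← LieHom.map_lie, hef]

end Ad

theorem conjugate_by_centralizer_general {A : Type*} [Ring A] [Algebra ℚ A] {e h f Z₁ Z₂ : A}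
    (he : IsNilpotent e) (hhe : ⁅h, e⁆ = 2 • e) (hhf : ⁅h, f⁆ = -(2 • f)) (hef : ⁅e, f⁆ = h)
    (hZ₁h : Commute Z₁ h) (hZ₂h : Commute Z₂ h)
    (hconj : ∃ g : Aˣ, Commute (g : A) f ∧ g * (h + Z₁) * (g⁻¹ : Aˣ) = h + Z₂) :
    ∃ u : Aˣ, Commute (u : A) e ∧ Commute (u : A) h ∧ Commute (u : A) f ∧
      u * Z₁ * (u⁻¹ : Aˣ) = Z₂ := by
  have : IsAddTorsionFree A := .of_module_rat A
  obtain ⟨g, hgf, hgh⟩ := hconj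
  obtain ⟨u, hu, hsemi⟩ := exists_unit_mem_zero_semiconjBy
    (iSupIndep_adWeightSpace h (neg_ne_zero.2 one_ne_zero : (-1 : ℚ) ≠ 0))
    (mem_iSup_adWeightSpace_of_commute_lowering he hhe hhf hef hgf.symm)
    (mem_iSup_adWeightSpace_of_commute_lowering he hhe hhf hef hgf.units_inv_left.symm)
  have huh : Commute (u : A) h := (mem_adWeightSpace_zero.1 hu).symm
  have hf : f ∈ adWeightSpace h (-1 : ℚ) 2 := by
    simp [mem_adWeightSpace, hhf, ofNat_smul_eq_nsmul]
  have huf : Commute (u : A) f := hsemi hf hf hgf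
  have huZ : SemiconjBy (u : A) (h + Z₁) (h + Z₂) :=
    hsemi (mem_adWeightSpace_zero.2 ((Commute.refl h).add_right hZ₁h.symm))
      (mem_adWeightSpace_zero.2 ((Commute.refl h).add_right hZ₂h.symm))
      ((Units.mul_inv_eq_iff_eq_mul g).1 hgh)
  refine ⟨u, (commute_raising_of_commute_lowering he hhe hef huh.symm huf.symm).symm, huh, huf, ?_⟩
  have huZ' : SemiconjBy (u : A) Z₁ Z₂ := by simpa using huZ.sub_right huh
  exact (Units.mul_inv_eq_iff_eq_mul u).2 huZ'

/-- if `Z₁`, `Z₂` commute with an `sl₂`-triple `(e,h,f)` of matrices, and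
`h + Z₁` is conjugate to `h + Z₂` by an element of `GL_n(ℂ)` centralizing `f`, then `Z₁`
is conjugate to `Z₂` by an element centralizing `e`, `h` and `f`. -/
theorem conjugate_by_centralizer (n : ℕ) (e h f Z₁ Z₂ : Matrix (Fin n) (Fin n) ℂ)
    (hhe : h * e - e * h = (2 : ℂ) • e)
    (hhf : h * f - f * h = (-2 : ℂ) • f)
    (hef : e * f - f * e = h)
    (hZ₁e : Z₁ * e = e * Z₁) (hZ₁h : Z₁ * h = h * Z₁) (hZ₁f : Z₁ * f = f * Z₁)
    (hZ₂e : Z₂ * e = e * Z₂) (hZ₂h : Z₂ * h = h * Z₂) (hZ₂f : Z₂ * f = f * Z₂)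
    (hconj : ∃ g : GL (Fin n) ℂ,
      (g : Matrix (Fin n) (Fin n) ℂ) * f = f * (g : Matrix (Fin n) (Fin n) ℂ) ∧
      (g : Matrix (Fin n) (Fin n) ℂ) * (h + Z₁) *
        ((g⁻¹ : GL (Fin n) ℂ) : Matrix (Fin n) (Fin n) ℂ) = h + Z₂) :
    ∃ u : GL (Fin n) ℂ,
      (u : Matrix (Fin n) (Fin n) ℂ) * e = e * (u : Matrix (Fin n) (Fin n) ℂ) ∧
      (u : Matrix (Fin n) (Fin n) ℂ) * h = h * (u : Matrix (Fin n) (Fin n) ℂ) ∧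
      (u : Matrix (Fin n) (Fin n) ℂ) * f = f * (u : Matrix (Fin n) (Fin n) ℂ) ∧
      (u : Matrix (Fin n) (Fin n) ℂ) * Z₁ *
        ((u⁻¹ : GL (Fin n) ℂ) : Matrix (Fin n) (Fin n) ℂ) = Z₂ := by
  have hnil : IsNilpotent e := isNilpotent_of_lie_eq_smul (R := ℂ) two_ne_zero hhe
  exact conjugate_by_centralizer_general hnil (by rw [Ring.lie_def, hhe, ofNat_smul_eq_nsmul])
    (by simp [Ring.lie_def, hhf, ofNat_smul_eq_nsmul]) hef hZ₁h hZ₂h hconj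
end

section
/- Let g be a finite-dimensional Lie algebra over a field of characteristic zero and let (e, h, f) be an sl₂-triple in g with e ≠ 0. Then the Killing form κ of g satisfies κ(e, f) = κ(h, h)/2 and κ(h, h) ≠ 0; in particular κ(e, f) ≠ 0. -/
/-!
Invariance of `κ` and `h = [e, f]` give `κ(h, h) = 2 κ(e, f)`; invariance also makes eigenvectors
of `ad h` orthogonal unless their eigenvalues add up to zero. Hence if `κ(h, h) = 0`, then `κ`
vanishes on the whole span `s` of `e`, `h`, `f`, and Cartan's criterion makes `ad x` nilpotent for
every `x ∈ [s, s]`, in particular for `x = h`. This contradicts `[h, e] = 2e ≠ 0`.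
-/

open LieModule Module

section TraceForm

variable {R L M : Type*} [CommRing R] [LieRing L] [LieAlgebra R L]
  [AddCommGroup M] [Module R M] [LieRingModule L M] [LieModule R L M]

lemma traceForm_eq_zero_of_lie_eq_smul [NoZeroDivisors R] {x y z : L} {a b : R}
    (hx : ⁅z, x⁆ = a • x) (hy : ⁅z, y⁆ = b • y) (hab : a + b ≠ 0) :
    traceForm R L M x y = 0 := by
  have invariance : a * traceForm R L M x y = -(b * traceForm R L M x y) := by
    simpa [hx, hy] using traceForm_apply_lie_apply' R L M z x y
  have : (a + b) * traceForm R L M x y = 0 := by linear_combination invariance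
  exact (mul_eq_zero.mp this).resolve_left hab

variable {h e f : L}

lemma isSl2Triple_of_lie_eq_smul (he : (2 : R) • e ≠ 0) (hhe : ⁅h, e⁆ = (2 : R) • e)
    (hhf : ⁅h, f⁆ = (-2 : R) • f) (hef : ⁅e, f⁆ = h) : IsSl2Triple h e f where
  h_ne_zero := by
    rintro rfl
    exact he (by rw [← hhe, zero_lie])
  lie_e_f := hef
  lie_h_e_nsmul := by rw [hhe, ofNat_smul_eq_nsmul]
  lie_h_f_nsmul := by rw [hhf, neg_smul, ofNat_smul_eq_nsmul]

lemma traceForm_h_h_eq_two_mul_traceForm_e_f (t : IsSl2Triple h e f) :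
    traceForm R L M h h = 2 * traceForm R L M e f := by
  calc traceForm R L M h h = traceForm R L M ⁅e, f⁆ h := by rw [t.lie_e_f]
    _ = traceForm R L M e ⁅f, h⁆ := traceForm_apply_lie_apply R L M e f h
    _ = 2 * traceForm R L M e f := by
      rw [← lie_skew, t.lie_lie_smul_f R, neg_neg, map_smul, smul_eq_mul]

variable [IsDomain R] [CharZero R]

lemma traceForm_toLieSubalgebra_eq_zero (t : IsSl2Triple h e f)
    (hh : traceForm R L M h h = 0) : traceForm R (t.toLieSubalgebra R) M = 0 := by
  have lie_h_h : ⁅h, h⁆ = (0 : R) • h := by simp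
  have lie_h_e : ⁅h, e⁆ = (2 : R) • e := t.lie_h_e_smul R
  have lie_h_f : ⁅h, f⁆ = (-2 : R) • f := by rw [neg_smul, t.lie_lie_smul_f R]
  have ee : traceForm R L M e e = 0 :=
    traceForm_eq_zero_of_lie_eq_smul lie_h_e lie_h_e (by norm_num)
  have ff : traceForm R L M f f = 0 :=
    traceForm_eq_zero_of_lie_eq_smul lie_h_f lie_h_f (by norm_num)
  have eh : traceForm R L M e h = 0 :=
    traceForm_eq_zero_of_lie_eq_smul lie_h_e lie_h_h (by norm_num)
  have fh : traceForm R L M f h = 0 :=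
    traceForm_eq_zero_of_lie_eq_smul lie_h_f lie_h_h (by norm_num)
  have ef : traceForm R L M e f = 0 := by
    simpa [hh] using traceForm_h_h_eq_two_mul_traceForm_e_f (R := R) (M := M) t
  ext ⟨x, hx⟩ ⟨y, hy⟩
  obtain ⟨a, b, c, rfl⟩ := IsSl2Triple.mem_toLieSubalgebra_iff.mp hx
  obtain ⟨a', b', c', rfl⟩ := IsSl2Triple.mem_toLieSubalgebra_iff.mp hy
  change traceForm R L M _ _ = 0
  simp [t.lie_e_f, hh, ee, ff, ef, eh, fh, traceForm_comm R L M f e, traceForm_comm R L M h]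

lemma isNilpotent_toEnd_h_of_traceForm_h_h_eq_zero [Module.Free R M] [IsNoetherian R M]
    (t : IsSl2Triple h e f) (hh : traceForm R L M h h = 0) :
    _root_.IsNilpotent (toEnd R L M h) := by
  set s := t.toLieSubalgebra R
  have he : e ∈ s := IsSl2Triple.mem_toLieSubalgebra_iff.mpr ⟨1, 0, 0, by simp⟩
  have hf : f ∈ s := IsSl2Triple.mem_toLieSubalgebra_iff.mpr ⟨0, 1, 0, by simp⟩
  have lie_mem_derived : ⁅(⟨e, he⟩ : s), (⟨f, hf⟩ : s)⁆ ∈ LieAlgebra.derivedSeries R s 1 :=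
    LieSubmodule.lie_mem_lie (LieSubmodule.mem_top _) (LieSubmodule.mem_top _)
  have cartan : LieModule.IsNilpotent (LieAlgebra.derivedSeries R s 1) M :=
    isNilpotent_derivedSeries_of_traceForm_eq_zero (traceForm_toLieSubalgebra_eq_zero t hh)
  rw [← t.lie_e_f]
  exact (isNilpotent_iff_forall' (R := R)).mp cartan ⟨_, lie_mem_derived⟩

end TraceForm

section KillingForm

variable {R L : Type*} [CommRing R] [IsDomain R] [CharZero R] [LieRing L] [LieAlgebra R L]
  [Module.Free R L] [IsNoetherian R L] {h e f : L}

lemma killingForm_h_h_ne_zero (t : IsSl2Triple h e f) : killingForm R L h h ≠ 0 := by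
  intro hh
  have ad_h_nilpotent : _root_.IsNilpotent (toEnd R L L h) :=
    isNilpotent_toEnd_h_of_traceForm_h_h_eq_zero t hh
  have two_eigenvalue : (toEnd R L L h).HasEigenvalue 2 :=
    End.hasEigenvalue_of_hasEigenvector
      ⟨End.mem_eigenspace_iff.mpr (t.lie_h_e_smul R), t.e_ne_zero⟩
  exact two_ne_zero (two_eigenvalue.isNilpotent_of_isNilpotent ad_h_nilpotent).eq_zero

theorem killing_form_sl2_general (he0 : e ≠ 0) (hhe : ⁅h, e⁆ = (2 : R) • e)
    (hhf : ⁅h, f⁆ = (-2 : R) • f) (hef : ⁅e, f⁆ = h) :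
    killingForm R L h h = 2 * killingForm R L e f ∧
    killingForm R L h h ≠ 0 ∧
    killingForm R L e f ≠ 0 := by
  have t : IsSl2Triple h e f :=
    isSl2Triple_of_lie_eq_smul (smul_ne_zero two_ne_zero he0) hhe hhf hef
  have hh_eq : killingForm R L h h = 2 * killingForm R L e f :=
    traceForm_h_h_eq_two_mul_traceForm_e_f t
  have hh_ne : killingForm R L h h ≠ 0 := killingForm_h_h_ne_zero t
  exact ⟨hh_eq, hh_ne, right_ne_zero_of_mul (hh_eq ▸ hh_ne)⟩

end KillingForm

/-- for an `sl₂`-triple `(e,h,f)` with `e ≠ 0` in a finite-dimensional Lie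
algebra over a field of characteristic zero, `κ(e,f) = κ(h,h)/2` and `κ(h,h) ≠ 0`;
in particular `κ(e,f) ≠ 0`. -/
theorem killing_form_sl2 (F : Type*) [Field F] [CharZero F]
    (g : Type*) [LieRing g] [LieAlgebra F g] [FiniteDimensional F g]
    (e h f : g) (he0 : e ≠ 0)
    (hhe : ⁅h, e⁆ = (2 : F) • e) (hhf : ⁅h, f⁆ = (-2 : F) • f) (hef : ⁅e, f⁆ = h) :
    killingForm F g e f = killingForm F g h h / 2 ∧
    killingForm F g h h ≠ 0 ∧
    killingForm F g e f ≠ 0 := by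
  obtain ⟨hh_eq, nonvanishing⟩ := killing_form_sl2_general he0 hhe hhf hef
  exact ⟨eq_div_of_mul_eq two_ne_zero (by rw [hh_eq, mul_comm]), nonvanishing⟩
end

section
/- Let g be a finite-dimensional Lie algebra over a field of characteristic zero and let (e, h, f) be an sl₂-triple in g. Then the centralizer of f in g, i.e. ker(ad f) = {x ∈ g : [f,x] = 0}, is contained in the sum of the eigenspaces of ad(h) corresponding to nonpositive integer eigenvalues. -/
/-!
In any `sl₂`-representation `[e ^ (n + 1), f] = (n + 1) e ^ n (h + n)`. Hence, if `f x = 0` and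
`e ^ (n + 1) x = 0`, then `(h + n) x` is killed by `e ^ n`, and by `f` because `[h, f] = -2 f`.
By induction `e ^ n x = 0` implies `h (h + 1) ⋯ (h + n - 1) x = 0`, whose factors are
pairwise coprime in characteristic zero, so `x` is a sum of eigenvectors of `h` with eigenvalues
among `0, -1, …, -(n - 1)`. Such an `n` exists in finite dimension: the nonzero powers of `e` are
eigenvectors of `[h, ·]` with distinct eigenvalues, so `e` is nilpotent.
-/

section Sl2Relations

open Polynomial

attribute [local instance] LieRing.ofAssociativeRing

section AssociativeAlgebra

variable {A : Type*} [Ring A]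

theorem lie_mul (a b c : A) : ⁅a, b * c⁆ = ⁅a, b⁆ * c + b * ⁅a, c⁆ := by
  simp only [Ring.lie_def]
  noncomm_ring

theorem lie_pow_of_lie_eq_smul {R : Type*} [CommSemiring R] [Algebra R A] {h e : A} {c : R}
    (he : ⁅h, e⁆ = c • e) (n : ℕ) : ⁅h, e ^ n⁆ = (n * c) • e ^ n := by
  induction n with
  | zero => simp [Ring.lie_def]
  | succ n ih =>
    rw [pow_succ, lie_mul, ih, he, smul_mul_assoc, mul_smul_comm, ← add_smul]
    push_cast
    rw [add_one_mul]

theorem lie_pow_succ_of_sl2_relations {R : Type*} [CommRing R] [Algebra R A] {e h f : A}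
    (hhe : ⁅h, e⁆ = (2 : R) • e) (hef : ⁅e, f⁆ = h) (n : ℕ) :
    ⁅e ^ (n + 1), f⁆ = (n + 1 : R) • (e ^ n * (h + (n : R) • 1)) := by
  induction n with
  | zero => simp [hef]
  | succ n ih =>
    have h_mul_pow : h * e ^ (n + 1) = e ^ (n + 1) * h + (((n + 1 : ℕ) : R) * 2) • e ^ (n + 1) := by
      rw [← lie_pow_of_lie_eq_smul hhe, Ring.lie_def, add_sub_cancel]
    calc ⁅e ^ (n + 1 + 1), f⁆
        = e * ⁅e ^ (n + 1), f⁆ + ⁅e, f⁆ * e ^ (n + 1) := by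
          simp only [pow_succ' e (n + 1), Ring.lie_def]
          noncomm_ring
      _ = (n + 1 : R) • (e ^ (n + 1) * (h + (n : R) • 1)) + h * e ^ (n + 1) := by
          rw [ih, hef, mul_smul_comm, ← mul_assoc, ← pow_succ']
      _ = ((n + 1 : ℕ) + 1 : R) • (e ^ (n + 1) * (h + ((n + 1 : ℕ) : R) • 1)) := by
          rw [h_mul_pow]
          simp only [mul_add, mul_smul_comm, mul_one]
          push_cast
          module

theorem isNilpotent_of_lie_eq_smul_s14 {F : Type*} [Field F] [CharZero F] [Algebra F A]
    [FiniteDimensional F A] {h e : A} {c : F} (hc : c ≠ 0) (he : ⁅h, e⁆ = c • e) :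
    IsNilpotent e := by
  by_contra hnil
  have pow_ne_zero (n : ℕ) : e ^ n ≠ 0 := fun h0 ↦ hnil ⟨n, h0⟩
  have cast_mul_injective : Function.Injective fun n : ℕ ↦ (n * c : F) :=
    (mul_left_injective₀ hc).comp Nat.cast_injective
  have powers_linearIndependent : LinearIndependent F fun n : ℕ ↦ e ^ n :=
    (LieAlgebra.ad F A h).eigenvectors_linearIndependent' _ cast_mul_injective _ fun n ↦
      ⟨Module.End.mem_eigenspace_iff.mpr (lie_pow_of_lie_eq_smul he n), pow_ne_zero n⟩
  exact Infinite.not_finite powers_linearIndependent.finite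

end AssociativeAlgebra

theorem ker_aeval_prod_X_sub_C_eq_iSup_eigenspace {F V ι : Type*} [Field F] [AddCommGroup V]
    [Module F V] (T : Module.End F V) {μ : ι → F} {s : Finset ι} (hμ : Set.InjOn μ s) :
    LinearMap.ker (aeval T (∏ i ∈ s, (X - C (μ i)))) = ⨆ i ∈ s, T.eigenspace (μ i) := by
  classical
  induction s using Finset.induction with
  | empty => simp [Module.End.one_eq_id]
  | insert i s hi ih =>
    rw [Finset.coe_insert, Set.injOn_insert (mod_cast hi)] at hμ
    have root_ne (j : ι) (hj : j ∈ s) : μ i ≠ μ j := fun h ↦ hμ.2 ⟨j, hj, h.symm⟩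
    have coprime : IsCoprime (X - C (μ i)) (∏ j ∈ s, (X - C (μ j))) :=
      IsCoprime.prod_right fun j hj ↦
        isCoprime_X_sub_C_of_isUnit_sub (sub_ne_zero.mpr (root_ne j hj)).isUnit
    rw [Finset.prod_insert hi, ← sup_ker_aeval_eq_ker_aeval_mul_of_coprime T coprime, ih hμ.1,
      Finset.iSup_insert, Module.End.eigenspace_def]
    simp [Algebra.algebraMap_eq_smul_one]

theorem aeval_prod_X_sub_C_neg_apply_eq_zero_of_sl2_relations {R M : Type*} [CommRing R]
    [IsDomain R] [CharZero R] [AddCommGroup M] [Module R M] [Module.IsTorsionFree R M]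
    {e h f : Module.End R M}
    (hhe : ⁅h, e⁆ = (2 : R) • e) (hhf : ⁅h, f⁆ = (-2 : R) • f) (hef : ⁅e, f⁆ = h)
    {n : ℕ} {x : M} (hfx : f x = 0) (hex : (e ^ n) x = 0) :
    aeval h (∏ k ∈ Finset.range n, (X - C (-k : R))) x = 0 := by
  induction n generalizing x with
  | zero => simpa using hex
  | succ n ih =>
    have f_h_apply : f (h x) = 0 := by
      have := LinearMap.congr_fun hhf x
      simpa [Ring.lie_def, hfx] using this
    have e_pow_apply : (e ^ n) (h x + (n : R) • x) = 0 := by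
      have := LinearMap.congr_fun (lie_pow_succ_of_sl2_relations hhe hef n) x
      have smul_eq_zero_of_lie : (n + 1 : R) • (e ^ n) (h x + (n : R) • x) = 0 := by
        simpa [Ring.lie_def, hfx, hex] using this.symm
      exact (smul_eq_zero.mp smul_eq_zero_of_lie).resolve_left n.cast_add_one_ne_zero
    have factor_apply : aeval h (X - C (-n : R)) x = h x + (n : R) • x := by
      simp [Nat.cast_smul_eq_nsmul]
    rw [Finset.prod_range_succ, aeval_mul, Module.End.mul_apply, factor_apply]
    exact ih (by simp [f_h_apply, hfx]) e_pow_apply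

theorem ker_inf_ker_pow_le_iSup_eigenspace_of_sl2_relations {F V : Type*} [Field F] [CharZero F]
    [AddCommGroup V] [Module F V] {e h f : Module.End F V}
    (hhe : ⁅h, e⁆ = (2 : F) • e) (hhf : ⁅h, f⁆ = (-2 : F) • f) (hef : ⁅e, f⁆ = h) (n : ℕ) :
    LinearMap.ker f ⊓ LinearMap.ker (e ^ n) ≤
      ⨆ k ∈ Finset.range n, h.eigenspace (-k : F) := by
  have neg_cast_injective : Function.Injective fun k : ℕ ↦ (-k : F) :=
    neg_injective.comp Nat.cast_injective
  rw [← ker_aeval_prod_X_sub_C_eq_iSup_eigenspace h neg_cast_injective.injOn]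
  exact fun x ⟨hfx, hex⟩ ↦
    aeval_prod_X_sub_C_neg_apply_eq_zero_of_sl2_relations hhe hhf hef hfx hex

theorem centralizer_le_nonpositive_part_general (F : Type*) [Field F] [CharZero F]
    {L : Type*} [LieRing L] [LieAlgebra F L]
    (M : Type*) [AddCommGroup M] [Module F M] [LieRingModule L M] [LieModule F L M]
    [FiniteDimensional F M] {e h f : L}
    (hhe : ⁅h, e⁆ = (2 : F) • e) (hhf : ⁅h, f⁆ = (-2 : F) • f) (hef : ⁅e, f⁆ = h) :
    LinearMap.ker (LieModule.toEnd F L M f) ≤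
      ⨆ m : ℤ, ⨆ _ : m ≤ 0, (LieModule.toEnd F L M h).eigenspace (m : F) := by
  let ρ := LieModule.toEnd F L M
  have hhe' : ⁅ρ h, ρ e⁆ = (2 : F) • ρ e := by rw [← ρ.map_lie, hhe, map_smul]
  have hhf' : ⁅ρ h, ρ f⁆ = (-2 : F) • ρ f := by rw [← ρ.map_lie, hhf, map_smul]
  have hef' : ⁅ρ e, ρ f⁆ = ρ h := by rw [← ρ.map_lie, hef]
  obtain ⟨n, e_pow_eq_zero⟩ := isNilpotent_of_lie_eq_smul_s14 two_ne_zero hhe'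
  calc LinearMap.ker (ρ f)
      = LinearMap.ker (ρ f) ⊓ LinearMap.ker (ρ e ^ n) := by
        rw [e_pow_eq_zero, LinearMap.ker_zero, inf_top_eq]
    _ ≤ ⨆ k ∈ Finset.range n, (ρ h).eigenspace (-k : F) :=
        ker_inf_ker_pow_le_iSup_eigenspace_of_sl2_relations hhe' hhf' hef' n
    _ ≤ ⨆ m : ℤ, ⨆ _ : m ≤ 0, (ρ h).eigenspace (m : F) :=
        iSup₂_le fun k _ ↦ le_iSup₂_of_le (-k : ℤ) (by simp) (by simp)

end Sl2Relations

/-- for an `sl₂`-triple `(e,h,f)`, the centralizer `ker(ad f)` of `f` is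
contained in the sum of the eigenspaces of `ad h` with nonpositive integer eigenvalues. -/
theorem centralizer_le_nonpositive_part (F : Type*) [Field F] [CharZero F]
    (g : Type*) [LieRing g] [LieAlgebra F g] [FiniteDimensional F g]
    (e h f : g)
    (hhe : ⁅h, e⁆ = (2 : F) • e) (hhf : ⁅h, f⁆ = (-2 : F) • f) (hef : ⁅e, f⁆ = h) :
    LinearMap.ker (LieAlgebra.ad F g f) ≤
      ⨆ m : ℤ, ⨆ _ : m ≤ 0, Module.End.eigenspace (LieAlgebra.ad F g h) ((m : ℤ) : F) :=
  centralizer_le_nonpositive_part_general F g hhe hhf hef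
end

section
/- Let g be a finite-dimensional Lie algebra over a field of characteristic zero and let (e, h, f) be an sl₂-triple in g. Let g_{≥k} denote the sum of the eigenspaces of ad(h) with eigenvalues ≥ k and g_{>k} the sum of those with eigenvalues > k. Then (ad e)² maps g_{≥−2} onto g_{≥2}, and (ad e)² maps g_{>−2} onto g_{>2}. -/
/-!
Write `E`, `N` for the actions of `e`, `f` on a Lie module, and call the eigenvalues of `h` weights.
If `v` has weight `m + 2n` with `m + n ≥ 0` and `E ^ (k + 1) v = 0`, then
`E ^ (k + n) (N ^ n v) = c • E ^ k v` for a positive integer `c`. So `E ^ k` kills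
`c • v - E ^ n (N ^ n v)`, where `N ^ n v` has weight `m`; induction on `k` shows that `E ^ n` maps
the weight space of `m` onto that of `m + 2n`, provided each weight vector is killed by a power of
`E`. In finite dimension this is so, because `E` raises weights and only finitely many occur.
-/

open LieModule Module Finset

lemma isUnit_intCast_of_ne_zero (A : Type*) [Ring A] [Algebra ℚ A] {a : ℤ} (ha : a ≠ 0) :
    IsUnit (a : A) := by
  simpa using (IsUnit.mk0 (a : ℚ) (Int.cast_ne_zero.mpr ha)).map (algebraMap ℚ A)

section Sl2Relations

variable {R L M : Type*} [CommRing R] [LieRing L] [LieAlgebra R L]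
  [AddCommGroup M] [Module R M] [LieRingModule L M] [LieModule R L M] {e h f : L}

lemma toEnd_pow_apply_mem_eigenspace {x : L} {c μ : R} (hx : ⁅h, x⁆ = c • x) {v : M}
    (hv : v ∈ (toEnd R L M h).eigenspace μ) (k : ℕ) :
    (toEnd R L M x ^ k) v ∈ (toEnd R L M h).eigenspace (μ + k * c) := by
  induction k with
  | zero => simpa using hv
  | succ k ih =>
    rw [End.mem_eigenspace_iff, toEnd_apply_apply] at ih ⊢
    rw [pow_succ', End.mul_apply, toEnd_apply_apply, leibniz_lie h, hx, smul_lie, ih, lie_smul,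
      ← add_smul]
    congr 1
    push_cast
    ring

lemma map_toEnd_pow_eigenspace_le (hhe : ⁅h, e⁆ = (2 : R) • e) (m : ℤ) (n : ℕ) :
    ((toEnd R L M h).eigenspace (m : R)).map (toEnd R L M e ^ n) ≤
      (toEnd R L M h).eigenspace ((m + 2 * n : ℤ) : R) := by
  rintro _ ⟨v, hv, rfl⟩
  simpa [mul_comm] using toEnd_pow_apply_mem_eigenspace hhe hv n

lemma exists_toEnd_pow_apply_eq_zero [IsDomain R] [CharZero R] [Module.Finite R M]
    [IsTorsionFree R M] {x : L} {c μ : R} (hc : c ≠ 0) (hx : ⁅h, x⁆ = c • x) {v : M}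
    (hv : v ∈ (toEnd R L M h).eigenspace μ) : ∃ k : ℕ, (toEnd R L M x ^ k) v = 0 := by
  by_contra! hne
  have hinj : Function.Injective fun k : ℕ ↦ μ + k * c := fun a b hab ↦ by simpa [hc] using hab
  refine Set.infinite_range_of_injective hinj ((toEnd R L M h).finite_hasEigenvalue.subset ?_)
  rintro _ ⟨k, rfl⟩
  exact End.hasEigenvalue_of_hasEigenvector ⟨toEnd_pow_apply_mem_eigenspace hx hv k, hne k⟩

lemma toEnd_pow_succ_apply_lie (hhe : ⁅h, e⁆ = (2 : R) • e) (hef : ⁅e, f⁆ = h) {μ : R} {v : M}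
    (hv : v ∈ (toEnd R L M h).eigenspace μ) (k : ℕ) :
    (toEnd R L M e ^ (k + 1)) ⁅f, v⁆ =
      ⁅f, (toEnd R L M e ^ (k + 1)) v⁆ + ((k + 1) * (μ + k)) • (toEnd R L M e ^ k) v := by
  induction k with
  | zero =>
    have hhv : ⁅h, v⁆ = μ • v := End.mem_eigenspace_iff.mp hv
    simp [leibniz_lie e, hef, hhv, add_comm]
  | succ k ih =>
    have hhw : ⁅h, (toEnd R L M e ^ (k + 1)) v⁆ =
        (μ + (k + 1 : ℕ) * 2) • (toEnd R L M e ^ (k + 1)) v :=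
      End.mem_eigenspace_iff.mp (toEnd_pow_apply_mem_eigenspace hhe hv (k + 1))
    have hpow (j : ℕ) (w : M) : (toEnd R L M e ^ (j + 1)) w = ⁅e, (toEnd R L M e ^ j) w⁆ := by
      rw [pow_succ', End.mul_apply, toEnd_apply_apply]
    rw [hpow (k + 1), ih, lie_add, lie_smul, leibniz_lie e, hef, hhw, ← hpow (k + 1), ← hpow k,
      add_comm (_ • _), add_assoc, ← add_smul]
    congr 2
    push_cast
    ring

lemma toEnd_pow_add_apply_toEnd_pow (hhe : ⁅h, e⁆ = (2 : R) • e) (hhf : ⁅h, f⁆ = (-2 : R) • f)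
    (hef : ⁅e, f⁆ = h) {μ : R} {v : M} (hv : v ∈ (toEnd R L M h).eigenspace μ) {k : ℕ}
    (hk : (toEnd R L M e ^ (k + 1)) v = 0) (n : ℕ) :
    (toEnd R L M e ^ (k + n)) ((toEnd R L M f ^ n) v) =
      (∏ i ∈ range n, (k + i + 1) * (μ + k - i)) • (toEnd R L M e ^ k) v := by
  induction n with
  | zero => simp
  | succ n ih =>
    have hw := toEnd_pow_apply_mem_eigenspace hhf hv n
    have hvanish : (toEnd R L M e ^ (k + n + 1)) ((toEnd R L M f ^ n) v) = 0 := by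
      rw [pow_succ', End.mul_apply, ih, map_smul, ← End.mul_apply, ← pow_succ', hk, smul_zero]
    rw [pow_succ' (toEnd R L M f), End.mul_apply, toEnd_apply_apply, ← add_assoc,
      toEnd_pow_succ_apply_lie hhe hef hw, hvanish, lie_zero, zero_add, ih, smul_smul,
      prod_range_succ, mul_comm]
    congr 2
    push_cast
    ring

variable [Algebra ℚ R]

lemma mem_map_toEnd_pow_eigenspace (hhe : ⁅h, e⁆ = (2 : R) • e) (hhf : ⁅h, f⁆ = (-2 : R) • f)
    (hef : ⁅e, f⁆ = h) {m : ℤ} {n : ℕ} (hmn : 0 ≤ m + n) {v : M}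
    (hv : v ∈ (toEnd R L M h).eigenspace ((m + 2 * n : ℤ) : R)) {k : ℕ}
    (hk : (toEnd R L M e ^ k) v = 0) :
    v ∈ ((toEnd R L M h).eigenspace (m : R)).map (toEnd R L M e ^ n) := by
  induction k generalizing v with
  | zero =>
    obtain rfl : v = 0 := by simpa using hk
    exact zero_mem _
  | succ k ih =>
    set c : ℤ := ∏ i ∈ range n, (k + i + 1) * (m + 2 * n + k - i) with hc
    have hc_pos : 0 < c := prod_pos fun i hi ↦ by
      have : i < n := mem_range.mp hi
      exact mul_pos (by lia) (by lia)
    have hfv : (toEnd R L M f ^ n) v ∈ (toEnd R L M h).eigenspace (m : R) := by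
      convert toEnd_pow_apply_mem_eigenspace hhf hv n using 2
      push_cast
      ring
    have hefv : (toEnd R L M e ^ n) ((toEnd R L M f ^ n) v) ∈
        (toEnd R L M h).eigenspace ((m + 2 * n : ℤ) : R) :=
      map_toEnd_pow_eigenspace_le hhe m n (Submodule.mem_map_of_mem hfv)
    have hkill : (toEnd R L M e ^ k)
        ((c : R) • v - (toEnd R L M e ^ n) ((toEnd R L M f ^ n) v)) = 0 := by
      rw [map_sub, map_smul, ← End.mul_apply, ← pow_add,
        toEnd_pow_add_apply_toEnd_pow hhe hhf hef hv hk, hc]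
      push_cast
      exact sub_self _
    have hsub := ih (sub_mem (Submodule.smul_mem _ _ hv) hefv) hkill
    rw [← Submodule.smul_mem_iff_of_isUnit _ (isUnit_intCast_of_ne_zero R hc_pos.ne'),
      ← sub_add_cancel ((c : R) • v)]
    exact add_mem hsub (Submodule.mem_map_of_mem hfv)

lemma map_toEnd_pow_eigenspace (hhe : ⁅h, e⁆ = (2 : R) • e) (hhf : ⁅h, f⁆ = (-2 : R) • f)
    (hef : ⁅e, f⁆ = h) {m : ℤ} {n : ℕ} (hmn : 0 ≤ m + n)
    (hnil : ∀ v ∈ (toEnd R L M h).eigenspace ((m + 2 * n : ℤ) : R),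
      ∃ k : ℕ, (toEnd R L M e ^ k) v = 0) :
    ((toEnd R L M h).eigenspace (m : R)).map (toEnd R L M e ^ n) =
      (toEnd R L M h).eigenspace ((m + 2 * n : ℤ) : R) := by
  refine le_antisymm (map_toEnd_pow_eigenspace_le hhe m n) fun v hv ↦ ?_
  obtain ⟨k, hk⟩ := hnil v hv
  exact mem_map_toEnd_pow_eigenspace hhe hhf hef hmn hv hk

theorem ad_sq_surjective_on_filtration_general
    (hhe : ⁅h, e⁆ = (2 : R) • e) (hhf : ⁅h, f⁆ = (-2 : R) • f) (hef : ⁅e, f⁆ = h)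
    (hnil : ∀ m : ℤ, ∀ v ∈ (toEnd R L M h).eigenspace (m : R),
      ∃ k : ℕ, (toEnd R L M e ^ k) v = 0)
    {l : ℤ} {n : ℕ} (hln : 0 ≤ l + n) :
    (⨆ m : ℤ, ⨆ _ : l ≤ m, (toEnd R L M h).eigenspace (m : R)).map (toEnd R L M e ^ n) =
      ⨆ m : ℤ, ⨆ _ : l + 2 * n ≤ m, (toEnd R L M h).eigenspace (m : R) := by
  simp only [Submodule.map_iSup]
  exact (Equiv.addRight (2 * n : ℤ)).iSup_congr fun m ↦
    iSup_congr_Prop (add_le_add_iff_right _) fun hm ↦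
      (map_toEnd_pow_eigenspace hhe hhf hef (by lia) (hnil _)).symm

end Sl2Relations

/-- for an `sl₂`-triple `(e,h,f)`, `(ad e)²` maps `g_{≥ -2}` onto `g_{≥ 2}`
and `g_{> -2}` onto `g_{> 2}`, where `g_{≥ k}` (resp. `g_{> k}`) is the sum of the
eigenspaces of `ad h` with integer eigenvalues `≥ k` (resp. `> k`). -/
theorem ad_sq_surjective_on_filtration (F : Type*) [Field F] [CharZero F]
    (g : Type*) [LieRing g] [LieAlgebra F g] [FiniteDimensional F g]
    (e h f : g)
    (hhe : ⁅h, e⁆ = (2 : F) • e) (hhf : ⁅h, f⁆ = (-2 : F) • f) (hef : ⁅e, f⁆ = h) :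
    Submodule.map (LieAlgebra.ad F g e ^ 2)
        (⨆ m : ℤ, ⨆ _ : (-2 : ℤ) ≤ m, Module.End.eigenspace (LieAlgebra.ad F g h) ((m : ℤ) : F))
      = (⨆ m : ℤ, ⨆ _ : (2 : ℤ) ≤ m, Module.End.eigenspace (LieAlgebra.ad F g h) ((m : ℤ) : F)) ∧
    Submodule.map (LieAlgebra.ad F g e ^ 2)
        (⨆ m : ℤ, ⨆ _ : (-2 : ℤ) < m, Module.End.eigenspace (LieAlgebra.ad F g h) ((m : ℤ) : F))
      = (⨆ m : ℤ, ⨆ _ : (2 : ℤ) < m, Module.End.eigenspace (LieAlgebra.ad F g h) ((m : ℤ) : F)) := by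
  have h_map {l : ℤ} (hl : 0 ≤ l + (2 : ℕ)) :=
    ad_sq_surjective_on_filtration_general (M := g) hhe hhf hef
      (fun _ _ ↦ exists_toEnd_pow_apply_eq_zero two_ne_zero hhe) hl
  have h_ge := h_map (l := -2) (by norm_num)
  have h_gt := h_map (l := -1) (by norm_num)
  simp only [← Int.add_one_le_iff]
  exact ⟨h_ge, h_gt⟩
end
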